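/- arXiv:2412.04066 — 8 statements merged into one kernel-verified Lean document; each statement's English description precedes it below -/
import Mathlib

section
/- Let d ≥ 1 and let F_1, F_2, … be an infinite sequence of families of nonempty compact convex subsets of ℝ^d. Suppose that every infinite heterochromatic sequence of convex sets of (F_i)_{i∈ℕ} contains d+1 sets having a common point. Then there exists an index i and a finite set P of points of ℝ^d such that every member of F_i contains at least one point of P. -/
/-!
Suppose that no `F i` can be pierced by finitely many points. Choose an ultrafilter `U` on the pairs
`(i, A)` with `A ∈ F i` along which `i` tends to infinity and every fixed point is almost always
missed. In a finite-dimensional strictly convex space a nonempty closed convex set has a unique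
point of least norm, and Helly's theorem shows that whenever `finrank ℝ E + 1` closed convex sets
have a common point, one of them, say the `j`-th, contains the least norm point of the intersection
of the others. If this happened for almost all tuples with respect to the iterated power of `U`,
then the same `j` would work almost always; freezing the entries before the `j`-th and passing to
the limit over those after it would yield one point lying in `U`-almost every set, which `U`
excludes. So almost all `finrank ℝ E + 1`-tuples have empty intersection, and choosing the sets one
at a time, each generic over the earlier ones, gives a heterochromatic sequence contradicting the
hypothesis.
-/

open Filter Module Topology

section UltrafilterPower

variable {α : Type*}

theorem exists_lt_eventually_of_eventually_exists_lt {U : Ultrafilter α} {n : ℕ}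
    {p : ℕ → α → Prop} (h : ∀ᶠ a in U, ∃ j < n, p j a) : ∃ j < n, ∀ᶠ a in U, p j a := by
  refine (U.finite_biUnion_mem_iff (Set.finite_lt_nat n)).1 (mem_of_superset h ?_)
  rintro a ⟨j, hj, ha⟩
  exact Set.mem_biUnion hj ha

/-- The iterated (Fubini) power of an ultrafilter: a property holds for `tensorPow U n`-almost all
lists if it holds for `[a₁, …, aₙ]` for `U`-almost all `a₁`, for `U`-almost all `a₂`, and so on.
Lists serve as tuples so that powers of different exponents can be concatenated. -/
noncomputable def tensorPow (U : Ultrafilter α) : ℕ → Ultrafilter (List α)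
  | 0 => pure []
  | n + 1 => U.bind fun a => (tensorPow U n).map (a :: ·)

theorem eventually_tensorPow_zero {U : Ultrafilter α} {P : List α → Prop} :
    (∀ᶠ l in tensorPow U 0, P l) ↔ P [] :=
  Iff.rfl

theorem eventually_tensorPow_succ {U : Ultrafilter α} {n : ℕ} {P : List α → Prop} :
    (∀ᶠ l in tensorPow U (n + 1), P l) ↔ ∀ᶠ a in U, ∀ᶠ l in tensorPow U n, P (a :: l) :=
  Iff.rfl

theorem eventually_tensorPow_add {U : Ultrafilter α} {m n : ℕ} {P : List α → Prop} :
    (∀ᶠ l in tensorPow U (m + n), P l) ↔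
      ∀ᶠ l in tensorPow U m, ∀ᶠ l' in tensorPow U n, P (l ++ l') := by
  induction m generalizing P with
  | zero => simp only [Nat.zero_add, eventually_tensorPow_zero, List.nil_append]
  | succ m ih => simp only [Nat.succ_add, eventually_tensorPow_succ, ih, List.cons_append]

theorem eventually_tensorPow_length_eq (U : Ultrafilter α) (n : ℕ) :
    ∀ᶠ l : List α in tensorPow U n, l.length = n := by
  induction n with
  | zero => exact eventually_tensorPow_zero.2 rfl
  | succ n ih =>
    exact eventually_tensorPow_succ.2 <| .of_forall fun a => ih.mono fun l hl => by simp [hl]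

theorem exists_eventually_mem_of_eventually_eraseIdx {X : Type*} [TopologicalSpace X] [T2Space X]
    {U : Ultrafilter α} {f : α → Set X} (hf : ∀ a, IsCompact (f a)) (g : List α → X) {n j : ℕ}
    (hj : j < n) (hg : ∀ᶠ l : List α in tensorPow U n, g (l.eraseIdx j) ∈ ⋂ a ∈ l, f a) :
    ∃ q, ∀ᶠ a in U, q ∈ f a := by
  obtain ⟨m, rfl⟩ := Nat.exists_eq_add_of_lt hj
  rw [Nat.add_assoc, eventually_tensorPow_add] at hg
  obtain ⟨l₁, hl₁, hlen⟩ := (hg.and (eventually_tensorPow_length_eq U j)).exists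
  have hmem : ∀ᶠ a in U, ∀ᶠ l₂ in tensorPow U m, g (l₁ ++ l₂) ∈ f a := by
    filter_upwards [eventually_tensorPow_succ.1 hl₁] with a ha
    filter_upwards [ha] with l₂ hl₂
    rw [List.eraseIdx_append_of_length_le hlen.le, hlen, Nat.sub_self, List.eraseIdx_cons_zero]
      at hl₂
    exact Set.mem_iInter₂.1 hl₂ a (by simp)
  obtain ⟨a₀, ha₀⟩ := hmem.exists
  obtain ⟨q, -, hq⟩ := (hf a₀).ultrafilter_le_nhds ((tensorPow U m).map fun l => g (l₁ ++ l))
    (le_principal_iff.2 ha₀)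
  have hlim : Tendsto (fun l => g (l₁ ++ l)) (tensorPow U m) (𝓝 q) := hq
  exact ⟨q, hmem.mono fun a ha => (hf a).isClosed.mem_of_tendsto hlim ha⟩

end UltrafilterPower

section GenericSequence

variable {α : Type*}

/-- The list `s` can be completed to a list of length `n` satisfying `P` by appending `U`-almost
arbitrary entries. The condition is empty if `s` is longer than `n`. -/
def IsGenericPrefix (U : Ultrafilter α) (P : List α → Prop) (n : ℕ) (s : List α) : Prop :=
  ∀ m, s.length + m = n → ∀ᶠ l in tensorPow U m, P (s ++ l)

variable {U : Ultrafilter α} {P : List α → Prop} {n : ℕ}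

theorem IsGenericPrefix.eventually_append_singleton {s : List α} (hs : IsGenericPrefix U P n s) :
    ∀ᶠ a in U, IsGenericPrefix U P n (s ++ [a]) := by
  by_cases hlen : s.length < n
  · obtain ⟨m, rfl⟩ := Nat.exists_eq_add_of_lt hlen
    filter_upwards [eventually_tensorPow_succ.1 (hs (m + 1) rfl)] with a ha k hk
    obtain rfl : k = m := by rw [List.length_append, List.length_singleton] at hk; omega
    simpa using ha
  · refine .of_forall fun a k hk => ?_
    rw [List.length_append, List.length_singleton] at hk
    omega

theorem eventually_forall_sublist_append_singleton {L : List α}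
    (hL : ∀ s, s.Sublist L → IsGenericPrefix U P n s) :
    ∀ᶠ a in U, ∀ s, s.Sublist (L ++ [a]) → IsGenericPrefix U P n s := by
  have hext : ∀ᶠ a in U, ∀ s ∈ {s | s ∈ L.sublists}, IsGenericPrefix U P n (s ++ [a]) :=
    (eventually_all_finite L.sublists.finite_toSet).2 fun s hs =>
      (hL s (List.mem_sublists.1 hs)).eventually_append_singleton
  filter_upwards [hext] with a ha s hs
  obtain ⟨s₁, s₂, rfl, hs₁, hs₂⟩ := List.sublist_append_iff.1 hs
  rcases List.sublist_singleton.1 hs₂ with rfl | rfl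
  · simpa using hL s₁ hs₁
  · exact ha s₁ (List.mem_sublists.2 hs₁)

theorem exists_seq_forall_map_range {Q : List α → Prop} (hnil : Q [])
    (happend : ∀ L, Q L → ∃ a, Q (L ++ [a])) :
    ∃ c : ℕ → α, ∀ n, Q ((List.range n).map c) := by
  have : Nonempty α := (happend [] hnil).nonempty
  choose! next hnext using happend
  let L : ℕ → List α := fun n => Nat.rec [] (fun _ l => l ++ [next l]) n
  have hL : ∀ n, (List.range n).map (fun k => next (L k)) = L n := by
    intro n
    induction n with
    | zero => rfl
    | succ n ih => rw [List.range_succ, List.map_append, ih]; rfl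
  refine ⟨fun k => next (L k), fun n => ?_⟩
  rw [hL]
  induction n with
  | zero => exact hnil
  | succ n ih => exact hnext _ ih

theorem sort_sublist_range {s : Finset ℕ} {N : ℕ} (hs : s ⊆ Finset.range N) :
    s.sort.Sublist (List.range N) := by
  refine List.sublist_of_subperm_of_sortedLE ?_ s.sortedLT_sort.sortedLE
    (List.sortedLT_range N).sortedLE
  exact (Finset.sort_nodup s _).subperm fun j hj => by simpa using hs ((Finset.mem_sort _).1 hj)

theorem exists_seq_of_eventually_tensorPow (hP : ∀ᶠ l in tensorPow U n, P l)
    {R : α → α → Prop} (hR : ∀ a, ∀ᶠ b in U, R a b) :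
    ∃ c : ℕ → α, (∀ ⦃i j⦄, i < j → R (c i) (c j)) ∧
      ∀ s : Finset ℕ, s.card = n → P (s.sort.map c) := by
  let Q : List α → Prop := fun L =>
    L.Pairwise R ∧ ∀ s, s.Sublist L → IsGenericPrefix U P n s
  obtain ⟨c, hc⟩ : ∃ c : ℕ → α, ∀ N, Q ((List.range N).map c) := by
    refine exists_seq_forall_map_range ⟨.nil, fun s hs m hm => ?_⟩ ?_
    · obtain rfl := List.sublist_nil.1 hs
      obtain rfl : m = n := by simpa using hm
      exact hP
    · rintro L ⟨hpair, hgen⟩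
      have hlast : ∀ᶠ a in U, ∀ b ∈ {b | b ∈ L}, R b a :=
        (eventually_all_finite L.finite_toSet).2 fun b _ => hR b
      obtain ⟨a, hgen', ha⟩ :=
        ((eventually_forall_sublist_append_singleton hgen).and hlast).exists
      exact ⟨a, by simpa [List.pairwise_append, hpair] using ha, hgen'⟩
  refine ⟨c, fun i j hij => ?_, fun s hs => ?_⟩
  · have hpair := List.pairwise_map.1 (hc (j + 1)).1
    rw [List.range_succ, List.pairwise_append] at hpair
    exact hpair.2.2 i (List.mem_range.2 hij) j (List.mem_singleton_self j)
  · obtain ⟨N, hN⟩ := s.exists_nat_subset_range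
    have hgen := (hc N).2 _ ((sort_sublist_range hN).map c)
    simpa [eventually_tensorPow_zero] using hgen 0 (by simp [hs])

end GenericSequence

theorem nonempty_inter_iInter_of_finrank_lt_card {𝕜 E ι : Type*} [Field 𝕜] [LinearOrder 𝕜]
    [IsStrictOrderedRing 𝕜] [AddCommGroup E] [Module 𝕜 E] [FiniteDimensional 𝕜 E] [Fintype ι]
    {C : Set E} {F : ι → Set E} (hC : Convex 𝕜 C) (hF : ∀ i, Convex 𝕜 (F i))
    (hcard : finrank 𝕜 E < Fintype.card ι) (hne : (⋂ i, F i).Nonempty)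
    (hCne : ∀ j, (C ∩ ⋂ (i) (_ : i ≠ j), F i).Nonempty) :
    (C ∩ ⋂ i, F i).Nonempty := by
  let G : Option ι → Set E := fun o => o.elim C F
  suffices h : (⋂ o ∈ (Finset.univ : Finset (Option ι)), G o).Nonempty by
    simpa [Set.iInter_option, G] using h
  refine Convex.helly_theorem' (𝕜 := 𝕜) ?_ fun I _ hI => ?_
  · rintro (_ | i) -
    exacts [hC, hF i]
  have hlt : I.card < Fintype.card (Option ι) := by rw [Fintype.card_option]; omega
  obtain ⟨o, ho⟩ : ∃ o, o ∉ I := by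
    by_contra! hall
    exact hlt.ne (Finset.card_eq_of_equiv_fintype (Equiv.subtypeUnivEquiv hall))
  cases o with
  | none =>
    obtain ⟨x, hx⟩ := hne
    refine ⟨x, Set.mem_iInter₂.2 ?_⟩
    rintro (_ | i) hi
    exacts [absurd hi ho, Set.mem_iInter.1 hx i]
  | some j =>
    obtain ⟨x, hxC, hx⟩ := hCne j
    refine ⟨x, Set.mem_iInter₂.2 ?_⟩
    rintro (_ | i) hi
    exacts [hxC, Set.mem_iInter₂.1 hx i fun hij => ho (hij ▸ hi)]

section MinNormPoint

theorem exists_isMinOn_norm {E : Type*} [SeminormedAddCommGroup E] [ProperSpace E] {K : Set E}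
    (hK : IsClosed K) (hne : K.Nonempty) : ∃ x ∈ K, IsMinOn norm K x := by
  obtain ⟨x, hx, hdist⟩ := hK.exists_infDist_eq_dist hne 0
  refine ⟨x, hx, fun y hy => ?_⟩
  simpa [hdist] using Metric.infDist_le_dist_of_mem (x := 0) hy

theorem eq_of_isMinOn_norm {E : Type*} [NormedAddCommGroup E] [NormedSpace ℝ E]
    [StrictConvexSpace ℝ E] {K : Set E} {x y : E} (hK : Convex ℝ K) (hx : x ∈ K) (hy : y ∈ K)
    (hxmin : IsMinOn norm K x) (hymin : IsMinOn norm K y) : x = y := by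
  by_contra hne
  have hmid : (1 / 2 : ℝ) • (x + y) ∈ K := by
    rw [smul_add]
    exact hK hx hy (by norm_num) (by norm_num) (by norm_num)
  exact ((norm_midpoint_lt_iff ((hxmin hy).antisymm (hymin hx))).2 hne).not_ge (hxmin hmid)

/-- A point of least norm of `K`, used as a canonical point of an intersection of closed convex
sets. It is arbitrary if `K` has no such point. -/
noncomputable def minNormPoint {E : Type*} [SeminormedAddCommGroup E] (K : Set E) : E :=
  Classical.epsilon fun x => x ∈ K ∧ IsMinOn norm K x

theorem minNormPoint_spec {E : Type*} [SeminormedAddCommGroup E] [ProperSpace E] {K : Set E}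
    (hK : IsClosed K) (hne : K.Nonempty) :
    minNormPoint K ∈ K ∧ IsMinOn norm K (minNormPoint K) :=
  Classical.epsilon_spec (exists_isMinOn_norm hK hne)

variable {α E : Type*} [NormedAddCommGroup E] [NormedSpace ℝ E] [StrictConvexSpace ℝ E]
  [FiniteDimensional ℝ E]

theorem exists_minNormPoint_iInter_ne_mem {ι : Type*} [Fintype ι] {F : ι → Set E}
    (hconv : ∀ i, Convex ℝ (F i)) (hclosed : ∀ i, IsClosed (F i))
    (hcard : finrank ℝ E < Fintype.card ι) (hne : (⋂ i, F i).Nonempty) :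
    ∃ j, minNormPoint (⋂ (i) (_ : i ≠ j), F i) ∈ ⋂ i, F i := by
  by_contra! hnot
  obtain ⟨x, hx, hxmin⟩ := exists_isMinOn_norm (isClosed_iInter hclosed) hne
  have hcloser : ∀ j, (Metric.ball 0 ‖x‖ ∩ ⋂ (i) (_ : i ≠ j), F i).Nonempty := by
    intro j
    have hxj : x ∈ ⋂ (i) (_ : i ≠ j), F i :=
      Set.iInter_mono (fun i => Set.subset_iInter fun _ => subset_rfl) hx
    obtain ⟨hmem, hmin⟩ :=
      minNormPoint_spec (isClosed_iInter fun i => isClosed_iInter fun _ => hclosed i) ⟨x, hxj⟩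
    refine ⟨_, mem_ball_zero_iff.2 (lt_of_not_ge fun hle => hnot j ?_), hmem⟩
    have hxminj : IsMinOn norm (⋂ (i) (_ : i ≠ j), F i) x := fun y hy => hle.trans (hmin hy)
    rwa [eq_of_isMinOn_norm (convex_iInter₂ fun i _ => hconv i) hmem hxj hmin hxminj]
  obtain ⟨y, hyball, hy⟩ := nonempty_inter_iInter_of_finrank_lt_card (convex_ball 0 ‖x‖) hconv
    hcard hne hcloser
  exact (mem_ball_zero_iff.1 hyball).not_ge (hxmin hy)

theorem exists_minNormPoint_biInter_eraseIdx_mem {f : α → Set E} {l : List α}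
    (hconv : ∀ a, Convex ℝ (f a)) (hclosed : ∀ a, IsClosed (f a)) (hlen : finrank ℝ E < l.length)
    (hne : (⋂ a ∈ l, f a).Nonempty) :
    ∃ j < l.length, minNormPoint (⋂ a ∈ l.eraseIdx j, f a) ∈ ⋂ a ∈ l, f a := by
  have hall : ⋂ a ∈ l, f a = ⋂ i : Fin l.length, f l[i] := by
    ext x
    simp [List.forall_mem_iff_forall_getElem, Fin.forall_iff]
  have herase (j : Fin l.length) :
      ⋂ a ∈ l.eraseIdx j, f a = ⋂ (i : Fin l.length) (_ : i ≠ j), f l[i] := by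
    ext x
    simp only [List.mem_eraseIdx_iff_getElem, Set.mem_iInter]
    exact ⟨fun h i hij => h _ ⟨i, i.2, Fin.val_ne_of_ne hij, rfl⟩, by
      rintro h _ ⟨i, hi, hij, rfl⟩
      exact h ⟨i, hi⟩ (Fin.ne_of_val_ne hij)⟩
  rw [hall] at hne ⊢
  obtain ⟨j, hj⟩ := exists_minNormPoint_iInter_ne_mem (fun i => hconv _) (fun i => hclosed _)
    (by simpa using hlen) hne
  exact ⟨j, j.2, by rwa [herase]⟩

theorem eventually_tensorPow_biInter_eq_empty {U : Ultrafilter α} {f : α → Set E}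
    (hconv : ∀ a, Convex ℝ (f a)) (hcpt : ∀ a, IsCompact (f a))
    (hU : ∀ p, ∀ᶠ a in U, p ∉ f a) :
    ∀ᶠ l : List α in tensorPow U (finrank ℝ E + 1), ⋂ a ∈ l, f a = ∅ := by
  simp only [← Set.not_nonempty_iff_eq_empty]
  refine Ultrafilter.eventually_not.2 fun hne => ?_
  have hhelly : ∀ᶠ l : List α in tensorPow U (finrank ℝ E + 1), ∃ j < finrank ℝ E + 1,
      minNormPoint (⋂ a ∈ l.eraseIdx j, f a) ∈ ⋂ a ∈ l, f a := by
    filter_upwards [hne, eventually_tensorPow_length_eq U _] with l hl hlen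
    rw [← hlen]
    exact exists_minNormPoint_biInter_eraseIdx_mem hconv (fun a => (hcpt a).isClosed)
      (by omega) hl
  obtain ⟨j, hj, hmem⟩ := exists_lt_eventually_of_eventually_exists_lt hhelly
  obtain ⟨q, hq⟩ := exists_eventually_mem_of_eventually_eraseIdx hcpt
    (fun l => minNormPoint (⋂ a ∈ l, f a)) hj hmem
  obtain ⟨a, hqa, hqa'⟩ := (hq.and (hU q)).exists
  exact hqa' hqa

end MinNormPoint

theorem exists_ultrafilter_of_forall_not_pierced {ι X : Type*} [Preorder ι]
    [IsDirectedOrder ι] [Nonempty ι] {F : ι → Set (Set X)}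
    (hF : ∀ i, ∀ P : Finset X, ∃ A ∈ F i, ∀ p ∈ P, p ∉ A) :
    ∃ U : Ultrafilter (Σ i, F i),
      (∀ p, ∀ᶠ a : Σ i, F i in U, p ∉ (a.2 : Set X)) ∧
        Tendsto Sigma.fst (U : Filter (Σ i, F i)) atTop := by
  classical
  choose A hA hmiss using hF
  let g : ι × Finset X → Σ i, F i := fun x => ⟨x.1, A x.1 x.2, hA x.1 x.2⟩
  refine ⟨.of (map g (atTop ×ˢ atTop)), fun p => Ultrafilter.of_le _ ?_, ?_⟩
  · change ∀ᶠ x : ι × Finset X in atTop ×ˢ atTop, p ∉ A x.1 x.2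
    filter_upwards [tendsto_snd.eventually (eventually_ge_atTop {p})] with x hx
    exact hmiss x.1 x.2 p (hx (Finset.mem_singleton_self p))
  · exact Tendsto.mono_left (tendsto_map'_iff.2 tendsto_fst) (Ultrafilter.of_le _)

theorem stmt_12_general {E : Type*} [NormedAddCommGroup E] [NormedSpace ℝ E]
    [StrictConvexSpace ℝ E] [FiniteDimensional ℝ E] (F : ℕ → Set (Set E))
    (hcpt : ∀ i, ∀ A ∈ F i, IsCompact A) (hcvx : ∀ i, ∀ A ∈ F i, Convex ℝ A)
    (hyp : ∀ C : ℕ → Set E, (∃ idx : ℕ → ℕ, StrictMono idx ∧ ∀ j, C j ∈ F (idx j)) →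
      ∃ s : Finset ℕ, s.card = finrank ℝ E + 1 ∧ ∃ x : E, ∀ j ∈ s, x ∈ C j) :
    ∃ (i : ℕ) (P : Finset E), ∀ A ∈ F i, ∃ p ∈ P, p ∈ A := by
  by_contra! hpierce
  obtain ⟨U, hmiss, hindex⟩ := exists_ultrafilter_of_forall_not_pierced hpierce
  have hempty : ∀ᶠ l : List (Σ i, F i) in tensorPow U (finrank ℝ E + 1),
      ⋂ a ∈ l, (a.2 : Set E) = ∅ :=
    eventually_tensorPow_biInter_eq_empty (fun a => hcvx _ _ a.2.2) (fun a => hcpt _ _ a.2.2)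
      hmiss
  obtain ⟨c, hmono, hc⟩ :=
    exists_seq_of_eventually_tensorPow hempty fun a => hindex.eventually_gt_atTop a.1
  obtain ⟨s, hcard, x, hx⟩ := hyp (fun k => (c k).2)
    ⟨fun k => (c k).1, fun i j hij => hmono hij, fun k => (c k).2.2⟩
  have hxmem : x ∈ ⋂ a ∈ s.sort.map c, (a.2 : Set E) := by simpa using hx
  rwa [hc s hcard] at hxmem

/-- **heterochromatic `(ℵ₀, d+1)`-theorem for convex sets.**
Let `F 0, F 1, …` be families of nonempty compact convex subsets of `ℝ^d`. If every
infinite heterochromatic sequence (a sequence `C 0, C 1, …` with `C j ∈ F (i_j)` for some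
indices `i_0 < i_1 < …`) contains `d+1` sets with a common point, then some family `F i`
can be pierced by finitely many points. -/
theorem stmt_12 (d : ℕ) (hd : 1 ≤ d)
    (F : ℕ → Set (Set (EuclideanSpace ℝ (Fin d))))
    (hne : ∀ i, ∀ A ∈ F i, A.Nonempty)
    (hcpt : ∀ i, ∀ A ∈ F i, IsCompact A)
    (hcvx : ∀ i, ∀ A ∈ F i, Convex ℝ A)
    (hyp : ∀ C : ℕ → Set (EuclideanSpace ℝ (Fin d)),
      (∃ idx : ℕ → ℕ, StrictMono idx ∧ ∀ j, C j ∈ F (idx j)) →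
      ∃ s : Finset ℕ, s.card = d + 1 ∧
        ∃ x : EuclideanSpace ℝ (Fin d), ∀ j ∈ s, x ∈ C j) :
    ∃ (i : ℕ) (P : Finset (EuclideanSpace ℝ (Fin d))),
      ∀ A ∈ F i, ∃ p ∈ P, p ∈ A :=
  stmt_12_general F hcpt hcvx (by simpa only [finrank_euclideanSpace_fin] using hyp)
end

section
/- Let d ≥ 1, let 0 ≤ k < d, and let F_1, F_2, … be an infinite sequence of families of closed balls in ℝ^d (closed Euclidean balls of arbitrary nonnegative radius). Suppose that every infinite heterochromatic sequence of balls of (F_i)_{i∈ℕ} contains k+2 balls that are all intersected by a single k-flat. Then there exists an index i and a finite set of k-flats in ℝ^d such that every ball of F_i intersects at least one of these k-flats. -/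
/-- A `k`-flat in `ℝ^d`: a translate of a `k`-dimensional linear subspace, i.e. a
`k`-dimensional affine subspace. -/
def IsKFlat {d : ℕ} (k : ℕ) (W : Set (EuclideanSpace ℝ (Fin d))) : Prop :=
  ∃ (p : EuclideanSpace ℝ (Fin d)) (U : Submodule ℝ (EuclideanSpace ℝ (Fin d))),
    Module.finrank ℝ U = k ∧ W = (fun u => p + u) '' (U : Set (EuclideanSpace ℝ (Fin d)))

/-- A closed Euclidean ball in `ℝ^d` of arbitrary nonnegative radius. -/
def IsClosedBall {d : ℕ} (A : Set (EuclideanSpace ℝ (Fin d))) : Prop :=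
  ∃ (x : EuclideanSpace ℝ (Fin d)) (r : ℝ), 0 ≤ r ∧ A = Metric.closedBall x r

/-!
Encode a ball by its centre and radius and place it at height `1` in `X × ℝ`, so that `k`-flats
become linear subspaces of dimension `k + 1`. If no family is finitely pierced, some ultrafilter
`U` on the balls contains no finitely pierced set and lives on infinitely many of the families. It
suffices that `U`-almost all iterated choices of `k + 2` balls are in general position, i.e. are
only met by subspaces of dimension at least `k + 2`: a greedy choice then produces a heterochromatic
sequence all of whose `(k + 2)`-subsets are in general position.

General position is proved relative to a subspace `E` of dimension at most `k`, by enlarging `E`. By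
compactness of the unit sphere, finitely many subspaces containing `E` pierce the balls whose radius
is not small compared with their distance from `E`, as soon as `E` is not horizontal. Hence along
`U` the balls shrink, as seen from `E`, to a single direction `e ∉ E`, and every limit of subspaces
through `E` that meet these balls contains `E ⊔ ℝ ∙ e`; since dimension does not drop in the limit,
`k + 2` balls over `E` reduce to `k + 1` balls over `E ⊔ ℝ ∙ e`. If `E` has dimension less than `k`,
it may first be made non-horizontal. The remaining case is that of two balls and a horizontal `E` of
dimension `k`; it says that almost all pairs of balls have disjoint images modulo `E`, and otherwise
the balls would be finitely pierced, by a limit of subspaces if the radii tend to `0` and by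
compactness of a fixed ball if they do not.
-/

open Filter Metric Module Set Topology

section Selection

variable {α : Type*}

lemma exists_seq_forall_reverse_range {P : List α → Prop} (nil : P [])
    (cons : ∀ l, P l → ∃ a, P (a :: l)) : ∃ f : ℕ → α, ∀ n, P ((List.range n).reverse.map f) := by
  choose next hnext using cons
  let prefixes : ℕ → {l // P l} := fun n ↦
    n.rec ⟨[], nil⟩ fun _ l ↦ ⟨next l.1 l.2 :: l.1, hnext l.1 l.2⟩
  let f : ℕ → α := fun n ↦ next (prefixes n).1 (prefixes n).2
  refine ⟨f, fun n ↦ ?_⟩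
  suffices h : (List.range n).reverse.map f = (prefixes n).1 from h ▸ (prefixes n).2
  induction n with
  | zero => rfl
  | succ n ih => simp only [List.range_succ, List.reverse_append, List.reverse_singleton,
      List.singleton_append, List.map_cons, ih, prefixes, f]

lemma exists_sublist_reverse_range {s : List ℕ} (hs : s.SortedGT) :
    ∃ n, s.Sublist (List.range n).reverse := by
  refine ⟨s.sum + 1, List.sublist_of_subperm_of_sortedGE ?_ hs.sortedGE ?_⟩
  · refine List.subperm_of_subset hs.nodup fun a ha ↦ ?_
    simpa [Nat.lt_succ_iff] using List.le_sum_of_mem ha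
  · exact (List.sortedLT_range _).sortedLE.reverse

/-- The iterated quantifier `∀ᶠ a₁ in l, …, ∀ᶠ aₙ in l, R (aₙ :: ⋯ :: a₁ :: s)`. -/
def IteratedEventually (l : Filter α) (R : List α → Prop) : ℕ → List α → Prop
  | 0, s => R s
  | n + 1, s => ∀ᶠ a in l, IteratedEventually l R n (a :: s)

lemma IteratedEventually.succ {l : Filter α} {R R' : List α → Prop}
    (hR : ∀ s, R' s → ∀ᶠ a in l, R (a :: s)) :
    ∀ {n : ℕ} {s : List α}, IteratedEventually l R' n s → IteratedEventually l R (n + 1) s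
  | 0, s, h => hR s h
  | _ + 1, _, h => Eventually.mono h fun _ ha ↦ IteratedEventually.succ hR ha

lemma IteratedEventually.eventually_of_sublist_cons {l : Filter α} {R : List α → Prop} {m : ℕ}
    {p : List α} (hp : ∀ s, s.Sublist p → ∀ n, s.length + n = m → IteratedEventually l R n s) :
    ∀ᶠ a in l, ∀ s, s.Sublist (a :: p) → ∀ n, s.length + n = m → IteratedEventually l R n s := by
  have hcons : ∀ᶠ a in l, ∀ s ∈ {s | s ∈ p.sublists}, ∀ n, s.length + (n + 1) = m →
      IteratedEventually l R n (a :: s) := by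
    refine (eventually_all_finite (List.finite_toSet _)).2 fun s hs ↦ ?_
    by_cases hsm : s.length < m
    · filter_upwards [hp s (List.mem_sublists.1 hs) (m - s.length - 1 + 1) (by omega)]
        with a ha n hn
      obtain rfl : n = m - s.length - 1 := by omega
      exact ha
    · exact .of_forall fun a n hn ↦ by omega
  filter_upwards [hcons] with a ha s hs n hn
  rcases List.sublist_cons_iff.1 hs with hsp | ⟨t, rfl, ht⟩
  · exact hp s hsp n hn
  · exact ha t (List.mem_sublists.2 ht) n (by simpa [add_assoc, add_comm 1] using hn)

lemma exists_seq_of_iteratedEventually {l : Filter α} [l.NeBot] {G : ℕ → Set α}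
    (hG : ∀ N, ∀ᶠ a in l, ∃ i ≥ N, a ∈ G i) {R : List α → Prop} {m : ℕ}
    (hR : IteratedEventually l R m []) :
    ∃ (c : ℕ → α) (idx : ℕ → ℕ), StrictMono idx ∧ (∀ j, c j ∈ G (idx j)) ∧
      ∀ s : List ℕ, s.SortedGT → s.length = m → R (s.map c) := by
  let P : List (α × ℕ) → Prop := fun p ↦
    (∀ s, s.Sublist (p.map Prod.fst) → ∀ n, s.length + n = m → IteratedEventually l R n s) ∧
      p.Pairwise (fun x y ↦ y.2 < x.2) ∧ ∀ x ∈ p, x.1 ∈ G x.2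
  have nil : P [] := by
    refine ⟨fun s hs n hn ↦ ?_, List.Pairwise.nil, List.forall_mem_nil _⟩
    obtain rfl := List.sublist_nil.1 hs
    obtain rfl : n = m := by simpa using hn
    exact hR
  have cons : ∀ p, P p → ∃ x, P (x :: p) := by
    rintro p ⟨hp, hlt, hmem⟩
    obtain ⟨a, ha, i, hi, hai⟩ := ((IteratedEventually.eventually_of_sublist_cons hp).and
      (hG ((p.map Prod.snd).sum + 1))).exists
    refine ⟨(a, i), ha, List.pairwise_cons.2 ⟨fun x hx ↦ ?_, hlt⟩,
      List.forall_mem_cons.2 ⟨hai, hmem⟩⟩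
    exact (List.le_sum_of_mem (List.mem_map_of_mem hx)).trans_lt hi
  obtain ⟨f, hf⟩ := exists_seq_forall_reverse_range nil cons
  refine ⟨fun n ↦ (f n).1, fun n ↦ (f n).2, strictMono_nat_of_lt_succ fun n ↦ ?_, fun n ↦ ?_,
    fun s hs hsm ↦ ?_⟩
  · have h := (hf (n + 2)).2.1
    simp only [List.range_succ, List.reverse_append, List.reverse_singleton, List.map_cons,
      List.cons_append, List.pairwise_cons] at h
    exact h.1 _ List.mem_cons_self
  · exact (hf (n + 1)).2.2 _ (List.mem_map_of_mem (by simp))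
  · obtain ⟨n, hn⟩ := exists_sublist_reverse_range hs
    have h := (hf n).1 (s.map fun n ↦ (f n).1)
      (by simpa [Function.comp_def] using hn.map fun n ↦ (f n).1) 0
    exact h (by simpa using hsm)

lemma exists_ultrafilter_le_of_frequently {l : Filter α} {G : ℕ → Set α}
    (h : ∀ i, ∃ᶠ b in l, b ∈ G i) :
    ∃ U : Ultrafilter α, ↑U ≤ l ∧ ∀ N, ∀ᶠ b in (U : Filter α), ∃ i ≥ N, b ∈ G i := by
  let T : ℕ → Filter α := fun N ↦ l ⊓ 𝓟 {b | ∃ i ≥ N, b ∈ G i}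
  have hT : Antitone T := fun N M hNM ↦ inf_le_inf_left _ <| principal_mono.2
    fun b ⟨i, hi, hb⟩ ↦ ⟨i, hNM.trans hi, hb⟩
  have hne : ∀ N, (T N).NeBot := fun N ↦
    frequently_mem_iff_neBot.1 <| (h N).mono fun b hb ↦ ⟨N, le_rfl, hb⟩
  have : (⨅ N, T N).NeBot := iInf_neBot_of_directed' hT.directed_ge hne
  refine ⟨.of (⨅ N, T N), ?_, fun N ↦ ?_⟩
  · exact (Ultrafilter.of_le _).trans ((iInf_le T 0).trans inf_le_left)
  · exact le_principal_iff.1 ((Ultrafilter.of_le _).trans ((iInf_le T N).trans inf_le_right))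

end Selection

section LowerLimit

variable {α 𝕜 V : Type*} [NontriviallyNormedField 𝕜] [NormedAddCommGroup V] [NormedSpace 𝕜 V]

/-- The lower limit (in the sense of Painlevé and Kuratowski) of a family of subspaces along a
filter: the limits of points chosen in the members of the family. -/
def lowerLimit (l : Filter α) (L : α → Submodule 𝕜 V) : Submodule 𝕜 V where
  carrier := {v | ∃ f : α → V, (∀ᶠ a in l, f a ∈ L a) ∧ Tendsto f l (𝓝 v)}
  zero_mem' := ⟨0, by simp, tendsto_const_nhds⟩
  add_mem' := by
    rintro _ _ ⟨f, hfL, hf⟩ ⟨g, hgL, hg⟩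
    exact ⟨f + g, (hfL.and hgL).mono fun a ha ↦ (L a).add_mem ha.1 ha.2, hf.add hg⟩
  smul_mem' := by
    rintro c _ ⟨f, hfL, hf⟩
    exact ⟨c • f, hfL.mono fun a ha ↦ (L a).smul_mem c ha, hf.const_smul c⟩

lemma le_lowerLimit {l : Filter α} {L : α → Submodule 𝕜 V} {E : Submodule 𝕜 V}
    (h : ∀ᶠ a in l, E ≤ L a) : E ≤ lowerLimit l L :=
  fun v hv ↦ ⟨fun _ ↦ v, h.mono fun _ ha ↦ ha hv, tendsto_const_nhds⟩

lemma inter_lowerLimit_nonempty {U : Ultrafilter α} {L : α → Submodule 𝕜 V} {K : Set V}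
    (hK : IsCompact K) {f g : α → V} (hf : ∀ᶠ a in (U : Filter α), f a ∈ K)
    (hg : ∀ᶠ a in (U : Filter α), g a ∈ L a) (hfg : Tendsto (fun a ↦ g a - f a) U (𝓝 0)) :
    (K ∩ lowerLimit (U : Filter α) L).Nonempty := by
  obtain ⟨v, hvK, hv⟩ := hK.ultrafilter_le_nhds' (U.map f) hf
  exact ⟨v, hvK, g, hg, by simpa using hfg.add (show Tendsto f U (𝓝 v) from hv)⟩

lemma eventually_finrank_lowerLimit_le [CompleteSpace 𝕜] [FiniteDimensional 𝕜 V] (l : Filter α)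
    (L : α → Submodule 𝕜 V) :
    ∀ᶠ a in l, finrank 𝕜 (lowerLimit l L) ≤ finrank 𝕜 (L a) := by
  let b := finBasis 𝕜 (lowerLimit l L)
  choose f hfL hf using fun i ↦ (b i).2
  have hb : LinearIndependent 𝕜 fun i ↦ (b i : V) :=
    b.linearIndependent.map' _ (Submodule.ker_subtype _)
  have hli : ∀ᶠ a in l, LinearIndependent 𝕜 fun i ↦ f i a :=
    (tendsto_pi_nhds.2 hf).eventually hb.eventually
  filter_upwards [hli, eventually_all.2 hfL] with a ha haL
  have := (LinearIndependent.of_comp (v := fun i ↦ (⟨f i a, haL i⟩ : L a)) (L a).subtype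
    ha).fintype_card_le_finrank
  simpa using this

end LowerLimit

lemma finrank_sup_span_singleton_le {𝕜 V : Type*} [DivisionRing 𝕜] [AddCommGroup V] [Module 𝕜 V]
    (E : Submodule 𝕜 V) [FiniteDimensional 𝕜 E] (v : V) :
    finrank 𝕜 ↥(E ⊔ 𝕜 ∙ v) ≤ finrank 𝕜 E + 1 :=
  (Submodule.finrank_add_le_finrank_add_finrank _ _).trans <| by
    gcongr
    simpa using finrank_span_le_card ({v} : Set V)

lemma exists_finite_forall_norm_smul_sub_le (V : Type*) [NormedAddCommGroup V] [NormedSpace ℝ V]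
    [ProperSpace V] {ε : ℝ} (hε : 0 < ε) :
    ∃ t : Set V, t.Finite ∧ ∀ v, ∃ n ∈ t, ‖‖v‖ • n - v‖ ≤ ‖v‖ * ε := by
  obtain ⟨t, -, ht, hcover⟩ := (isCompact_closedBall (0 : V) 1).finite_cover_balls hε
  refine ⟨t, ht, fun v ↦ ?_⟩
  have hv : ‖v‖⁻¹ • v ∈ closedBall (0 : V) 1 := by
    simpa [norm_smul] using inv_mul_le_one
  obtain ⟨n, hn, hnv⟩ := mem_iUnion₂.1 (hcover hv)
  refine ⟨n, hn, ?_⟩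
  have hsmul : ‖v‖ • n - v = ‖v‖ • (n - ‖v‖⁻¹ • v) := by
    rcases eq_or_ne v 0 with rfl | hv0
    · simp
    · rw [smul_sub, smul_inv_smul₀ (norm_ne_zero_iff.2 hv0)]
  rw [hsmul, norm_smul, norm_norm]
  exact mul_le_mul_of_nonneg_left (mem_ball_iff_norm'.1 hnv).le (norm_nonneg v)

lemma notMem_of_tendsto_inv_infDist_smul_sub {α V : Type*} [NormedAddCommGroup V] [NormedSpace ℝ V]
    {E : Submodule ℝ V} {l : Filter α} [l.NeBot] {c y : α → V} (hy : ∀ a, y a ∈ E)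
    (hpos : ∀ᶠ a in l, 0 < infDist (c a) E) {e : V}
    (he : Tendsto (fun a ↦ (infDist (c a) E)⁻¹ • (c a - y a)) l (𝓝 e)) : e ∉ E := by
  intro heE
  obtain ⟨a, hδ, hae⟩ := (hpos.and (he.eventually (ball_mem_nhds e one_pos))).exists
  set δ := infDist (c a) E
  have hle : δ ≤ δ * ‖δ⁻¹ • (c a - y a) - e‖ := by
    calc δ ≤ dist (c a) (y a + δ • e) :=
          infDist_le_dist_of_mem (E.add_mem (hy a) (E.smul_mem _ heE))
      _ = ‖δ • (δ⁻¹ • (c a - y a) - e)‖ := by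
          rw [smul_sub, smul_inv_smul₀ hδ.ne', dist_eq_norm, sub_add_eq_sub_sub]
      _ = δ * ‖δ⁻¹ • (c a - y a) - e‖ := by rw [norm_smul, Real.norm_of_nonneg hδ.le]
  exact hle.not_gt (mul_lt_of_lt_one_right hδ (mem_ball_iff_norm.1 hae))

section Piercing

variable {X : Type*} [NormedAddCommGroup X] [NormedSpace ℝ X]

/-- The closed ball with centre `b.1` and radius `b.2`, placed at height `1` in `X × ℝ`. Affine
subspaces of `X` of dimension `k` that meet the ball correspond to linear subspaces of `X × ℝ` of
dimension `k + 1` that meet the lifted ball. -/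
def liftedBall (b : X × ℝ) : Set (X × ℝ) :=
  closedBall b.1 b.2 ×ˢ {1}

/-- A set `A` of balls, encoded by centre and radius, is pierced by finitely many subspaces of
`X × ℝ` of dimension at most `k + 1`, hence by finitely many affine subspaces of `X` of dimension
at most `k`. -/
def FinitelyPierced (k : ℕ) (A : Set (X × ℝ)) : Prop :=
  ∃ S : Set (Submodule ℝ (X × ℝ)), S.Finite ∧ (∀ L ∈ S, finrank ℝ L ≤ k + 1) ∧
    ∀ b ∈ A, ∃ L ∈ S, ((L : Set (X × ℝ)) ∩ liftedBall b).Nonempty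

lemma FinitelyPierced.mono {k : ℕ} {A B : Set (X × ℝ)} (hB : FinitelyPierced k B) (h : A ⊆ B) :
    FinitelyPierced k A :=
  let ⟨S, hS, hrank, hB⟩ := hB
  ⟨S, hS, hrank, fun b hb ↦ hB b (h hb)⟩

lemma finitelyPierced_empty (k : ℕ) : FinitelyPierced k (∅ : Set (X × ℝ)) :=
  ⟨∅, finite_empty, by simp, by simp⟩

lemma FinitelyPierced.union {k : ℕ} {A B : Set (X × ℝ)} (hA : FinitelyPierced k A)
    (hB : FinitelyPierced k B) : FinitelyPierced k (A ∪ B) := by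
  obtain ⟨S, hS, hrankS, hAS⟩ := hA
  obtain ⟨T, hT, hrankT, hBT⟩ := hB
  refine ⟨S ∪ T, hS.union hT, fun L hL ↦ hL.elim (hrankS L) (hrankT L), ?_⟩
  rintro b (hb | hb)
  · obtain ⟨L, hL, h⟩ := hAS b hb
    exact ⟨L, .inl hL, h⟩
  · obtain ⟨L, hL, h⟩ := hBT b hb
    exact ⟨L, .inr hL, h⟩

/-- The filter of sets of balls whose complement is pierced by finitely many subspaces of
`X × ℝ` of dimension at most `k + 1`. -/
def copierced (X : Type*) [NormedAddCommGroup X] [NormedSpace ℝ X] (k : ℕ) : Filter (X × ℝ) :=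
  .comk (FinitelyPierced k) (finitelyPierced_empty k) (fun _ hB _ h ↦ hB.mono h)
    fun _ hA _ hB ↦ hA.union hB

lemma eventually_notMem_copierced {k : ℕ} {A : Set (X × ℝ)} :
    (∀ᶠ b in copierced X k, b ∉ A) ↔ FinitelyPierced k A := by
  simp [Filter.Eventually, copierced, mem_comk, compl_ofPred]

lemma finitelyPierced_setOf_inter_nonempty {k : ℕ} {L : Submodule ℝ (X × ℝ)}
    (hL : finrank ℝ L ≤ k + 1) :
    FinitelyPierced k {b | ((L : Set (X × ℝ)) ∩ liftedBall b).Nonempty} :=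
  ⟨{L}, finite_singleton L, by simpa using hL, by simp⟩

variable [FiniteDimensional ℝ X]

lemma finitelyPierced_of_forall_exists_sup_span {k : ℕ} {E : Submodule ℝ (X × ℝ)}
    (hE : finrank ℝ E ≤ k) {t : Set (X × ℝ)} (ht : t.Finite)
    {A : Set (X × ℝ)} (hA : ∀ b ∈ A, ∃ n ∈ t, (↑(E ⊔ ℝ ∙ n) ∩ liftedBall b).Nonempty) :
    FinitelyPierced k A := by
  refine ⟨(fun n ↦ E ⊔ ℝ ∙ n) '' t, ht.image _, ?_, fun b hb ↦ ?_⟩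
  · rintro _ ⟨n, -, rfl⟩
    exact (finrank_sup_span_singleton_le E n).trans (by gcongr)
  · obtain ⟨n, hn, h⟩ := hA b hb
    exact ⟨_, mem_image_of_mem _ hn, h⟩

-- `E` contains a vector `h` of height `1`. If the centre lies at distance `δ` from its nearest
-- point `y ∈ E`, an `η`-approximation of its direction from `y` leads within `E ⊔ ℝ ∙ n` to a
-- point at distance `O(η δ)` of the centre; a multiple of `h` corrects the height.
lemma finitelyPierced_setOf_mul_infDist_le {k : ℕ} {E : Submodule ℝ (X × ℝ)}
    (hE : finrank ℝ E ≤ k) (hEsnd : ¬ E ≤ LinearMap.ker (LinearMap.snd ℝ X ℝ)) {ε : ℝ}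
    (hε : 0 < ε) : FinitelyPierced k {b | ε * infDist (b.1, (1 : ℝ)) (E : Set (X × ℝ)) ≤ b.2} := by
  obtain ⟨h, hhE, hh⟩ : ∃ h ∈ E, h.2 = 1 := by
    obtain ⟨v, hvE, hv⟩ := SetLike.not_le_iff_exists.1 hEsnd
    exact ⟨v.2⁻¹ • v, E.smul_mem _ hvE, inv_mul_cancel₀ hv⟩
  have hC : 0 < 1 + ‖h‖ := by positivity
  obtain ⟨t, ht, hnet⟩ := exists_finite_forall_norm_smul_sub_le (X × ℝ) (div_pos hε hC)
  refine finitelyPierced_of_forall_exists_sup_span hE ht fun b hb ↦ ?_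
  set c : X × ℝ := (b.1, 1) with hc
  obtain ⟨y, hyE, hy⟩ := E.closed_of_finiteDimensional.exists_infDist_eq_dist ⟨0, E.zero_mem⟩ c
  obtain ⟨n, hn, hncy⟩ := hnet (c - y)
  let w := ‖c - y‖ • n - (c - y)
  have hw : ‖w - w.2 • h‖ ≤ b.2 := by
    calc ‖w - w.2 • h‖ ≤ ‖w‖ + ‖w‖ * ‖h‖ := by
          refine (norm_sub_le _ _).trans ?_
          rw [norm_smul]
          gcongr
          exact norm_snd_le w
      _ = ‖w‖ * (1 + ‖h‖) := by ring
      _ ≤ ‖c - y‖ * (ε / (1 + ‖h‖)) * (1 + ‖h‖) := by gcongr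
      _ = ε * infDist c E := by rw [hy, dist_eq_norm]; field_simp
      _ ≤ b.2 := hb
  refine ⟨n, hn, c + (w - w.2 • h), ?_, ?_, by simp [hh, hc]⟩
  · have : c + (w - w.2 • h) = (y - w.2 • h) + ‖c - y‖ • n := by simp only [w]; abel
    rw [this]
    exact Submodule.add_mem_sup (E.sub_mem hyE (E.smul_mem _ hhE))
      (Submodule.smul_mem _ _ (Submodule.mem_span_singleton_self n))
  · rw [mem_closedBall_iff_norm]
    have hfst : (c + (w - w.2 • h)).1 - b.1 = (w - w.2 • h).1 := by simp [hc]
    exact hfst ▸ (norm_fst_le _).trans hw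

-- Pulling `v` towards the centre by `ε` leaves room to replace `w` by a point of a finite net.
lemma finitelyPierced_setOf_le_of_isCompact {k : ℕ} {E : Submodule ℝ (X × ℝ)}
    (hE : finrank ℝ E ≤ k) {K : Set X} (hK : IsCompact K) {ε : ℝ} (hε : 0 < ε) :
    FinitelyPierced k
      {b | ε ≤ b.2 ∧ ∃ v ∈ closedBall b.1 b.2, ∃ w ∈ K, ((v - w, 0) : X × ℝ) ∈ E} := by
  obtain ⟨t, -, ht, hcover⟩ := (hK.cthickening (r := ε)).finite_cover_balls hε
  refine finitelyPierced_of_forall_exists_sup_span hE (ht.image fun n ↦ (n, (1 : ℝ))) ?_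
  rintro b ⟨hεb, v, hv, w, hw, hvw⟩
  obtain ⟨z, hvz, hzb⟩ : ∃ z, dist v z ≤ ε ∧ dist z b.1 ≤ b.2 - ε :=
    exists_dist_le_le hε.le (sub_nonneg.2 hεb) (by rwa [sub_add_cancel])
  have hwz : w + (z - v) ∈ cthickening ε K :=
    mem_cthickening_of_dist_le _ w _ _ hw (by rwa [dist_self_add_left, ← dist_eq_norm'])
  obtain ⟨n, hn, hnwz⟩ := mem_iUnion₂.1 (hcover hwz)
  refine ⟨_, mem_image_of_mem _ hn, (v - w, 0) + (n, 1), Submodule.add_mem_sup hvw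
    (Submodule.mem_span_singleton_self _), ?_, by simp⟩
  calc dist (v - w + n) b.1 ≤ dist (v - w + n) z + dist z b.1 := dist_triangle _ _ _
    _ = dist n (w + (z - v)) + dist z b.1 := by
        rw [dist_eq_norm, dist_eq_norm n]
        congr 2
        abel
    _ ≤ ε + (b.2 - ε) := add_le_add (mem_ball'.1 hnwz).le hzb
    _ = b.2 := by ring

lemma lowerLimit_sup_span_inter_liftedBall_nonempty {E : Submodule ℝ (X × ℝ)}
    {U : Ultrafilter (X × ℝ)} (hradius : ∀ ε > 0, ∀ᶠ b in (U : Filter (X × ℝ)), b.2 < ε)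
    {b₀ : X × ℝ} (h : ∀ᶠ b in (U : Filter (X × ℝ)),
      ∃ v ∈ closedBall b.1 b.2, ∃ w ∈ closedBall b₀.1 b₀.2, ((v - w, 0) : X × ℝ) ∈ E) :
    ((lowerLimit (U : Filter (X × ℝ)) fun b ↦ E ⊔ ℝ ∙ (b.1, (1 : ℝ)) : Set (X × ℝ)) ∩
      liftedBall b₀).Nonempty := by
  obtain ⟨v, hv⟩ := h.choice
  obtain ⟨w, hw⟩ := (hv.mono fun b h ↦ h.2).choice
  rw [inter_comm]
  refine inter_lowerLimit_nonempty (f := fun b ↦ (w b, 1)) (g := fun b ↦ (w b + (b.1 - v b), 1))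
    ((isCompact_closedBall _ _).prod isCompact_singleton) ?_ ?_ ?_
  · exact hw.mono fun b h ↦ ⟨h.1, rfl⟩
  · refine hw.mono fun b h ↦ ?_
    have : (w b + (b.1 - v b), (1 : ℝ)) = -(v b - w b, (0 : ℝ)) + (b.1, (1 : ℝ)) := by
      ext <;> simp; abel
    rw [this]
    exact Submodule.add_mem_sup (E.neg_mem h.2) (Submodule.mem_span_singleton_self _)
  · rw [tendsto_zero_iff_norm_tendsto_zero, Metric.tendsto_nhds]
    intro ε hε
    filter_upwards [hv, hradius ε hε] with b hb hbε
    rw [mem_closedBall_iff_norm'] at hb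
    simpa using hb.1.trans_lt hbε

end Piercing

section Independence

variable {X : Type*} [NormedAddCommGroup X] [NormedSpace ℝ X]

/-- A list of balls is independent over a subspace `E` of `X × ℝ` if every subspace that contains
`E` and meets all the lifted balls has at least the dimension forced by points of these balls that
are linearly independent modulo `E`. -/
def IsIndependentOver (E : Submodule ℝ (X × ℝ)) (s : List (X × ℝ)) : Prop :=
  ∀ L : Submodule ℝ (X × ℝ), E ≤ L → (∀ b ∈ s, ((L : Set (X × ℝ)) ∩ liftedBall b).Nonempty) →
    finrank ℝ E + s.length ≤ finrank ℝ L

variable [FiniteDimensional ℝ X] {E : Submodule ℝ (X × ℝ)}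

lemma isIndependentOver_singleton {b : X × ℝ} (h : ¬ ((E : Set (X × ℝ)) ∩ liftedBall b).Nonempty) :
    IsIndependentOver E [b] := by
  intro L hEL hL
  have hlt : E < L := lt_of_le_of_ne hEL <| by
    rintro rfl
    exact h (hL b (by simp))
  exact Submodule.finrank_lt_finrank_of_lt hlt

lemma isIndependentOver_pair (hE : E ≤ LinearMap.ker (LinearMap.snd ℝ X ℝ)) {b b₀ : X × ℝ}
    (h : ¬ ∃ v ∈ closedBall b.1 b.2, ∃ w ∈ closedBall b₀.1 b₀.2, ((v - w, 0) : X × ℝ) ∈ E) :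
    IsIndependentOver E [b, b₀] := by
  intro L hEL hL
  obtain ⟨⟨v, _⟩, hvL, hv, rfl⟩ := hL b (by simp)
  obtain ⟨⟨w, _⟩, hwL, hw, rfl⟩ := hL b₀ (by simp)
  have hlt : E < L ⊓ LinearMap.ker (LinearMap.snd ℝ X ℝ) :=
    lt_of_le_of_ne (le_inf hEL hE) fun hEeq ↦ h ⟨v, hv, w, hw, hEeq ▸
      ⟨by simpa using L.sub_mem hvL hwL, by simp⟩⟩
  have hlt' : L ⊓ LinearMap.ker (LinearMap.snd ℝ X ℝ) < L :=
    inf_lt_left.2 fun hle ↦ one_ne_zero (hle hvL)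
  have hrank := Submodule.finrank_lt_finrank_of_lt hlt
  have hrank' := Submodule.finrank_lt_finrank_of_lt hlt'
  simp only [List.length_cons, List.length_nil]
  omega

variable {U : Ultrafilter (X × ℝ)}

-- `e` is the limit of the unit vectors pointing from the nearest point of `E` to the centres.
lemma exists_notMem_forall_mem_lowerLimit (hnonneg : ∀ᶠ b in (U : Filter (X × ℝ)), 0 ≤ b.2)
    (hradius : ∀ ε > 0, ∀ᶠ b in (U : Filter (X × ℝ)),
      b.2 < ε * infDist (b.1, (1 : ℝ)) (E : Set (X × ℝ))) :
    ∃ e ∉ E, ∀ L : X × ℝ → Submodule ℝ (X × ℝ),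
      (∀ᶠ b in (U : Filter (X × ℝ)), E ≤ L b ∧ ((L b : Set (X × ℝ)) ∩ liftedBall b).Nonempty) →
        e ∈ lowerLimit (U : Filter (X × ℝ)) L := by
  choose y hyE hy using fun b : X × ℝ ↦
    E.closed_of_finiteDimensional.exists_infDist_eq_dist ⟨0, E.zero_mem⟩ (b.1, (1 : ℝ))
  let δ : X × ℝ → ℝ := fun b ↦ infDist (b.1, (1 : ℝ)) (E : Set (X × ℝ))
  let u : X × ℝ → X × ℝ := fun b ↦ (δ b)⁻¹ • ((b.1, (1 : ℝ)) - y b)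
  have hu : ∀ b, u b ∈ closedBall (0 : X × ℝ) 1 := fun b ↦ by
    rw [mem_closedBall_zero_iff, norm_smul, ← dist_eq_norm, ← hy, norm_inv,
      Real.norm_of_nonneg infDist_nonneg]
    exact inv_mul_le_one
  obtain ⟨e, -, he⟩ := (isCompact_closedBall _ _).ultrafilter_le_nhds' (U.map u)
    (mem_map.2 (Eventually.of_forall hu))
  replace he : Tendsto u U (𝓝 e) := he
  have hδ : ∀ᶠ b in (U : Filter (X × ℝ)), 0 < δ b := by
    filter_upwards [hnonneg, hradius 1 one_pos] with b hb hbδ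
    exact hb.trans_lt (by simpa using hbδ)
  refine ⟨e, notMem_of_tendsto_inv_infDist_smul_sub hyE hδ he, fun L hL ↦ ?_⟩
  obtain ⟨v, hv⟩ := (hL.mono fun b h ↦ h.2).choice
  refine ⟨fun b ↦ (δ b)⁻¹ • (v b - y b), ?_, ?_⟩
  · filter_upwards [hL, hv] with b hLb hvb
    exact (L b).smul_mem _ ((L b).sub_mem hvb.1 (hLb.1 (hyE b)))
  · refine he.congr_dist (Metric.tendsto_nhds.2 fun ε hε ↦ ?_)
    filter_upwards [hv, hδ, hradius ε hε] with b hvb hδb hb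
    have hdist : dist (b.1, (1 : ℝ)) (v b) ≤ b.2 := by
      rw [Prod.dist_eq, show (v b).2 = 1 from hvb.2.2, dist_self]
      exact max_le (mem_closedBall'.1 hvb.2.1) (dist_nonneg.trans (mem_closedBall.1 hvb.2.1))
    rw [dist_zero_right, Real.norm_of_nonneg dist_nonneg, dist_smul₀, dist_sub_right, norm_inv,
      Real.norm_of_nonneg hδb.le, inv_mul_lt_iff₀ hδb]
    exact hdist.trans_lt (hb.trans_eq (mul_comm _ _))

lemma IsIndependentOver.eventually_cons {e : X × ℝ} (he : e ∉ E)
    (heL : ∀ L : X × ℝ → Submodule ℝ (X × ℝ),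
      (∀ᶠ b in (U : Filter (X × ℝ)), E ≤ L b ∧ ((L b : Set (X × ℝ)) ∩ liftedBall b).Nonempty) →
        e ∈ lowerLimit (U : Filter (X × ℝ)) L)
    {s : List (X × ℝ)} (hs : IsIndependentOver (E ⊔ ℝ ∙ e) s) :
    ∀ᶠ b in (U : Filter (X × ℝ)), IsIndependentOver E (b :: s) := by
  by_contra h
  rw [← U.eventually_not] at h
  simp only [IsIndependentOver, not_forall, not_le, exists_prop, List.forall_mem_cons] at h
  obtain ⟨L, hL⟩ := h.choice
  have hELe : E ⊔ ℝ ∙ e ≤ lowerLimit (U : Filter (X × ℝ)) L :=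
    sup_le (le_lowerLimit (hL.mono fun b h ↦ h.1)) <|
      (Submodule.span_singleton_le_iff_mem _ _).2 (heL L (hL.mono fun b h ↦ ⟨h.1, h.2.1.1⟩))
  have hmeet : ∀ b₀ ∈ s, ((lowerLimit (U : Filter (X × ℝ)) L : Set (X × ℝ)) ∩
      liftedBall b₀).Nonempty := by
    intro b₀ hb₀
    obtain ⟨v, hv⟩ := (hL.mono fun b h ↦ h.2.1.2 b₀ hb₀).choice
    rw [inter_comm]
    exact inter_lowerLimit_nonempty ((isCompact_closedBall _ _).prod isCompact_singleton)
      (hv.mono fun b h ↦ h.2) (hv.mono fun b h ↦ h.1) (by simp)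
  have hrank := hs _ hELe hmeet
  rw [Submodule.finrank_sup_span_singleton he] at hrank
  obtain ⟨b, hb, hle⟩ := (hL.and (eventually_finrank_lowerLimit_le _ L)).exists
  have := hb.2.2
  rw [List.length_cons] at this
  omega

lemma iteratedEventually_isIndependentOver_succ
    (hnonneg : ∀ᶠ b in (U : Filter (X × ℝ)), 0 ≤ b.2)
    (hradius : ∀ ε > 0, ∀ᶠ b in (U : Filter (X × ℝ)),
      b.2 < ε * infDist (b.1, (1 : ℝ)) (E : Set (X × ℝ))) {n : ℕ}
    (h : ∀ E' : Submodule ℝ (X × ℝ), finrank ℝ E' ≤ finrank ℝ E + 1 →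
      IteratedEventually U (IsIndependentOver E') n []) :
    IteratedEventually U (IsIndependentOver E) (n + 1) [] := by
  obtain ⟨e, he, heL⟩ := exists_notMem_forall_mem_lowerLimit hnonneg hradius
  exact .succ (fun _ ↦ IsIndependentOver.eventually_cons he heL)
    (h _ (finrank_sup_span_singleton_le E e))

variable {k : ℕ} (hU : ↑U ≤ copierced X k)

include hU

lemma eventually_lt_mul_infDist_of_not_le_ker (hE : finrank ℝ E ≤ k)
    (hEsnd : ¬ E ≤ LinearMap.ker (LinearMap.snd ℝ X ℝ)) {ε : ℝ} (hε : 0 < ε) :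
    ∀ᶠ b in (U : Filter (X × ℝ)), b.2 < ε * infDist (b.1, (1 : ℝ)) (E : Set (X × ℝ)) := by
  simpa using (eventually_notMem_copierced.2
    (finitelyPierced_setOf_mul_infDist_le hE hEsnd hε)).filter_mono hU

lemma eventually_lt_mul_infDist_of_finrank_lt (hE : finrank ℝ E < k) {ε : ℝ} (hε : 0 < ε) :
    ∀ᶠ b in (U : Filter (X × ℝ)), b.2 < ε * infDist (b.1, (1 : ℝ)) (E : Set (X × ℝ)) := by
  have hsnd : ¬ E ⊔ ℝ ∙ ((0, 1) : X × ℝ) ≤ LinearMap.ker (LinearMap.snd ℝ X ℝ) := fun h ↦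
    one_ne_zero (h (le_sup_right (a := E) (Submodule.mem_span_singleton_self ((0, 1) : X × ℝ))))
  filter_upwards [eventually_lt_mul_infDist_of_not_le_ker hU
    ((finrank_sup_span_singleton_le E _).trans hE) hsnd hε] with b hb
  refine hb.trans_le (mul_le_mul_of_nonneg_left ?_ hε.le)
  exact infDist_le_infDist_of_subset (le_sup_left (a := E)) ⟨0, E.zero_mem⟩

lemma eventually_isIndependentOver_singleton (hE : finrank ℝ E ≤ k + 1) :
    ∀ᶠ b in (U : Filter (X × ℝ)), IsIndependentOver E [b] :=
  ((eventually_notMem_copierced.2 (finitelyPierced_setOf_inter_nonempty hE)).filter_mono hU).mono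
    fun _ ↦ isIndependentOver_singleton

lemma eventually_eventually_isIndependentOver_pair (hE : finrank ℝ E ≤ k)
    (hEsnd : E ≤ LinearMap.ker (LinearMap.snd ℝ X ℝ)) :
    ∀ᶠ b₀ in (U : Filter (X × ℝ)), ∀ᶠ b in (U : Filter (X × ℝ)), IsIndependentOver E [b, b₀] := by
  suffices h : ∀ᶠ b₀ in (U : Filter (X × ℝ)), ∀ᶠ b in (U : Filter (X × ℝ)),
      ¬ ∃ v ∈ closedBall b.1 b.2, ∃ w ∈ closedBall b₀.1 b₀.2, ((v - w, 0) : X × ℝ) ∈ E from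
    h.mono fun _ hb₀ ↦ hb₀.mono fun _ ↦ isIndependentOver_pair hEsnd
  by_contra h
  simp only [U.eventually_not, not_not] at h
  by_cases hradius : ∀ ε > 0, ∀ᶠ b in (U : Filter (X × ℝ)), b.2 < ε
  · let M := lowerLimit (U : Filter (X × ℝ)) fun b ↦ E ⊔ ℝ ∙ (b.1, (1 : ℝ))
    have hM : finrank ℝ M ≤ k + 1 := by
      obtain ⟨b, hb⟩ := (eventually_finrank_lowerLimit_le (U : Filter (X × ℝ))
        fun b ↦ E ⊔ ℝ ∙ (b.1, (1 : ℝ))).exists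
      exact hb.trans ((finrank_sup_span_singleton_le E _).trans (by gcongr))
    have hmiss :=
      (eventually_notMem_copierced.2 (finitelyPierced_setOf_inter_nonempty hM)).filter_mono hU
    obtain ⟨b₀, hb₀, hb₀M⟩ := (h.and hmiss).exists
    exact hb₀M (lowerLimit_sup_span_inter_liftedBall_nonempty hradius hb₀)
  · push Not at hradius
    obtain ⟨ε, hε, hradius⟩ := hradius
    obtain ⟨b₀, hb₀⟩ := h.exists
    have hmiss := (eventually_notMem_copierced.2
      (finitelyPierced_setOf_le_of_isCompact hE (isCompact_closedBall b₀.1 b₀.2) hε)).filter_mono hU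
    obtain ⟨b, hb, hεb, hbmiss⟩ := (hb₀.and (hradius.and hmiss)).exists
    exact hbmiss ⟨hεb, hb⟩

lemma iteratedEventually_isIndependentOver (hnonneg : ∀ᶠ b in (U : Filter (X × ℝ)), 0 ≤ b.2)
    (m : ℕ) (hE : finrank ℝ E + m ≤ k) :
    IteratedEventually U (IsIndependentOver E) (m + 2) [] := by
  induction m generalizing E with
  | zero =>
    by_cases hEsnd : E ≤ LinearMap.ker (LinearMap.snd ℝ X ℝ)
    · exact eventually_eventually_isIndependentOver_pair hU hE hEsnd
    · exact iteratedEventually_isIndependentOver_succ hnonneg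
        (fun ε hε ↦ eventually_lt_mul_infDist_of_not_le_ker hU hE hEsnd hε)
        fun E' hE' ↦ eventually_isIndependentOver_singleton hU (by omega)
  | succ m ih =>
    exact iteratedEventually_isIndependentOver_succ hnonneg
      (fun ε hε ↦ eventually_lt_mul_infDist_of_finrank_lt hU (by omega) hε)
      fun E' hE' ↦ ih (by omega)

omit hU

lemma exists_finitelyPierced {G : ℕ → Set (X × ℝ)} (hnonneg : ∀ i, ∀ b ∈ G i, 0 ≤ b.2)
    (hG : ∀ (c : ℕ → X × ℝ) (idx : ℕ → ℕ), StrictMono idx → (∀ j, c j ∈ G (idx j)) →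
      ∃ s : Finset ℕ, s.card = k + 2 ∧ ∃ L : Submodule ℝ (X × ℝ), finrank ℝ L ≤ k + 1 ∧
        ∀ j ∈ s, ((L : Set (X × ℝ)) ∩ liftedBall (c j)).Nonempty) :
    ∃ i, FinitelyPierced k (G i) := by
  by_contra! hunpierced
  obtain ⟨U, hU, hUG⟩ := exists_ultrafilter_le_of_frequently fun i ↦
    mt eventually_notMem_copierced.1 (hunpierced i)
  have hUnonneg : ∀ᶠ b in (U : Filter (X × ℝ)), 0 ≤ b.2 :=
    (hUG 0).mono fun b ⟨i, _, hb⟩ ↦ hnonneg i b hb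
  obtain ⟨c, idx, hidx, hc, hindep⟩ := exists_seq_of_iteratedEventually hUG
    (iteratedEventually_isIndependentOver (E := ⊥) hU hUnonneg k (by simp))
  obtain ⟨s, hs, L, hL, hsL⟩ := hG c idx hidx hc
  have hrank := hindep (s.sort (· ≥ ·)) (Finset.sortedGT_sort s) (by simp [hs]) L bot_le
    (by simpa [List.forall_mem_map] using hsL)
  simp only [finrank_bot, List.length_map, Finset.length_sort, hs] at hrank
  omega

end Independence

lemma exists_le_finrank_eq {K V : Type*} [DivisionRing K] [AddCommGroup V] [Module K V]
    [FiniteDimensional K V] {E : Submodule K V} {m : ℕ} (hE : finrank K E ≤ m)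
    (hm : m ≤ finrank K V) : ∃ E' : Submodule K V, E ≤ E' ∧ finrank K E' = m := by
  induction m, hE using Nat.le_induction with
  | base => exact ⟨E, le_rfl, rfl⟩
  | succ m _ ih =>
    obtain ⟨E', hle, hE'⟩ := ih (by omega)
    obtain ⟨v, hv⟩ := E'.exists_of_finrank_lt (by omega)
    have hvE' : v ∉ E' := by simpa using hv 1 one_ne_zero
    exact ⟨E' ⊔ K ∙ v, hle.trans le_sup_left, by
      rw [Submodule.finrank_sup_span_singleton hvE', hE']⟩

section Flats

variable {K X : Type*} [Field K] [AddCommGroup X] [Module K X] [FiniteDimensional K X] {k : ℕ}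

lemma exists_affineSubspace_of_finrank_le {L : Submodule K (X × K)} (hL : finrank K L ≤ k + 1) :
    ∃ A : AffineSubspace K X, finrank K A.direction ≤ k ∧ ∀ y, (y, (1 : K)) ∈ L → y ∈ A := by
  by_cases h : ∃ y, (y, (1 : K)) ∈ L
  · obtain ⟨y₀, hy₀⟩ := h
    refine ⟨.mk' y₀ (L.comap (LinearMap.inl K X K)), ?_, fun y hy ↦ ?_⟩
    · have hlt : (L.comap (LinearMap.inl K X K)).map (LinearMap.inl K X K) < L := by
        refine lt_of_le_of_ne (Submodule.map_comap_le _ _) fun heq ↦ ?_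
        obtain ⟨v, -, hv⟩ := heq.ge hy₀
        exact zero_ne_one (congrArg Prod.snd hv)
      have hrank := Submodule.finrank_lt_finrank_of_lt hlt
      rw [← (Submodule.equivMapOfInjective _ LinearMap.inl_injective _).finrank_eq] at hrank
      rw [AffineSubspace.direction_mk']
      omega
    · rw [AffineSubspace.mem_mk', vsub_eq_sub, Submodule.mem_comap]
      have hsub := L.sub_mem hy hy₀
      rwa [Prod.mk_sub_mk, sub_self] at hsub
  · refine ⟨⊥, ?_, fun y hy ↦ (h ⟨y, hy⟩).elim⟩
    rw [AffineSubspace.direction_bot, finrank_bot]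
    exact Nat.zero_le k

lemma exists_submodule_of_finrank_direction_le {A : AffineSubspace K X}
    (hA : finrank K A.direction ≤ k) :
    ∃ L : Submodule K (X × K), finrank K L ≤ k + 1 ∧ ∀ y ∈ A, (y, (1 : K)) ∈ L := by
  obtain rfl | ⟨y₀, hy₀⟩ := A.eq_bot_or_nonempty
  · exact ⟨⊥, by simp, fun y hy ↦ hy.elim⟩
  refine ⟨A.direction.map (LinearMap.inl K X K) ⊔ K ∙ (y₀, 1), ?_, fun y hy ↦ ?_⟩
  · refine (finrank_sup_span_singleton_le _ _).trans ?_
    gcongr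
    exact (Submodule.finrank_map_le _ _).trans hA
  · rw [show (y, (1 : K)) = LinearMap.inl K X K (y - y₀) + (y₀, 1) by simp]
    exact Submodule.add_mem_sup
      (Submodule.mem_map_of_mem (AffineSubspace.vsub_mem_direction hy hy₀))
      (Submodule.mem_span_singleton_self _)

variable {d : ℕ}

lemma IsKFlat.exists_affineSubspace {W : Set (EuclideanSpace ℝ (Fin d))} (hW : IsKFlat k W) :
    ∃ A : AffineSubspace ℝ (EuclideanSpace ℝ (Fin d)), finrank ℝ A.direction = k ∧ ↑A = W := by
  obtain ⟨p, E, hE, rfl⟩ := hW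
  refine ⟨.mk' p E, by rwa [AffineSubspace.direction_mk'], ?_⟩
  ext y
  simp [AffineSubspace.mem_mk', sub_eq_neg_add]

lemma exists_isKFlat_superset {A : AffineSubspace ℝ (EuclideanSpace ℝ (Fin d))}
    (hA : finrank ℝ A.direction ≤ k) (hk : k ≤ d) :
    ∃ W : Set (EuclideanSpace ℝ (Fin d)), IsKFlat k W ∧ ↑A ⊆ W := by
  obtain ⟨E, hAE, hE⟩ := exists_le_finrank_eq hA (by simpa using hk)
  obtain rfl | ⟨p, hp⟩ := A.eq_bot_or_nonempty
  · exact ⟨_, ⟨0, E, hE, rfl⟩, by simp⟩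
  · exact ⟨_, ⟨p, E, hE, rfl⟩, fun y hy ↦
      ⟨y - p, hAE (AffineSubspace.vsub_mem_direction hy hp), by simp⟩⟩

end Flats

theorem stmt_13_general {X : Type*} [NormedAddCommGroup X] [NormedSpace ℝ X]
    [FiniteDimensional ℝ X] (k : ℕ) (F : ℕ → Set (Set X))
    (hball : ∀ i, ∀ A ∈ F i, ∃ x r, 0 ≤ r ∧ A = closedBall x r)
    (hyp : ∀ C : ℕ → Set X, (∃ idx : ℕ → ℕ, StrictMono idx ∧ ∀ j, C j ∈ F (idx j)) →
      ∃ s : Finset ℕ, s.card = k + 2 ∧ ∃ W : AffineSubspace ℝ X, finrank ℝ W.direction ≤ k ∧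
        ∀ j ∈ s, (C j ∩ W).Nonempty) :
    ∃ (i n : ℕ) (W : Fin n → AffineSubspace ℝ X), (∀ m, finrank ℝ (W m).direction ≤ k) ∧
      ∀ A ∈ F i, ∃ m, (A ∩ W m).Nonempty := by
  obtain ⟨i, S, hS, hrank, hpierce⟩ := exists_finitelyPierced (k := k)
    (G := fun i ↦ {b : X × ℝ | 0 ≤ b.2 ∧ closedBall b.1 b.2 ∈ F i}) (fun i b hb ↦ hb.1) <| by
      intro c idx hidx hc
      obtain ⟨s, hs, W, hW, hsW⟩ := hyp (fun j ↦ closedBall (c j).1 (c j).2)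
        ⟨idx, hidx, fun j ↦ (hc j).2⟩
      obtain ⟨L, hL, hWL⟩ := exists_submodule_of_finrank_direction_le hW
      refine ⟨s, hs, L, hL, fun j hj ↦ ?_⟩
      obtain ⟨y, hy, hyW⟩ := hsW j hj
      exact ⟨(y, 1), hWL y hyW, hy, rfl⟩
  obtain ⟨n, f, -, rfl⟩ := hS.fin_param
  choose W hW hfW using fun m ↦ exists_affineSubspace_of_finrank_le (hrank (f m) (mem_range_self m))
  refine ⟨i, n, W, hW, fun A hA ↦ ?_⟩
  obtain ⟨x, r, hr, rfl⟩ := hball i A hA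
  obtain ⟨_, ⟨m, rfl⟩, ⟨y, _⟩, hyL, hy, rfl⟩ := hpierce (x, r) ⟨hr, hA⟩
  exact ⟨m, y, hy, hfW m y hyL⟩

/-- **heterochromatic `(ℵ₀, k+2)`-theorem for `k`-flats and balls.**
Let `F 0, F 1, …` be families of closed balls in `ℝ^d`, `0 ≤ k < d`. If every infinite
heterochromatic sequence of balls contains `k+2` balls all intersected by a single
`k`-flat, then some family `F i` can be pierced by finitely many `k`-flats. -/
theorem stmt_13 (d k : ℕ) (hd : 1 ≤ d) (hk : k < d)
    (F : ℕ → Set (Set (EuclideanSpace ℝ (Fin d))))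
    (hball : ∀ i, ∀ A ∈ F i, IsClosedBall A)
    (hyp : ∀ C : ℕ → Set (EuclideanSpace ℝ (Fin d)),
      (∃ idx : ℕ → ℕ, StrictMono idx ∧ ∀ j, C j ∈ F (idx j)) →
      ∃ s : Finset ℕ, s.card = k + 2 ∧
        ∃ W : Set (EuclideanSpace ℝ (Fin d)), IsKFlat k W ∧
          ∀ j ∈ s, (C j ∩ W).Nonempty) :
    ∃ (i n : ℕ) (W : Fin n → Set (EuclideanSpace ℝ (Fin d))),
      (∀ m, IsKFlat k (W m)) ∧ ∀ A ∈ F i, ∃ m, (A ∩ W m).Nonempty := by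
  obtain ⟨i, n, W, hW, hFW⟩ := stmt_13_general k F hball fun C hC ↦ by
    obtain ⟨s, hs, _, hV, hsV⟩ := hyp C hC
    obtain ⟨A, hA, rfl⟩ := hV.exists_affineSubspace
    exact ⟨s, hs, A, hA.le, hsV⟩
  choose V hV hWV using fun m ↦ exists_isKFlat_superset (hW m) hk.le
  exact ⟨i, n, V, hV, fun A hA ↦
    (hFW A hA).imp fun m ↦ .mono (inter_subset_inter_right A (hWV m))⟩
end

section
/- Let d ≥ 1, let 0 ≤ k < d, and let F be a family of closed balls in ℝ^d (closed Euclidean balls of arbitrary nonnegative radius). Suppose that every infinite subfamily of F contains k+2 balls that are all intersected by a single k-flat. Then there exists a finite set of k-flats in ℝ^d such that every ball of F intersects at least one of these k-flats. -/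
/-!
If no finite set of `k`-flats meets all the balls, then along a suitable ultrafilter every `k`-flat
is eventually missed. Identify `E` with the hyperplane `{1} × E` of `V = ℝ × E`: balls become slices
of that hyperplane, `k`-flats become linear subspaces of dimension at most `k + 1`, and it suffices
to find infinitely many slices any `k + 2` of which have only linearly independent transversals.

Let `0 = W₀ ≤ W₁ ≤ …` be the flag in which `Wₙ₊₁` adjoins to `Wₙ` the limit direction of the centres
modulo `Wₙ`. The slices are chosen greedily so that any `t` of them stay independent modulo
`Wₙ` when `n + t = k + 2`. To pass from `t` slices modulo `Wₙ₊₁` to `t + 1` modulo `Wₙ`, rescale the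
new slice by the norm of its centre modulo `Wₙ`. Slices that miss a subspace containing `Wₙ₊₁` and
meeting the hyperplane have radius negligible against that norm, so the rescaled slice shrinks to
the limit direction, which lies in `Wₙ₊₁` but not in `Wₙ`; independence is an open condition.

The only case without such a subspace is `n = k`, with `Wₖ₊₁` parallel to the hyperplane. Then the
slices escape to infinity modulo `Wₖ`, and two points of the hyperplane that differ modulo `Wₖ` are
independent.
-/

open Asymptotics Filter Module NormedSpace Set Submodule Topology

section LinearAlgebra

variable {K V ι : Type*} [Field K] [AddCommGroup V] [Module K V]

theorem finrank_sup_span_singleton_le_s14 (U : Submodule K V) (v : V) [FiniteDimensional K U] :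
    finrank K (U ⊔ span K {v} : Submodule K V) ≤ finrank K U + 1 :=
  (finrank_add_le_finrank_add_finrank U (span K {v})).trans <|
    Nat.add_le_add_left (by simpa using finrank_span_le_card (R := K) {v}) _

theorem exists_le_finrank_eq_s14 [FiniteDimensional K V] (U : Submodule K V) {n : ℕ}
    (hU : finrank K U ≤ n) (hn : n ≤ finrank K V) :
    ∃ U' : Submodule K V, U ≤ U' ∧ finrank K U' = n := by
  induction n, hU using Nat.le_induction with
  | base => exact ⟨U, le_rfl, rfl⟩
  | succ n _ ih =>
    obtain ⟨U', hUU', hU'⟩ := ih (Nat.le_of_succ_le hn)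
    obtain ⟨v, hv⟩ : ∃ v, v ∉ U' :=
      SetLike.exists_not_mem_of_ne_top U' (by rintro rfl; simp at hU'; omega) rfl
    exact ⟨U' ⊔ span K {v}, hUU'.trans le_sup_left, by rw [finrank_sup_span_singleton hv, hU']⟩

/-- A family `A` of nonempty sets is independent over `t` modulo the subspace `W` if the images in
the quotient by `W` of any points chosen from the sets `A i`, `i ∈ t`, are linearly independent.
The choice `p` is made on the whole index type, so that no subtype of indices is involved. -/
def IndepMod (W : Submodule K V) (A : ι → Set V) (t : Set ι) : Prop :=
  ∀ p : ι → V, (∀ i, p i ∈ A i) → LinearIndepOn K (fun i => W.mkQ (p i)) t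

theorem IndepMod.card_le_finrank [FiniteDimensional K V] {A : ι → Set V} {t : Finset ι}
    (h : IndepMod (⊥ : Submodule K V) A t) (hA : ∀ i, (A i).Nonempty) {W : Submodule K V}
    (hW : ∀ i ∈ t, (A i ∩ W).Nonempty) : t.card ≤ finrank K W := by
  have hchoice : ∀ i, ∃ v ∈ A i, i ∈ t → v ∈ W := fun i => by
    by_cases hi : i ∈ t
    · obtain ⟨v, hvA, hvW⟩ := hW i hi
      exact ⟨v, hvA, fun _ => hvW⟩
    · exact (hA i).imp fun v hv => ⟨hv, fun hit => (hi hit).elim⟩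
  choose p hpA hpW using hchoice
  have hp : LinearIndependent K fun i : t => p i :=
    LinearIndependent.of_comp (⊥ : Submodule K V).mkQ (h p hpA)
  have hpW : LinearIndependent K fun i : t => (⟨p i, hpW i i.2⟩ : W) :=
    LinearIndependent.of_comp W.subtype hp
  simpa using hpW.fintype_card_le_finrank

theorem linearIndepOn_mkQ_of_le {W W' : Submodule K V} (hWW' : W ≤ W') {p : ι → V} {t : Set ι}
    (hp : LinearIndepOn K (fun i => W'.mkQ (p i)) t) :
    LinearIndepOn K (fun i => W.mkQ (p i)) t :=
  LinearIndependent.of_comp (factor hWW') hp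

theorem mkQ_notMem_span_image_of_le {W W' : Submodule K V} (hWW' : W ≤ W') {v : V} (hvW' : v ∈ W')
    (hvW : v ∉ W) {p : ι → V} {t : Set ι} (hp : LinearIndepOn K (fun i => W'.mkQ (p i)) t) :
    W.mkQ v ∉ span K ((fun i => W.mkQ (p i)) '' t) := by
  have hdisj : Disjoint (span K (range fun i : t => W.mkQ (p i))) (factor hWW').ker :=
    range_ker_disjoint hp
  rw [image_eq_range]
  refine fun hv => hvW ?_
  simpa using disjoint_def.1 hdisj _ hv (by simpa using hvW')

theorem linearIndepOn_pair_of_map_eq_one (f : V →ₗ[K] K) {x : ι → V} {i j : ι} (hi : f (x i) = 1)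
    (hj : f (x j) = 1) (hij : x i ≠ x j) : LinearIndepOn K x {i, j} := by
  refine (LinearIndepOn.pair_iff x (by rintro rfl; exact hij rfl)).2 fun a b hab => ?_
  have hb : b = -a := by
    rw [eq_neg_iff_add_eq_zero, add_comm]
    simpa [hi, hj] using congrArg f hab
  have ha : a = 0 := by
    rw [hb, neg_smul, ← sub_eq_add_neg, ← smul_sub] at hab
    exact (smul_eq_zero.1 hab).resolve_right (sub_ne_zero.2 hij)
  exact ⟨ha, by rw [hb, ha, neg_zero]⟩

end LinearAlgebra

section Filter

variable {ι α : Type*}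

theorem exists_infinite_forall_finset_of_eventually_insert [DecidableEq ι] {l : Filter ι} [l.NeBot]
    (hl : l ≤ cofinite) {P : Finset ι → Prop} (hempty : P ∅)
    (hinsert : ∀ t, P t → ∀ᶠ i in l, i ∉ t → P (insert i t)) :
    ∃ G : Set ι, G.Infinite ∧ ∀ t : Finset ι, (t : Set ι) ⊆ G → P t := by
  have hfinChar : Order.IsOfFiniteCharacter {G : Set ι | ∀ t : Finset ι, ↑t ⊆ G → P t} := fun G =>
    ⟨fun hG H hHG _ t htH => hG t (htH.trans hHG), fun hG t ht => hG t ht t.finite_toSet t le_rfl⟩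
  obtain ⟨G, -, hG⟩ := hfinChar.exists_maximal (x := ∅) fun t ht => by
    rwa [Finset.coe_eq_empty.1 (subset_empty_iff.1 ht)]
  refine ⟨G, fun hfin => ?_, hG.prop⟩
  lift G to Finset ι using hfin
  have hext : ∀ᶠ i in l, ∀ t ∈ G.powerset, i ∉ t → P (insert i t) :=
    (eventually_all_finset _).2 fun t ht =>
      hinsert t (hG.prop t (Finset.coe_subset.2 (Finset.mem_powerset.1 ht)))
  have hnew : ∀ᶠ i in l, i ∉ (G : Set ι) := hl G.finite_toSet.compl_mem_cofinite
  obtain ⟨i, hiG, hi⟩ := (hnew.and hext).exists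
  refine hiG (hG.le_of_ge (y := insert i ↑G) (fun t ht => ?_) (subset_insert _ _)
    (mem_insert _ _))
  rw [← Finset.coe_insert, Finset.coe_subset] at ht
  by_cases hit : i ∈ t
  · rw [← Finset.insert_erase hit]
    exact hi _ (Finset.mem_powerset.2 (Finset.subset_insert_iff.1 ht)) (Finset.notMem_erase i t)
  · exact hG.prop t (Finset.coe_subset.2 ((Finset.subset_insert_iff_of_notMem hit).1 ht))

theorem exists_ultrafilter_eventually_disjoint (𝒲 : Set (Set α)) (A : ι → Set α)
    (h : ¬∃ 𝒯 ⊆ 𝒲, 𝒯.Finite ∧ ∀ i, ∃ W ∈ 𝒯, (A i ∩ W).Nonempty) :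
    ∃ 𝒰 : Ultrafilter ι, ∀ W ∈ 𝒲, ∀ᶠ i in 𝒰, Disjoint (A i) W := by
  push Not at h
  obtain ⟨𝒰, h𝒰⟩ := Ultrafilter.exists_ultrafilter_of_finite_inter_nonempty
    ((fun W => {i | Disjoint (A i) W}) '' 𝒲) fun T hT => by
      classical
      obtain ⟨𝒯, h𝒯𝒲, rfl⟩ := Finset.subset_set_image_iff.1 hT
      obtain ⟨i, hi⟩ := h 𝒯 h𝒯𝒲 𝒯.finite_toSet
      exact ⟨i, by simpa [disjoint_iff_inter_eq_empty] using hi⟩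
  exact ⟨𝒰, fun W hW => h𝒰 (mem_image_of_mem _ hW)⟩

end Filter

section AvoidsSubspaces

variable {K V ι : Type*} [Field K] [AddCommGroup V] [Module K V] {l : Filter ι} {A : ι → Set V}
  {x : ι → V} {n : ℕ}

variable (K) in
/-- The filter `l` avoids the subspaces of dimension at most `n`: each of them is eventually
disjoint from the sets `A i`. -/
def AvoidsSubspaces (l : Filter ι) (A : ι → Set V) (n : ℕ) : Prop :=
  ∀ W : Submodule K V, finrank K W ≤ n → ∀ᶠ i in l, Disjoint (A i) W

namespace AvoidsSubspaces

theorem eventually_notMem (hA : AvoidsSubspaces K l A n) (hxA : ∀ i, x i ∈ A i)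
    {W : Submodule K V} (hW : finrank K W ≤ n) : ∀ᶠ i in l, x i ∉ W :=
  (hA W hW).mono fun i hi => disjoint_left.1 hi (hxA i)

theorem le_cofinite (hA : AvoidsSubspaces K l A n) (hxA : ∀ i, x i ∈ A i) (hn : 1 ≤ n) :
    l ≤ cofinite := by
  refine le_cofinite_iff_eventually_ne.2 fun j => ?_
  filter_upwards [hA.eventually_notMem hxA (W := span K {x j})
    (((finrank_span_le_card _).trans_eq (by simp)).trans hn)]
  rintro i hi rfl
  exact hi (mem_span_singleton_self _)

theorem eventually_indepMod_singleton (hA : AvoidsSubspaces K l A n) {W : Submodule K V}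
    (hW : finrank K W ≤ n) : ∀ᶠ i in l, IndepMod W A {i} :=
  (hA W hW).mono fun i hi p hp => .singleton (by simpa using disjoint_left.1 hi (hp i))

end AvoidsSubspaces

end AvoidsSubspaces

section Normed

variable {V ι : Type*} [NormedAddCommGroup V] [NormedSpace ℝ V]

theorem norm_normalize_le_one (v : V) : ‖NormedSpace.normalize v‖ ≤ 1 := by
  rw [NormedSpace.normalize, norm_smul, norm_inv, norm_norm]
  exact inv_mul_le_one

theorem norm_sub_add_smul_le {y c w : V} {s : ℝ} (hs : 0 ≤ s) (hsy : s ≤ ‖y‖) :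
    ‖y - (c + s • w)‖ ≤ ‖y‖ - s + s * ‖NormedSpace.normalize y - w‖ + ‖c‖ := by
  set u := NormedSpace.normalize y
  have hdecomp : y - (c + s • w) = (‖y‖ - s) • u + s • (u - w) - c := by
    rw [sub_smul, norm_smul_normalize]
    module
  calc ‖y - (c + s • w)‖ ≤ (‖y‖ - s) * ‖u‖ + s * ‖u - w‖ + ‖c‖ := by
        rw [hdecomp, ← norm_smul_of_nonneg (sub_nonneg.2 hsy), ← norm_smul_of_nonneg hs]
        exact (norm_sub_le _ _).trans (add_le_add_left (norm_add_le _ _) _)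
    _ ≤ ‖y‖ - s + s * ‖u - w‖ + ‖c‖ := by
        gcongr
        exact mul_le_of_le_one_right (sub_nonneg.2 hsy) (norm_normalize_le_one y)

theorem eventually_linearIndepOn_and_notMem_span {A : ι → Set V} (hA : ∀ i, IsCompact (A i))
    {t : Set ι} (ht : t.Finite) {w : V}
    (h : ∀ q : ι → V, (∀ i, q i ∈ A i) → LinearIndepOn ℝ q t ∧ w ∉ span ℝ (q '' t)) :
    ∀ᶠ z in 𝓝 w, ∀ q : ι → V, (∀ i, q i ∈ A i) →
      LinearIndepOn ℝ q t ∧ z ∉ span ℝ (q '' t) := by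
  have := ht.to_subtype
  simp only [LinearIndepOn, image_eq_range, ← linearIndependent_option',
    ← mem_univ_pi (t := A)] at h ⊢
  have hcont : Continuous fun (zq : V × (ι → V)) (o : Option t) =>
      (o.casesOn' zq.1 fun i => zq.2 i : V) :=
    continuous_pi fun o => by cases o <;> simp only [Option.casesOn'] <;> fun_prop
  exact (isCompact_univ_pi hA).eventually_forall_of_forall_eventually fun q hq =>
    (isOpen_setOfPred_linearIndependent.preimage hcont).mem_nhds (h q hq)

theorem IndepMod.eventually_insert {W W' : Submodule ℝ V} [IsClosed (W : Set V)] (hWW' : W ≤ W')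
    {v : V} (hvW' : v ∈ W') (hvW : v ∉ W) {A : ι → Set V} (hA : ∀ i, IsCompact (A i))
    {t : Set ι} (ht : t.Finite) (hindep : IndepMod W' A t) {l : Filter ι} {s : ι → ℝ}
    (hlim : Tendsto (fun i => (fun a => s i • W.mkQ a) '' A i) l (𝓝 (W.mkQ v)).smallSets) :
    ∀ᶠ i in l, i ∉ t → IndepMod W A (insert i t) := by
  have hnear := eventually_linearIndepOn_and_notMem_span (A := fun i => W.mkQ '' A i)
    (w := W.mkQ v) (fun i => (hA i).image W.mkQL.continuous) ht fun q hq => by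
      choose p hpA hpq using hq
      obtain rfl : (fun i => W.mkQ (p i)) = q := funext hpq
      have hp := hindep p hpA
      exact ⟨linearIndepOn_mkQ_of_le hWW' hp, mkQ_notMem_span_image_of_le hWW' hvW' hvW hp⟩
  filter_upwards [tendsto_smallSets_iff.1 hlim _ hnear] with i hi hit p hp
  obtain ⟨hindep, hnotMem⟩ := hi (mem_image_of_mem _ (hp i)) _ fun j => mem_image_of_mem _ (hp j)
  exact (linearIndepOn_insert hit).2 ⟨hindep, fun h => hnotMem (smul_mem _ _ h)⟩

end Normed

section Slice

variable {V : Type*} [NormedAddCommGroup V] [NormedSpace ℝ V] {e : V →L[ℝ] ℝ}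
  {W W' : Submodule ℝ V} {a x : V} {r : ℝ}

/-- The part of the closed ball of centre `x` and radius `r` that lies in the affine hyperplane
`e = 1`. Identifying this hyperplane with an affine space turns balls of that space into slices, and
flats of dimension `k` into linear subspaces of dimension `k + 1`. -/
def slice (e : V →L[ℝ] ℝ) (x : V) (r : ℝ) : Set V :=
  Metric.closedBall x r ∩ {v | e v = 1}

theorem isCompact_slice [ProperSpace V] (e : V →L[ℝ] ℝ) (x : V) (r : ℝ) :
    IsCompact (slice e x r) :=
  (isCompact_closedBall x r).inter_right (isClosed_eq e.continuous continuous_const)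

theorem mem_slice_self (hx : e x = 1) (hr : 0 ≤ r) : x ∈ slice e x r :=
  ⟨Metric.mem_closedBall_self hr, hx⟩

theorem norm_mkQ_sub_le_of_mem_slice (ha : a ∈ slice e x r) : ‖W.mkQ a - W.mkQ x‖ ≤ r := by
  rw [← map_sub]
  exact (Submodule.Quotient.norm_mk_le W _).trans (mem_closedBall_iff_norm.1 ha.1)

theorem exists_norm_sub_lt_of_norm_mkQ_sub_lt {b : V} (h : ‖W.mkQ x - W.mkQ b‖ < r) :
    ∃ z, z - b ∈ W ∧ ‖z - x‖ < r := by
  rw [← map_sub] at h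
  obtain ⟨m, hm, hmr⟩ := QuotientAddGroup.norm_lt_iff.1 h
  refine ⟨x - m, ?_, by simpa using hmr⟩
  have hmW : x - b - m ∈ W := (Submodule.Quotient.eq W).1 hm.symm
  rwa [sub_right_comm]

theorem le_norm_mkQ_sub_of_disjoint_slice (hWe : W ≤ e.ker) (hWW' : W ≤ W') (ha : e a = 1)
    (haW' : a ∈ W') (hdisj : Disjoint (slice e x r) W') : r ≤ ‖W.mkQ x - W.mkQ a‖ := by
  by_contra! h
  obtain ⟨z, hzW, hzx⟩ := exists_norm_sub_lt_of_norm_mkQ_sub_lt h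
  have hez : e z = 1 := by
    have := LinearMap.mem_ker.1 (hWe hzW)
    simp_all [sub_eq_zero]
  refine disjoint_left.1 hdisj ⟨mem_closedBall_iff_norm.2 hzx.le, hez⟩ ?_
  simpa using add_mem (hWW' hzW) haW'

theorem le_mul_norm_mkQ_of_disjoint_slice (hx : e x = 1) (ha : e a = 1) (haW : a ∈ W)
    (hdisj : Disjoint (slice e x r) W) : r ≤ (1 + ‖e‖ * ‖a‖) * ‖W.mkQ x‖ := by
  by_contra! h
  obtain ⟨z, hzW, hzx⟩ := exists_norm_sub_lt_of_norm_mkQ_sub_lt (W := W) (x := x) (b := 0)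
    (r := r / (1 + ‖e‖ * ‖a‖)) (by rwa [map_zero, sub_zero, lt_div_iff₀' (by positivity)])
  rw [sub_zero] at hzW
  -- Sliding `z` along `a` inside `W` brings it back to the hyperplane `e = 1`.
  have hz : z - e (z - x) • a ∈ slice e x r := by
    refine ⟨?_, by simp [ha, hx]⟩
    rw [mem_closedBall_iff_norm, sub_right_comm]
    calc ‖z - x - e (z - x) • a‖ ≤ ‖z - x‖ + ‖e (z - x)‖ * ‖a‖ := by
          rw [← norm_smul]; exact norm_sub_le _ _
      _ ≤ ‖z - x‖ + ‖e‖ * ‖z - x‖ * ‖a‖ := by gcongr; exact e.le_opNorm _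
      _ = (1 + ‖e‖ * ‖a‖) * ‖z - x‖ := by ring
      _ ≤ r := ((lt_div_iff₀' (by positivity)).1 hzx).le
  exact disjoint_left.1 hdisj hz (sub_mem hzW (smul_mem _ _ haW))

end Slice

section LimitDirection

variable {V ι : Type*} [NormedAddCommGroup V] [NormedSpace ℝ V] [FiniteDimensional ℝ V]
  {𝒰 : Ultrafilter ι} {x : ι → V} {W : Submodule ℝ V}

local instance isClosed_submodule (W : Submodule ℝ V) : IsClosed (W : Set V) :=
  W.closed_of_finiteDimensional

/-- The limit along `𝒰` of the directions of the vectors `x i` modulo `W`; it exists because the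
unit ball of the quotient is compact. -/
noncomputable def limitDirection (𝒰 : Ultrafilter ι) (x : ι → V) (W : Submodule ℝ V) : V ⧸ W :=
  limUnder 𝒰 fun i => NormedSpace.normalize (W.mkQ (x i))

theorem tendsto_normalize_limitDirection (𝒰 : Ultrafilter ι) (x : ι → V) (W : Submodule ℝ V) :
    Tendsto (fun i => NormedSpace.normalize (W.mkQ (x i))) 𝒰 (𝓝 (limitDirection 𝒰 x W)) := by
  have hball : ∀ i, NormedSpace.normalize (W.mkQ (x i)) ∈ Metric.closedBall (0 : V ⧸ W) 1 :=
    fun i => mem_closedBall_zero_iff.2 (norm_normalize_le_one _)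
  obtain ⟨w, -, hw⟩ := (isCompact_closedBall (0 : V ⧸ W) 1).ultrafilter_le_nhds
    (𝒰.map fun i => NormedSpace.normalize (W.mkQ (x i)))
    (le_principal_iff.2 <| mem_map.2 <| univ_mem' hball)
  exact tendsto_nhds_limUnder ⟨w, hw⟩

theorem norm_limitDirection (hx : ∀ᶠ i in 𝒰, x i ∉ W) : ‖limitDirection 𝒰 x W‖ = 1 := by
  refine tendsto_nhds_unique (tendsto_normalize_limitDirection 𝒰 x W).norm
    (tendsto_const_nhds.congr' ?_)
  filter_upwards [hx] with i hi
  exact (norm_normalize_eq_one_iff.2 (by simpa using hi)).symm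

/-- The subspace spanned by `W` and the limit direction of the vectors `x i` modulo `W`. -/
noncomputable def adjoinLimit (𝒰 : Ultrafilter ι) (x : ι → V) (W : Submodule ℝ V) :
    Submodule ℝ V :=
  (span ℝ {limitDirection 𝒰 x W}).comap W.mkQ

theorem le_adjoinLimit : W ≤ adjoinLimit 𝒰 x W :=
  le_comap_mkQ _ _

theorem mem_adjoinLimit {v : V} (hv : W.mkQ v = limitDirection 𝒰 x W) : v ∈ adjoinLimit 𝒰 x W :=
  mem_comap.2 (hv ▸ mem_span_singleton_self _)

theorem finrank_adjoinLimit_le : finrank ℝ (adjoinLimit 𝒰 x W) ≤ finrank ℝ W + 1 := by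
  obtain ⟨v, hv⟩ := W.mkQ_surjective (limitDirection 𝒰 x W)
  rw [adjoinLimit, ← hv, ← image_singleton, ← map_span, comap_map_mkQ]
  exact finrank_sup_span_singleton_le_s14 W v

theorem mkQ_adjoinLimit_isLittleO :
    (fun i => (adjoinLimit 𝒰 x W).mkQ (x i)) =o[𝒰] fun i => W.mkQ (x i) := by
  set π := factor (le_adjoinLimit (𝒰 := 𝒰) (x := x) (W := W))
  have hπ : π (limitDirection 𝒰 x W) = 0 := by
    obtain ⟨v, hv⟩ := W.mkQ_surjective (limitDirection 𝒰 x W)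
    rw [← hv]
    exact (Submodule.Quotient.mk_eq_zero _).2 (mem_adjoinLimit hv)
  have hlim : Tendsto (fun i => π (NormedSpace.normalize (W.mkQ (x i)))) 𝒰 (𝓝 0) := by
    rw [← hπ]
    exact (π.continuous_of_finiteDimensional.tendsto _).comp
      (tendsto_normalize_limitDirection 𝒰 x W)
  have hfactor : ∀ i, (adjoinLimit 𝒰 x W).mkQ (x i) =
      ‖W.mkQ (x i)‖ • π (NormedSpace.normalize (W.mkQ (x i))) := fun i => by
    rw [← map_smul, norm_smul_normalize]
    rfl
  refine isLittleO_norm_norm.1 ?_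
  simpa [hfactor, norm_smul] using (isBigO_refl (fun i => ‖W.mkQ (x i)‖) 𝒰).mul_isLittleO
    ((isLittleO_one_iff ℝ).2 hlim).norm_left

/-- The flag obtained from `0` by repeatedly adjoining a limit direction of the vectors `x i`. -/
noncomputable def limitFlag (𝒰 : Ultrafilter ι) (x : ι → V) : ℕ → Submodule ℝ V
  | 0 => ⊥
  | n + 1 => adjoinLimit 𝒰 x (limitFlag 𝒰 x n)

theorem finrank_limitFlag_le (n : ℕ) : finrank ℝ (limitFlag 𝒰 x n) ≤ n := by
  induction n with
  | zero => exact (finrank_bot ℝ V).le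
  | succ n ih => exact finrank_adjoinLimit_le.trans (Nat.succ_le_succ ih)

variable {e : V →L[ℝ] ℝ} {r : ι → ℝ} {W' : Submodule ℝ V}

theorem radius_isLittleO_mkQ (hx : ∀ i, e (x i) = 1) (hr : ∀ i, 0 ≤ r i)
    (hWW' : adjoinLimit 𝒰 x W ≤ W') (hW' : ¬W' ≤ e.ker)
    (hdisj : ∀ᶠ i in 𝒰, Disjoint (slice e (x i) (r i)) W') :
    r =o[𝒰] fun i => W.mkQ (x i) := by
  obtain ⟨a, haW', ha⟩ : ∃ a ∈ W', e a = 1 := by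
    obtain ⟨b, hbW', hb⟩ := SetLike.not_le_iff_exists.1 hW'
    exact ⟨(e b)⁻¹ • b, smul_mem _ _ hbW', by simpa using inv_mul_cancel₀ hb⟩
  have hrW' : r =O[𝒰] fun i => W'.mkQ (x i) := by
    refine .of_bound (1 + ‖e‖ * ‖a‖) (hdisj.mono fun i hi => ?_)
    rw [Real.norm_of_nonneg (hr i)]
    exact le_mul_norm_mkQ_of_disjoint_slice (hx i) ha haW' hi
  have hfactor : (fun i => W'.mkQ (x i)) =O[𝒰] fun i => (adjoinLimit 𝒰 x W).mkQ (x i) :=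
    (factor hWW').toContinuousLinearMap.isBigO_comp (fun i => (adjoinLimit 𝒰 x W).mkQ (x i)) 𝒰
  exact (hrW'.trans hfactor).trans_isLittleO mkQ_adjoinLimit_isLittleO

theorem tendsto_image_slice_limitDirection (hr : r =o[𝒰] fun i => W.mkQ (x i)) :
    Tendsto (fun i => (fun a => ‖W.mkQ (x i)‖⁻¹ • W.mkQ a) '' slice e (x i) (r i)) 𝒰
      (𝓝 (limitDirection 𝒰 x W)).smallSets := by
  have hradius : Tendsto (fun i => r i / ‖W.mkQ (x i)‖ +
      dist (NormedSpace.normalize (W.mkQ (x i))) (limitDirection 𝒰 x W)) 𝒰 (𝓝 0) := by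
    simpa using hr.norm_right.tendsto_div_nhds_zero.add
      (tendsto_iff_dist_tendsto_zero.1 (tendsto_normalize_limitDirection 𝒰 x W))
  refine ((tendsto_closedBall_smallSets _).comp hradius).smallSets_mono (.of_forall fun i => ?_)
  rintro _ ⟨a, ha, rfl⟩
  refine (dist_triangle _ (NormedSpace.normalize (W.mkQ (x i))) _).trans (add_le_add_left ?_ _)
  rw [NormedSpace.normalize, dist_eq_norm, ← smul_sub, norm_smul, norm_inv, norm_norm,
    div_eq_inv_mul]
  gcongr
  exact norm_mkQ_sub_le_of_mem_slice ha

theorem eventually_indepMod_insert_of_isLittleO {t : Set ι} (ht : t.Finite)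
    (hr : r =o[𝒰] fun i => W.mkQ (x i)) (hx : ∀ᶠ i in 𝒰, x i ∉ W)
    (hindep : IndepMod (adjoinLimit 𝒰 x W) (fun i => slice e (x i) (r i)) t) :
    ∀ᶠ i in 𝒰, i ∉ t → IndepMod W (fun i => slice e (x i) (r i)) (insert i t) := by
  obtain ⟨v, hv⟩ := W.mkQ_surjective (limitDirection 𝒰 x W)
  have hvW : v ∉ W := fun h => by
    have hzero : limitDirection 𝒰 x W = 0 := by rw [← hv]; simpa using h
    simpa [hzero] using norm_limitDirection hx
  exact hindep.eventually_insert le_adjoinLimit (mem_adjoinLimit hv) hvW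
    (fun i => isCompact_slice e (x i) (r i)) ht (hv ▸ tendsto_image_slice_limitDirection hr)

theorem tendsto_norm_mkQ_atTop (hx : ∀ i, e (x i) = 1) (hWe : adjoinLimit 𝒰 x W ≤ e.ker) :
    Tendsto (fun i => ‖W.mkQ (x i)‖) 𝒰 atTop := by
  have hlift : (fun i => e (x i)) =O[𝒰] fun i => (adjoinLimit 𝒰 x W).mkQ (x i) :=
    (liftQ _ e.toLinearMap hWe).toContinuousLinearMap.isBigO_comp
      (fun i => (adjoinLimit 𝒰 x W).mkQ (x i)) 𝒰
  simp only [hx] at hlift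
  exact (isLittleO_one_left_iff ℝ).1 (hlift.trans_isLittleO mkQ_adjoinLimit_isLittleO)

-- With `v` a lift of the limit direction, the slices miss `W ⊔ span {x j + s • v}`; since they move
-- off in the direction `v`, this keeps them at distance about `s / 2` from the origin modulo `W`.
theorem eventually_lt_norm_mkQ_of_mem_slice (hx : ∀ i, e (x i) = 1)
    (hWe : adjoinLimit 𝒰 x W ≤ e.ker) {n : ℕ} (hW : finrank ℝ W + 1 ≤ n)
    (hA : AvoidsSubspaces ℝ 𝒰 (fun i => slice e (x i) (r i)) n) {R : ℝ} (hR : 0 ≤ R) :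
    ∀ᶠ i in 𝒰, ∀ a ∈ slice e (x i) (r i), R < ‖W.mkQ a‖ := by
  obtain ⟨j⟩ := nonempty_of_neBot (𝒰 : Filter ι)
  obtain ⟨v, hv⟩ := W.mkQ_surjective (limitDirection 𝒰 x W)
  have hev : e v = 0 := hWe (mem_adjoinLimit hv)
  set s := 2 * (R + ‖x j‖ + 1)
  set b := x j + s • v
  have hs : 0 ≤ s := by positivity
  filter_upwards [hA (W ⊔ span ℝ {b}) ((finrank_sup_span_singleton_le_s14 W b).trans hW),
    (tendsto_norm_mkQ_atTop hx hWe).eventually_ge_atTop s,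
    (tendsto_normalize_limitDirection 𝒰 x W).eventually (Metric.ball_mem_nhds _ one_half_pos)]
    with i hdisj hsi hdir a ha
  have hri : r i ≤ ‖W.mkQ (x i) - W.mkQ b‖ :=
    le_norm_mkQ_sub_of_disjoint_slice (le_adjoinLimit.trans hWe) le_sup_left (by simp [b, hx, hev])
      (le_sup_right (a := W) (mem_span_singleton_self b)) hdisj
  have hdist : ‖W.mkQ (x i) - W.mkQ b‖ ≤ ‖W.mkQ (x i)‖ - s + s / 2 + ‖x j‖ := by
    calc ‖W.mkQ (x i) - W.mkQ b‖
        = ‖W.mkQ (x i) - (W.mkQ (x j) + s • limitDirection 𝒰 x W)‖ := by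
          rw [← hv, map_add, map_smul]
      _ ≤ ‖W.mkQ (x i)‖ - s + s * ‖NormedSpace.normalize (W.mkQ (x i)) - limitDirection 𝒰 x W‖ +
            ‖W.mkQ (x j)‖ := norm_sub_add_smul_le hs hsi
      _ ≤ ‖W.mkQ (x i)‖ - s + s * (1 / 2) + ‖x j‖ := by
          gcongr
          · exact (mem_ball_iff_norm.1 hdir).le
          · exact Submodule.Quotient.norm_mk_le W _
      _ = ‖W.mkQ (x i)‖ - s + s / 2 + ‖x j‖ := by ring
  have hai := norm_sub_norm_le (W.mkQ (x i)) (W.mkQ a)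
  rw [norm_sub_rev] at hai
  linarith [norm_mkQ_sub_le_of_mem_slice (W := W) ha]

theorem eventually_indepMod_pair (hx : ∀ i, e (x i) = 1) (hr : ∀ i, 0 ≤ r i)
    (hWe : adjoinLimit 𝒰 x W ≤ e.ker) {n : ℕ} (hW : finrank ℝ W + 1 ≤ n)
    (hA : AvoidsSubspaces ℝ 𝒰 (fun i => slice e (x i) (r i)) n) (j : ι) :
    ∀ᶠ i in 𝒰, IndepMod W (fun i => slice e (x i) (r i)) {i, j} := by
  have hfar := eventually_lt_norm_mkQ_of_mem_slice hx hWe hW hA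
    (add_nonneg (norm_nonneg (x j)) (hr j))
  filter_upwards [hfar] with i hi p hp
  have hlift : ∀ l, W.liftQ e.toLinearMap (le_adjoinLimit.trans hWe) (W.mkQ (p l)) = 1 :=
    fun l => (hp l).2
  refine linearIndepOn_pair_of_map_eq_one _ (hlift i) (hlift j) fun hij => ?_
  have hpj : ‖W.mkQ (p j)‖ ≤ ‖x j‖ + r j := (Submodule.Quotient.norm_mk_le W _).trans
    (norm_le_of_mem_closedBall (hp j).1)
  exact (hi _ (hp i)).not_ge (hij ▸ hpj)

theorem eventually_indepMod_limitFlag_insert [DecidableEq ι] (hx : ∀ i, e (x i) = 1)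
    (hr : ∀ i, 0 ≤ r i) {n : ℕ} {t : Finset ι}
    (hA : AvoidsSubspaces ℝ 𝒰 (fun i => slice e (x i) (r i)) (n + t.card))
    (ht : IndepMod (limitFlag 𝒰 x (n + 1)) (fun i => slice e (x i) (r i)) t) :
    ∀ᶠ i in 𝒰, i ∉ t →
      IndepMod (limitFlag 𝒰 x n) (fun i => slice e (x i) (r i)) (insert i t : Finset ι) := by
  have hflag : finrank ℝ (limitFlag 𝒰 x n) ≤ n := finrank_limitFlag_le n
  have hstep : ∀ W' : Submodule ℝ V, adjoinLimit 𝒰 x (limitFlag 𝒰 x n) ≤ W' →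
      finrank ℝ W' ≤ n + t.card → ¬W' ≤ e.ker → ∀ᶠ i in 𝒰, i ∉ t →
        IndepMod (limitFlag 𝒰 x n) (fun i => slice e (x i) (r i)) (insert i t : Finset ι) :=
    fun W' hle hW' hWe => by
      simpa only [Finset.coe_insert, Finset.mem_coe] using
        eventually_indepMod_insert_of_isLittleO t.finite_toSet
          (radius_isLittleO_mkQ hx hr hle hWe (hA W' hW'))
          (hA.eventually_notMem (fun i => mem_slice_self (hx i) (hr i))
            (hflag.trans (Nat.le_add_right _ _))) ht
  obtain hcard | hcard | hcard : t.card = 0 ∨ t.card = 1 ∨ 2 ≤ t.card := by omega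
  · obtain rfl := Finset.card_eq_zero.1 hcard
    exact (hA.eventually_indepMod_singleton (hflag.trans (Nat.le_add_right _ _))).mono
      fun i hi _ => by simpa using hi
  · obtain ⟨j, rfl⟩ := Finset.card_eq_one.1 hcard
    by_cases hWe : adjoinLimit 𝒰 x (limitFlag 𝒰 x n) ≤ e.ker
    · exact (eventually_indepMod_pair hx hr hWe (Nat.succ_le_succ hflag) hA j).mono
        fun i hi _ => by simpa only [Finset.coe_insert, Finset.coe_singleton] using hi
    · exact hstep _ le_rfl (finrank_limitFlag_le (n + 1)) hWe
  · obtain ⟨j, -⟩ := Finset.card_pos.1 (by omega : 0 < t.card)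
    refine hstep (limitFlag 𝒰 x (n + 1) ⊔ span ℝ {x j}) le_sup_left ?_ fun hWe => ?_
    · have := finrank_sup_span_singleton_le_s14 (limitFlag 𝒰 x (n + 1)) (x j)
      have := finrank_limitFlag_le (𝒰 := 𝒰) (x := x) (n + 1)
      omega
    · have : e (x j) = 0 := hWe (le_sup_right (a := limitFlag 𝒰 x (n + 1))
        (mem_span_singleton_self (x j)))
      simp [hx] at this

theorem exists_infinite_forall_indepMod_bot (hx : ∀ i, e (x i) = 1) (hr : ∀ i, 0 ≤ r i) {n : ℕ}
    (hn : 1 ≤ n) (hA : AvoidsSubspaces ℝ 𝒰 (fun i => slice e (x i) (r i)) n) :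
    ∃ G : Set ι, G.Infinite ∧ ∀ t : Finset ι, (t : Set ι) ⊆ G → t.card = n + 1 →
      IndepMod (⊥ : Submodule ℝ V) (fun i => slice e (x i) (r i)) t := by
  classical
  let P : Finset ι → Prop := fun t => ∀ m, m + t.card = n + 1 →
    IndepMod (limitFlag 𝒰 x m) (fun i => slice e (x i) (r i)) t
  have hempty : P ∅ := fun m _ p _ => by simp
  have hinsert : ∀ t, P t → ∀ᶠ i in 𝒰, i ∉ t → P (insert i t) := fun t ht => by
    simp only [P]
    obtain hcard | hcard := le_or_gt t.card n
    · obtain ⟨m, rfl⟩ := Nat.exists_eq_add_of_le' hcard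
      filter_upwards [eventually_indepMod_limitFlag_insert hx hr hA (ht (m + 1) (by omega))]
        with i hi hit l hl
      rw [Finset.card_insert_of_notMem hit] at hl
      obtain rfl : l = m := by omega
      exact hi hit
    · refine .of_forall fun i hit l hl => ?_
      rw [Finset.card_insert_of_notMem hit] at hl
      omega
  have hcofinite : (𝒰 : Filter ι) ≤ cofinite :=
    hA.le_cofinite (fun i => mem_slice_self (hx i) (hr i)) hn
  obtain ⟨G, hG, hGindep⟩ :=
    exists_infinite_forall_finset_of_eventually_insert hcofinite hempty hinsert
  exact ⟨G, hG, fun t htG hcard => hGindep t htG 0 (by omega)⟩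

end LimitDirection

section Flat

variable {E : Type*} [NormedAddCommGroup E] [NormedSpace ℝ E] {k : ℕ}

/-- A `k`-flat: a translate of a linear subspace of dimension `k`. -/
def IsFlat (k : ℕ) (Q : Set E) : Prop :=
  ∃ (p : E) (U : Submodule ℝ E), finrank ℝ U = k ∧ Q = (fun u => p + u) '' (U : Set E)

theorem exists_isFlat_of_finrank_le [FiniteDimensional ℝ E] (hk : k ≤ finrank ℝ E)
    {W : Submodule ℝ (ℝ × E)} (hW : finrank ℝ W ≤ k + 1) :
    ∃ Q : Set E, IsFlat k Q ∧ ∀ y, ((1 : ℝ), y) ∈ W → y ∈ Q := by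
  by_cases h : ∃ p, ((1 : ℝ), p) ∈ W
  · obtain ⟨p, hp⟩ := h
    set U := W.comap (LinearMap.inr ℝ ℝ E)
    have hUW : U.map (LinearMap.inr ℝ ℝ E) < W := by
      refine (map_comap_le _ _).lt_of_not_ge fun hle => ?_
      obtain ⟨u, -, hu⟩ := hle hp
      simpa using congrArg Prod.fst hu
    have hU : finrank ℝ U ≤ k := by
      have := finrank_lt_finrank_of_lt hUW
      rw [← (equivMapOfInjective _ LinearMap.inr_injective U).finrank_eq] at this
      omega
    obtain ⟨U', hUU', hU'⟩ := exists_le_finrank_eq_s14 U hU hk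
    refine ⟨_, ⟨p, U', hU', rfl⟩, fun y hy => ⟨y - p, hUU' ?_, add_sub_cancel p y⟩⟩
    simpa [U] using sub_mem hy hp
  · obtain ⟨U, -, hU⟩ := exists_le_finrank_eq_s14 (⊥ : Submodule ℝ E) (by simp) hk
    exact ⟨_, ⟨0, U, hU, rfl⟩, fun y hy => (h ⟨y, hy⟩).elim⟩

theorem IsFlat.exists_submodule [FiniteDimensional ℝ E] {Q : Set E} (hQ : IsFlat k Q) :
    ∃ W : Submodule ℝ (ℝ × E), finrank ℝ W ≤ k + 1 ∧ ∀ y ∈ Q, ((1 : ℝ), y) ∈ W := by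
  obtain ⟨p, U, rfl, rfl⟩ := hQ
  refine ⟨U.map (LinearMap.inr ℝ ℝ E) ⊔ span ℝ {(1, p)},
    (finrank_sup_span_singleton_le_s14 _ _).trans (Nat.succ_le_succ (finrank_map_le _ _)), ?_⟩
  rintro _ ⟨u, hu, rfl⟩
  exact mem_sup.2 ⟨(0, u), mem_map_of_mem hu, (1, p), mem_span_singleton_self _,
    by simp [add_comm]⟩

theorem slice_fst (c : E) (r : ℝ) :
    slice (ContinuousLinearMap.fst ℝ ℝ E) (1, c) r = {1} ×ˢ Metric.closedBall c r := by
  ext ⟨s, y⟩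
  simp only [slice, mem_inter_iff, Metric.mem_closedBall, Prod.dist_eq, max_le_iff, mem_ofPred_eq,
    ContinuousLinearMap.coe_fst', mem_prod, mem_singleton_iff]
  constructor
  · rintro ⟨⟨-, hy⟩, hs⟩
    exact ⟨hs, hy⟩
  · rintro ⟨rfl, hy⟩
    exact ⟨⟨(dist_self _).trans_le (dist_nonneg.trans hy), hy⟩, rfl⟩

theorem avoidsSubspaces_slice_fst [FiniteDimensional ℝ E] (hk : k ≤ finrank ℝ E) {ι : Type*}
    {l : Filter ι} {c : ι → E} {r : ι → ℝ}
    (hdisj : ∀ Q : Set E, IsFlat k Q → ∀ᶠ i in l, Disjoint (Metric.closedBall (c i) (r i)) Q) :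
    AvoidsSubspaces ℝ l (fun i => slice (ContinuousLinearMap.fst ℝ ℝ E) (1, c i) (r i))
      (k + 1) := fun W hW => by
  obtain ⟨Q, hQ, hWQ⟩ := exists_isFlat_of_finrank_le hk hW
  filter_upwards [hdisj Q hQ] with i hi
  rw [slice_fst, disjoint_left]
  rintro ⟨_, y⟩ ⟨rfl, hy⟩ hyW
  exact disjoint_left.1 hi hy (hWQ y hyW)

theorem not_isFlat_of_indepMod_bot [FiniteDimensional ℝ E] {ι : Type*} {c : ι → E} {r : ι → ℝ}
    (hr : ∀ i, 0 ≤ r i) {t : Finset ι} (ht : t.card = k + 2)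
    (hindep : IndepMod (⊥ : Submodule ℝ (ℝ × E))
      (fun i => slice (ContinuousLinearMap.fst ℝ ℝ E) (1, c i) (r i)) t)
    {Q : Set E} (hQt : ∀ i ∈ t, (Metric.closedBall (c i) (r i) ∩ Q).Nonempty) : ¬IsFlat k Q :=
  fun hQ => by
  obtain ⟨W, hW, hQW⟩ := hQ.exists_submodule
  have hcard := hindep.card_le_finrank (W := W) (fun i => ⟨_, mem_slice_self rfl (hr i)⟩)
    fun i hi => by
      obtain ⟨y, hy, hyQ⟩ := hQt i hi
      exact ⟨(1, y), by simpa [slice_fst] using hy, hQW y hyQ⟩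
  omega

end Flat

theorem stmt_14_general {E : Type*} [NormedAddCommGroup E] [NormedSpace ℝ E]
    [FiniteDimensional ℝ E] {k : ℕ} (hk : k ≤ finrank ℝ E) (F : Set (Set E))
    (hball : ∀ A ∈ F, ∃ x r, 0 ≤ r ∧ A = Metric.closedBall x r)
    (hyp : ∀ G ⊆ F, G.Infinite → ∃ T : Finset (Set E), ↑T ⊆ G ∧ T.card = k + 2 ∧
      ∃ W : Set E, IsFlat k W ∧ ∀ A ∈ T, (A ∩ W).Nonempty) :
    ∃ (n : ℕ) (W : Fin n → Set E), (∀ m, IsFlat k (W m)) ∧ ∀ A ∈ F, ∃ m, (A ∩ W m).Nonempty := by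
  suffices ∃ 𝒲 ⊆ {Q : Set E | IsFlat k Q}, 𝒲.Finite ∧ ∀ A : F, ∃ W ∈ 𝒲, (A.1 ∩ W).Nonempty by
    obtain ⟨𝒲, hflat, hfin, hhit⟩ := this
    obtain ⟨n, W, rfl⟩ := hfin.fin_embedding
    exact ⟨n, W, fun m => hflat (mem_range_self m), fun A hA => by simpa using hhit ⟨A, hA⟩⟩
  by_contra hcover
  obtain ⟨𝒰, h𝒰⟩ := exists_ultrafilter_eventually_disjoint _ _ hcover
  choose c r hr hcr using fun A : F => hball A.1 A.2
  simp only [hcr] at h𝒰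
  obtain ⟨G, hG, hGindep⟩ := exists_infinite_forall_indepMod_bot (fun _ => rfl) hr
    (Nat.le_add_left 1 k) (avoidsSubspaces_slice_fst hk h𝒰)
  obtain ⟨T, hTG, hT, W, hW, hTW⟩ := hyp (Subtype.val '' G) (Subtype.coe_image_subset F G)
    (hG.image Subtype.val_injective.injOn)
  obtain ⟨t, htG, rfl⟩ := Finset.subset_set_image_iff.1 hTG
  rw [Finset.card_image_of_injective _ Subtype.val_injective] at hT
  refine not_isFlat_of_indepMod_bot hr hT (hGindep t htG hT) (fun i hi => ?_) hW
  rw [← hcr i]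
  exact hTW i (Finset.mem_image_of_mem _ hi)

/-- **`(ℵ₀, k+2)`-theorem of Keller–Perles for `k`-flats and balls.**
If `F` is a family of closed balls in `ℝ^d`, `0 ≤ k < d`, such that every infinite
subfamily contains `k+2` balls all intersected by a single `k`-flat, then all balls of `F`
can be hit by finitely many `k`-flats. -/
theorem stmt_14 (d k : ℕ) (hd : 1 ≤ d) (hk : k < d)
    (F : Set (Set (EuclideanSpace ℝ (Fin d))))
    (hball : ∀ A ∈ F, IsClosedBall A)
    (hyp : ∀ G ⊆ F, G.Infinite →
      ∃ T : Finset (Set (EuclideanSpace ℝ (Fin d))), ↑T ⊆ G ∧ T.card = k + 2 ∧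
        ∃ W : Set (EuclideanSpace ℝ (Fin d)), IsKFlat k W ∧
          ∀ A ∈ T, (A ∩ W).Nonempty) :
    ∃ (n : ℕ) (W : Fin n → Set (EuclideanSpace ℝ (Fin d))),
      (∀ m, IsKFlat k (W m)) ∧ ∀ A ∈ F, ∃ m, (A ∩ W m).Nonempty :=
  stmt_14_general (by simpa using hk.le) F hball hyp
end

section
/- Let d ≥ 1, let 0 ≤ k < d, and let F be a family of axis-parallel boxes in ℝ^d. Suppose that every infinite subfamily of F contains two boxes that are both intersected by a single axis-parallel k-flat. Then there exists a finite set of axis-parallel k-flats in ℝ^d such that every box of F intersects at least one of them. -/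
/-- An axis-parallel box in `ℝ^d`: a product of `d` nonempty compact intervals. -/
def IsBox {d : ℕ} (B : Set (EuclideanSpace ℝ (Fin d))) : Prop :=
  ∃ a b : Fin d → ℝ, (∀ i, a i ≤ b i) ∧ B = {x | ∀ i, x i ∈ Set.Icc (a i) (b i)}

/-- An axis-parallel `k`-flat in `ℝ^d`: the set of points whose coordinates outside some
`k`-element set `J` of coordinate indices are fixed. -/
def IsAxisParallelKFlat {d : ℕ} (k : ℕ) (W : Set (EuclideanSpace ℝ (Fin d))) : Prop :=
  ∃ (J : Finset (Fin d)) (c : Fin d → ℝ), J.card = k ∧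
    W = {x | ∀ j ∉ J, x j = c j}

/-!
By compactness of the space of ultrafilters on the family, it is enough to find, for each
ultrafilter `U`, one flat meeting `U`-almost every box. In a single coordinate, either `U`-almost
all the intervals share a point, or `U`-almost every interval is disjoint from `U`-almost every
other one. If coordinates of the second kind exist, one can choose, one box after another, an
infinite subfamily whose members are pairwise disjoint in all these coordinates at once. A flat
meeting two of its members has to be free in each of these coordinates, so translating it until its
fixed coordinates are common points gives a flat meeting `U`-almost every box.
-/

open Filter Set

section Ultrafilter

variable {β : Type*}

theorem exists_finset_forall_exists_mem_of_forall_ultrafilter {κ : Type*} (S : κ → Set β)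
    (hS : ∀ U : Ultrafilter β, ∃ w, S w ∈ U) :
    ∃ T : Finset κ, ∀ s, ∃ w ∈ T, s ∈ S w := by
  obtain ⟨T, hT⟩ := isCompact_univ.elim_finite_subcover
    (fun w => {U : Ultrafilter β | S w ∈ U}) (fun w => ultrafilter_isOpen_basic (S w))
    (fun U _ => mem_iUnion.2 (hS U))
  exact ⟨T, fun s => by simpa using hT (mem_univ (pure s))⟩

theorem exists_infinite_pairwise_of_eventually_eventually {f : Filter β} [f.NeBot]
    {r : β → β → Prop} [Std.Symm r] [Std.Irrefl r] (hr : ∀ᶠ s in f, ∀ᶠ t in f, r s t) :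
    ∃ G : Set β, G.Infinite ∧ G.Pairwise r := by
  obtain ⟨x, -, hx⟩ := exists_seq_of_forall_finset_exists' (fun s => ∀ᶠ t in f, r s t) r
    fun A hA => (hr.and ((eventually_all_finset A).2 hA)).exists
  have x_injective : Function.Injective x := fun m n hmn => by
    by_contra hne
    have x_related : r (x m) (x n) := hx hne
    exact irrefl (r := r) (x n) (hmn ▸ x_related)
  exact ⟨range x, infinite_range_of_injective x_injective, hx.range_pairwise⟩

theorem exists_eventually_mem_Icc_or_eventually_disjoint {α : Type*}
    [ConditionallyCompleteLinearOrder α] (U : Ultrafilter β) (a b : β → α) :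
    (∃ c, ∀ᶠ s in (U : Filter β), c ∈ Icc (a s) (b s)) ∨
      ∀ᶠ s in (U : Filter β), ∀ᶠ t in (U : Filter β),
        Disjoint (Icc (a s) (b s)) (Icc (a t) (b t)) := by
  refine or_iff_not_imp_left.2 fun no_common => ?_
  have missed (c : α) : ∀ᶠ t in (U : Filter β), c ∉ Icc (a t) (b t) :=
    Ultrafilter.eventually_not.2 fun h => no_common ⟨c, h⟩
  have side (c : α) :
      (∀ᶠ t in (U : Filter β), c < a t) ∨ ∀ᶠ t in (U : Filter β), b t < c := by
    rw [← Ultrafilter.eventually_or]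
    filter_upwards [missed c] with t ht
    simpa only [mem_Icc, not_and_or, not_le] using ht
  -- `sSup L` separates the points left of `U`-almost every interval from those right of it.
  let L : Set α := {c | ∀ᶠ t in (U : Filter β), c < a t}
  filter_upwards [missed (sSup L)] with s hs
  rcases side (a s) with as_mem | right_lt
  · by_cases bound : b s ∈ upperBounds L
    · exact absurd ⟨le_csSup ⟨b s, bound⟩ as_mem, csSup_le ⟨a s, as_mem⟩ bound⟩ hs
    · obtain ⟨c, hcL, hc⟩ : ∃ c ∈ L, b s < c := by simpa [upperBounds] using bound
      exact hcL.mono fun t ht => disjoint_left.2 fun _ hx hx' =>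
        (hx.2.trans hc.le).not_gt (ht.trans_le hx'.1)
  · exact right_lt.mono fun t ht => disjoint_left.2 fun _ hx hx' => (hx.1.trans hx'.2).not_gt ht

end Ultrafilter

section Coordinates

variable {ι β : Type*} {α : ι → Type*} [∀ i, ConditionallyCompleteLinearOrder (α i)]
  {a b : β → ∀ i, α i} {𝒥 : Set (Finset ι)}

theorem exists_infinite_pairwise_disjoint_Icc [Finite ι] (hab : ∀ s i, a s i ≤ b s i)
    (U : Ultrafilter β) {N : Set ι} (N_nonempty : N.Nonempty)
    (hN : ∀ i ∈ N, ¬ ∃ c, ∀ᶠ s in (U : Filter β), c ∈ Icc (a s i) (b s i)) :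
    ∃ G : Set β, G.Infinite ∧
      G.Pairwise fun s t => ∀ i ∈ N, Disjoint (Icc (a s i) (b s i)) (Icc (a t i) (b t i)) := by
  let r : β → β → Prop := fun s t =>
    ∀ i ∈ N, Disjoint (Icc (a s i) (b s i)) (Icc (a t i) (b t i))
  have : Std.Symm r := ⟨fun _ _ h i hi => (h i hi).symm⟩
  have : Std.Irrefl r := ⟨fun s h =>
    let ⟨i, hi⟩ := N_nonempty
    (nonempty_Icc.2 (hab s i)).ne_empty (disjoint_self.1 (h i hi))⟩
  have eventually_r : ∀ᶠ s in (U : Filter β), ∀ᶠ t in (U : Filter β), r s t := by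
    simp only [r, eventually_all]
    exact fun i hi =>
      (exists_eventually_mem_Icc_or_eventually_disjoint U (a · i) (b · i)).resolve_left (hN i hi)
  exact exists_infinite_pairwise_of_eventually_eventually eventually_r

theorem exists_eventually_forall_notMem_mem_Icc [Finite ι] (hab : ∀ s i, a s i ≤ b s i)
    (h𝒥 : 𝒥.Nonempty)
    (hyp : ∀ G : Set β, G.Infinite → ∃ s ∈ G, ∃ t ∈ G, s ≠ t ∧ ∃ J ∈ 𝒥, ∀ j ∉ J,
      ¬ Disjoint (Icc (a s j) (b s j)) (Icc (a t j) (b t j)))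
    (U : Ultrafilter β) :
    ∃ J ∈ 𝒥, ∃ c : ∀ i, α i, ∀ᶠ s in (U : Filter β), ∀ j ∉ J, c j ∈ Icc (a s j) (b s j) := by
  let N : Set ι := {i | ¬ ∃ c, ∀ᶠ s in (U : Filter β), c ∈ Icc (a s i) (b s i)}
  obtain ⟨J, hJ, N_subset⟩ : ∃ J ∈ 𝒥, N ⊆ J := by
    rcases N.eq_empty_or_nonempty with N_empty | N_nonempty
    · exact h𝒥.imp fun J hJ => ⟨hJ, N_empty ▸ empty_subset _⟩
    · obtain ⟨G, G_infinite, G_disjoint⟩ :=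
        exists_infinite_pairwise_disjoint_Icc hab U N_nonempty fun _ hi => hi
      obtain ⟨s, hs, t, ht, hst, J, hJ, meet⟩ := hyp G G_infinite
      exact ⟨J, hJ, fun i hi => by_contra fun hiJ => meet i hiJ (G_disjoint hs ht hst i hi)⟩
  obtain ⟨s₀⟩ : Nonempty β := U.neBot.nonempty
  have : ∀ i, Nonempty (α i) := fun i => ⟨a s₀ i⟩
  have common : ∀ j, j ∉ J → ∃ c, ∀ᶠ s in (U : Filter β), c ∈ Icc (a s j) (b s j) :=
    fun j hj => not_not.1 fun hjN => hj (N_subset hjN)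
  choose! c hc using common
  exact ⟨J, hJ, c, by simpa only [eventually_all] using hc⟩

end Coordinates

section Box

variable {ι E : Type*} {α : ι → Type*}

/-- The box with corners `a` and `b` in a space `E` with coordinate map `e`. Keeping `e` explicit
covers both dependent products and `EuclideanSpace`, which is only a copy of one. -/
def coordBox [∀ i, Preorder (α i)] (e : E → ∀ i, α i) (a b : ∀ i, α i) : Set E :=
  {x | ∀ i, e x i ∈ Icc (a i) (b i)}

/-- The axis-parallel flat through the point with coordinates `c` whose free coordinates are those
in `J`, in a space `E` with coordinate map `e`. The values of `c` on `J` are irrelevant. -/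
def coordFlat (e : E → ∀ i, α i) (J : Finset ι) (c : ∀ i, α i) : Set E :=
  {x | ∀ j ∉ J, e x j = c j}

theorem coordBox_inter_coordFlat_nonempty_iff [∀ i, Preorder (α i)] {e : E → ∀ i, α i}
    (he : e.Surjective) {a b : ∀ i, α i} (hab : ∀ i, a i ≤ b i) {J : Finset ι} {c : ∀ i, α i} :
    (coordBox e a b ∩ coordFlat e J c).Nonempty ↔ ∀ j ∉ J, c j ∈ Icc (a j) (b j) := by
  classical
  refine ⟨fun ⟨_, x_box, x_flat⟩ j hj => x_flat j hj ▸ x_box j, fun hc => ?_⟩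
  obtain ⟨x, hx⟩ := he fun i => if i ∈ J then a i else c i
  refine ⟨x, fun i => ?_, fun j hj => by simp [hx, hj]⟩
  by_cases hi : i ∈ J
  · simpa [hx, hi] using hab i
  · simpa [hx, hi] using hc i hi

/-- The `k`-flats are the case in which `𝒥` consists of the `k`-element sets of coordinates. -/
theorem stmt_15_general [Finite ι] [∀ i, ConditionallyCompleteLinearOrder (α i)]
    {e : E → ∀ i, α i} (he : e.Surjective) {𝒥 : Set (Finset ι)} (h𝒥 : 𝒥.Nonempty)
    (F : Set (Set E)) (hbox : ∀ B ∈ F, ∃ a b, (∀ i, a i ≤ b i) ∧ B = coordBox e a b)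
    (hyp : ∀ G ⊆ F, G.Infinite → ∃ B₁ ∈ G, ∃ B₂ ∈ G, B₁ ≠ B₂ ∧
      ∃ W, (∃ J c, J ∈ 𝒥 ∧ W = coordFlat e J c) ∧ (B₁ ∩ W).Nonempty ∧ (B₂ ∩ W).Nonempty) :
    ∃ (n : ℕ) (W : Fin n → Set E),
      (∀ m, ∃ J c, J ∈ 𝒥 ∧ W m = coordFlat e J c) ∧ ∀ B ∈ F, ∃ m, (B ∩ W m).Nonempty := by
  choose a b hab box_eq using fun B : F => hbox B B.2
  have meets_iff (B : F) (J : Finset ι) (c : ∀ i, α i) :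
      (B.1 ∩ coordFlat e J c).Nonempty ↔ ∀ j ∉ J, c j ∈ Icc (a B j) (b B j) := by
    rw [box_eq B, coordBox_inter_coordFlat_nonempty_iff he (hab B)]
  have two_meet (G : Set F) (hG : G.Infinite) : ∃ s ∈ G, ∃ t ∈ G, s ≠ t ∧ ∃ J ∈ 𝒥, ∀ j ∉ J,
      ¬ Disjoint (Icc (a s j) (b s j)) (Icc (a t j) (b t j)) := by
    obtain ⟨_, ⟨s, hs, rfl⟩, _, ⟨t, ht, rfl⟩, hst, _, ⟨J, c, hJ, rfl⟩, s_meets, t_meets⟩ :=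
      hyp (Subtype.val '' G) (Subtype.coe_image_subset F G) (hG.image Subtype.val_injective.injOn)
    exact ⟨s, hs, t, ht, ne_of_apply_ne _ hst, J, hJ, fun j hj => not_disjoint_iff.2
      ⟨c j, (meets_iff s J c).1 s_meets j hj, (meets_iff t J c).1 t_meets j hj⟩⟩
  obtain ⟨T, hT⟩ := exists_finset_forall_exists_mem_of_forall_ultrafilter
    (fun p : 𝒥 × (∀ i, α i) => {B : F | (B.1 ∩ coordFlat e p.1 p.2).Nonempty}) fun U => by
      obtain ⟨J, hJ, c, hc⟩ := exists_eventually_forall_notMem_mem_Icc hab h𝒥 two_meet U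
      exact ⟨(⟨J, hJ⟩, c), hc.mono fun B => (meets_iff B J c).2⟩
  refine ⟨T.card, fun m => coordFlat e (T.equivFin.symm m).1.1 (T.equivFin.symm m).1.2,
    fun m => ⟨_, _, (T.equivFin.symm m).1.1.2, rfl⟩, fun B hB => ?_⟩
  obtain ⟨p, hp, p_meets⟩ := hT ⟨B, hB⟩
  exact ⟨T.equivFin ⟨p, hp⟩, by simpa using p_meets⟩

end Box

/-- **`(ℵ₀, 2)`-theorem for axis-parallel boxes and axis-parallel
`k`-flats.** If `F` is a family of axis-parallel boxes in `ℝ^d`, `0 ≤ k < d`, such that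
every infinite subfamily contains two boxes both intersected by a single axis-parallel
`k`-flat, then all boxes of `F` can be hit by finitely many axis-parallel `k`-flats. -/
theorem stmt_15 (d k : ℕ) (hd : 1 ≤ d) (hk : k < d)
    (F : Set (Set (EuclideanSpace ℝ (Fin d))))
    (hbox : ∀ B ∈ F, IsBox B)
    (hyp : ∀ G ⊆ F, G.Infinite →
      ∃ B₁ ∈ G, ∃ B₂ ∈ G, B₁ ≠ B₂ ∧
        ∃ W : Set (EuclideanSpace ℝ (Fin d)), IsAxisParallelKFlat k W ∧
          (B₁ ∩ W).Nonempty ∧ (B₂ ∩ W).Nonempty) :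
    ∃ (n : ℕ) (W : Fin n → Set (EuclideanSpace ℝ (Fin d))),
      (∀ m, IsAxisParallelKFlat k (W m)) ∧ ∀ B ∈ F, ∃ m, (B ∩ W m).Nonempty := by
  obtain ⟨J, -, hJ⟩ := Finset.exists_subset_card_eq (hk.le.trans_eq (Finset.card_fin d).symm)
  exact stmt_15_general (WithLp.ofLp_surjective 2) ⟨J, hJ⟩ F hbox hyp
end

section
/- For all integers d ≥ 1 and 0 ≤ k < d there exist positive integers s and t with the following property: for any families F_1, …, F_s of axis-parallel boxes in ℝ^d, each of cardinality t, if for all i ≠ j every box of F_i and every box of F_j can be simultaneously intersected by a single axis-parallel k-flat, then there exist an index i and two distinct boxes in F_i that can be simultaneously intersected by a single axis-parallel k-flat. -/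
/-!
To a box assign its projections to the coordinate axes, which are compact intervals. Two boxes meet
a common axis-parallel `k`-flat exactly when their projections meet in at least `d - k` coordinates.
Colour each pair of boxes by the set of coordinates in which their projections meet. By Ramsey's
theorem every large family has a large subfamily all of whose pairs have the same colour, and among
`2 ^ d + 1` families two, say `T` and `U`, get the same colour `S`. In a coordinate outside `S` the
intervals coming from `T` are pairwise disjoint, and so are those coming from `U`, so at most
`#T + #U` of the pairs in `T × U` meet there. Since `d * (#T + #U) < #T * #U`, some box of `T` and
some box of `U` meet only in coordinates from `S`. Hence `d - k ≤ #S`, and any two boxes of `T`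
meet a common `k`-flat.
-/

open Finset

theorem exists_monochromatic_subset {κ : Type*} [Finite κ] (α : Type*) (a : κ → ℕ) :
    ∃ N : ℕ, ∀ c : α → α → κ, (∀ x y, c x y = c y x) → ∀ X : Finset α, N ≤ #X →
      ∃ k, ∃ T ⊆ X, #T = a k ∧ (T : Set α).Pairwise fun x y => c x y = k := by
  classical
  have := Fintype.ofFinite κ
  induction a using WellFoundedLT.induction with
  | ind a ih =>
  by_cases ha : ∃ k, a k = 0
  · obtain ⟨k, hk⟩ := ha
    exact ⟨0, fun c _ X _ => ⟨k, ∅, empty_subset X, by simp [hk], by simp⟩⟩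
  have hpos : ∀ k, 0 < a k := fun k => Nat.pos_of_ne_zero fun hk => ha ⟨k, hk⟩
  choose N hN using fun k => ih (Function.update a k (a k - 1))
    (update_lt_self_iff.2 (Nat.sub_lt (hpos k) one_pos))
  refine ⟨∑ k, N k + 1, fun c hc X hX => ?_⟩
  obtain ⟨x, hx⟩ : X.Nonempty := card_pos.1 (by omega)
  obtain ⟨k, hk⟩ : ∃ k, N k ≤ #{y ∈ X.erase x | c x y = k} := by
    have hsum : ∑ k, N k ≤ ∑ k, #{y ∈ X.erase x | c x y = k} := by
      rw [← card_eq_sum_card_fiberwise (f := c x) fun _ _ => mem_coe.2 (mem_univ _),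
        card_erase_of_mem hx]
      omega
    obtain ⟨k, -, hk⟩ := exists_le_of_sum_le ⟨c x x, mem_univ _⟩ hsum
    exact ⟨k, hk⟩
  obtain ⟨k', T, hT, hcard, hmono⟩ := hN k c hc _ hk
  have hTX : T ⊆ X := hT.trans ((filter_subset _ _).trans (erase_subset _ _))
  obtain rfl | hne := eq_or_ne k' k
  · have hxT : ∀ y ∈ T, y ≠ x ∧ c x y = k' := fun y hy =>
      ⟨ne_of_mem_erase (mem_filter.1 (hT hy)).1, (mem_filter.1 (hT hy)).2⟩
    refine ⟨k', insert x T, insert_subset hx hTX, ?_, ?_⟩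
    · rw [card_insert_of_notMem fun h => (hxT x h).1 rfl, hcard, Function.update_self,
        Nat.sub_one_add_one (hpos k').ne']
    · rw [coe_insert]
      exact hmono.insert fun y hy _ => ⟨(hxT y hy).2, hc y x ▸ (hxT y hy).2⟩
  · exact ⟨k', T, hTX, by rw [hcard, Function.update_of_ne hne], hmono⟩

section IntervalSystems

variable {α γ β : Type*}

/-- A nonempty interval that contains its left endpoint; only left endpoints enter the counting
argument, so nothing is required at the right end. -/
def IsLeftClosedInterval [Preorder β] (s : Set β) : Prop :=
  s.OrdConnected ∧ ∃ a, IsLeast s a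

theorem isLeftClosedInterval_Icc [Preorder β] {a b : β} (h : a ≤ b) :
    IsLeftClosedInterval (Set.Icc a b) :=
  ⟨Set.ordConnected_Icc, a, isLeast_Icc h⟩

theorem IsLeftClosedInterval.exists_isLeast_mem_or_mem [LinearOrder β] {s t : Set β}
    (hs : IsLeftClosedInterval s) (ht : IsLeftClosedInterval t) (hst : (s ∩ t).Nonempty) :
    (∃ a, IsLeast s a ∧ a ∈ t) ∨ ∃ b, IsLeast t b ∧ b ∈ s := by
  obtain ⟨hsc, a, ha⟩ := hs
  obtain ⟨htc, b, hb⟩ := ht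
  obtain ⟨z, hzs, hzt⟩ := hst
  rcases le_total a b with hab | hba
  · exact .inr ⟨b, hb, hsc.out ha.1 hzs ⟨hab, hb.2 hzt⟩⟩
  · exact .inl ⟨a, ha, htc.out hb.1 hzt ⟨hba, ha.2 hzs⟩⟩

open Classical in
theorem card_filter_exists_isLeast_mem_le [PartialOrder β] (f : α → Set β) {g : γ → Set β}
    (T : Finset α) {U : Finset γ} (hg : (U : Set γ).PairwiseDisjoint g) :
    #{p ∈ T ×ˢ U | ∃ a, IsLeast (f p.1) a ∧ a ∈ g p.2} ≤ #T := by
  refine card_le_card_of_injOn Prod.fst (fun p hp => (mem_product.1 (mem_filter.1 hp).1).1) ?_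
  rintro ⟨x, y⟩ hp ⟨x', y'⟩ hq (rfl : x = x')
  obtain ⟨hxy, a, ha, hay⟩ := mem_filter.1 hp
  obtain ⟨hxy', a', ha', hay'⟩ := mem_filter.1 hq
  obtain rfl : a = a' := ha.unique ha'
  exact Prod.ext rfl (hg.elim_set (mem_product.1 hxy).2 (mem_product.1 hxy').2 a hay hay')

open Classical in
/-- Charge a meeting pair to the interval with the larger left endpoint: that endpoint lies in the
other interval and thereby determines it. -/
theorem card_filter_inter_nonempty_le [LinearOrder β] {f : α → Set β} {g : γ → Set β}
    {T : Finset α} {U : Finset γ}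
    (hf : ∀ x ∈ T, IsLeftClosedInterval (f x)) (hg : ∀ y ∈ U, IsLeftClosedInterval (g y))
    (hfT : (T : Set α).PairwiseDisjoint f) (hgU : (U : Set γ).PairwiseDisjoint g) :
    #{p ∈ T ×ˢ U | (f p.1 ∩ g p.2).Nonempty} ≤ #T + #U := by
  have hleft : #{p ∈ T ×ˢ U | ∃ b, IsLeast (g p.2) b ∧ b ∈ f p.1} ≤ #U := by
    refine le_of_eq_of_le ?_ (card_filter_exists_isLeast_mem_le g U hfT)
    refine card_equiv (Equiv.prodComm α γ) fun p => ?_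
    simp only [mem_filter, mem_product, Equiv.prodComm_apply, Prod.fst_swap, Prod.snd_swap,
      and_comm (a := p.1 ∈ T)]
  calc #{p ∈ T ×ˢ U | (f p.1 ∩ g p.2).Nonempty}
      ≤ #({p ∈ T ×ˢ U | ∃ a, IsLeast (f p.1) a ∧ a ∈ g p.2} ∪
          {p ∈ T ×ˢ U | ∃ b, IsLeast (g p.2) b ∧ b ∈ f p.1}) := by
        rw [← filter_or]
        refine card_le_card fun p hp => ?_
        obtain ⟨hpTU, hmeet⟩ := mem_filter.1 hp
        obtain ⟨hx, hy⟩ := mem_product.1 hpTU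
        exact mem_filter.2 ⟨hpTU, (hf _ hx).exists_isLeast_mem_or_mem (hg _ hy) hmeet⟩
    _ ≤ #T + #U := (card_union_le _ _).trans
        (add_le_add (card_filter_exists_isLeast_mem_le f T hgU) hleft)

end IntervalSystems

section CommonCoords

variable {α γ ι : Type*} [Fintype ι] {β : ι → Type*}

open Classical in
/-- The set of coordinates in which two boxes meet, the colour of the pair in the application of
Ramsey's theorem. A box is given by its sides `P l`, which may be arbitrary sets here. -/
noncomputable def commonCoords (P Q : ∀ l, Set (β l)) : Finset ι :=
  {l | (P l ∩ Q l).Nonempty}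

theorem mem_commonCoords {P Q : ∀ l, Set (β l)} {l : ι} :
    l ∈ commonCoords P Q ↔ (P l ∩ Q l).Nonempty := by
  simp [commonCoords]

theorem commonCoords_comm (P Q : ∀ l, Set (β l)) : commonCoords P Q = commonCoords Q P := by
  ext l
  rw [mem_commonCoords, mem_commonCoords, Set.inter_comm]

variable [∀ l, LinearOrder (β l)]

theorem exists_commonCoords_subset {P : α → ∀ l, Set (β l)} {Q : γ → ∀ l, Set (β l)}
    {T : Finset α} {U : Finset γ} {S : Finset ι}
    (hP : ∀ x ∈ T, ∀ l, IsLeftClosedInterval (P x l))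
    (hQ : ∀ y ∈ U, ∀ l, IsLeftClosedInterval (Q y l))
    (hT : (T : Set α).Pairwise fun x y => commonCoords (P x) (P y) ⊆ S)
    (hU : (U : Set γ).Pairwise fun x y => commonCoords (Q x) (Q y) ⊆ S)
    (hcard : Fintype.card ι * (#T + #U) < #T * #U) :
    ∃ x ∈ T, ∃ y ∈ U, commonCoords (P x) (Q y) ⊆ S := by
  classical
  have disjoint_of_notMem {l : ι} (hl : l ∉ S) {P Q : ∀ l, Set (β l)}
      (h : commonCoords P Q ⊆ S) : Disjoint (P l) (Q l) :=
    Set.disjoint_iff_inter_eq_empty.2 <| Set.not_nonempty_iff_eq_empty.1 fun hne =>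
      hl (h (mem_commonCoords.2 hne))
  let meeting (l : ι) : Finset (α × γ) := {p ∈ T ×ˢ U | (P p.1 l ∩ Q p.2 l).Nonempty}
  have hmeeting : ∀ l ∈ Sᶜ, #(meeting l) ≤ #T + #U := fun l hl =>
    card_filter_inter_nonempty_le (fun x hx => hP x hx l) (fun y hy => hQ y hy l)
      (hT.mono' fun _ _ => disjoint_of_notMem (mem_compl.1 hl))
      (hU.mono' fun _ _ => disjoint_of_notMem (mem_compl.1 hl))
  have hlt : #(Sᶜ.biUnion meeting) < #(T ×ˢ U) :=
    calc #(Sᶜ.biUnion meeting) ≤ #Sᶜ * (#T + #U) := card_biUnion_le_card_mul _ _ _ hmeeting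
      _ ≤ Fintype.card ι * (#T + #U) := Nat.mul_le_mul_right _ (card_le_univ _)
      _ < #(T ×ˢ U) := by rwa [card_product]
  obtain ⟨⟨x, y⟩, hxy, hnot⟩ := exists_mem_notMem_of_card_lt_card hlt
  obtain ⟨hx, hy⟩ := mem_product.1 hxy
  refine ⟨x, hx, y, hy, fun l hl => by_contra fun hlS => hnot ?_⟩
  exact mem_biUnion.2 ⟨l, mem_compl.2 hlS, mem_filter.2 ⟨hxy, mem_commonCoords.1 hl⟩⟩

variable (α β) in
theorem exists_ne_le_card_commonCoords (m : ℕ) :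
    ∃ s t : ℕ, 0 < s ∧ 0 < t ∧ ∀ (P : α → ∀ l, Set (β l)) (F : Fin s → Finset α),
      (∀ i, ∀ x ∈ F i, ∀ l, IsLeftClosedInterval (P x l)) → (∀ i, t ≤ #(F i)) →
      (∀ i j, i ≠ j → ∀ x ∈ F i, ∀ y ∈ F j, m ≤ #(commonCoords (P x) (P y))) →
      ∃ i, ∃ x ∈ F i, ∃ y ∈ F i, x ≠ y ∧ m ≤ #(commonCoords (P x) (P y)) := by
  let d := Fintype.card ι
  obtain ⟨N, hN⟩ := exists_monochromatic_subset α fun _ : Finset ι => 2 * d + 2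
  refine ⟨2 ^ d + 1, N + 1, by positivity, by positivity, fun P F hF hcard hcross => ?_⟩
  choose S T hTF hTcard hT using fun i => hN (fun x y => commonCoords (P x) (P y))
    (fun x y => commonCoords_comm _ _) (F i) (Nat.le_of_succ_le (hcard i))
  obtain ⟨i, j, hij, hS⟩ := Fintype.exists_ne_map_eq_of_card_lt S (by simp [d])
  obtain ⟨x, hx, y, hy, hxy⟩ : ∃ x ∈ T i, ∃ y ∈ T j, commonCoords (P x) (P y) ⊆ S i := by
    refine exists_commonCoords_subset (fun x hx => hF i x (hTF i hx))
      (fun y hy => hF j y (hTF j hy)) ((hT i).mono' fun _ _ => Eq.subset)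
      ((hT j).mono' fun _ _ h => (h.trans hS.symm).subset) ?_
    rw [hTcard, hTcard]
    nlinarith
  obtain ⟨x', hx', y', hy', hne⟩ := one_lt_card.1 (show 1 < #(T i) by rw [hTcard]; omega)
  refine ⟨i, x', hTF i hx', y', hTF i hy', hne, ?_⟩
  calc m ≤ #(commonCoords (P x) (P y)) := hcross i j hij x (hTF i hx) y (hTF j hy)
    _ ≤ #(S i) := card_le_card hxy
    _ = #(commonCoords (P x') (P y')) := by rw [hT i hx' hy' hne]

end CommonCoords

section Boxes

variable {d k : ℕ} {A B W : Set (EuclideanSpace ℝ (Fin d))}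

/-- The projections of a set to the coordinate axes, used to view a box as a family of intervals. -/
def coordProj (B : Set (EuclideanSpace ℝ (Fin d))) (l : Fin d) : Set ℝ :=
  (fun x => x l) '' B

theorem IsBox.nonempty (hB : IsBox B) : B.Nonempty := by
  obtain ⟨a, b, hab, rfl⟩ := hB
  exact ⟨WithLp.toLp 2 a, fun l => Set.left_mem_Icc.2 (hab l)⟩

theorem IsBox.mem_of_forall_mem_coordProj (hB : IsBox B) {x : EuclideanSpace ℝ (Fin d)}
    (hx : ∀ l, x l ∈ coordProj B l) : x ∈ B := by
  obtain ⟨a, b, -, rfl⟩ := hB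
  intro l
  obtain ⟨y, hy, hyx⟩ := hx l
  exact hyx ▸ hy l

theorem IsBox.isLeftClosedInterval_coordProj (hB : IsBox B) (l : Fin d) :
    IsLeftClosedInterval (coordProj B l) := by
  obtain ⟨a, b, hab, rfl⟩ := hB
  have himage : coordProj {x | ∀ i, x i ∈ Set.Icc (a i) (b i)} l = Set.Icc (a l) (b l) := by
    refine Set.Subset.antisymm (Set.image_subset_iff.2 fun x hx => hx l) fun r hr => ?_
    refine ⟨WithLp.toLp 2 (Function.update a l r), fun i => ?_, Function.update_self l r a⟩
    obtain rfl | hil := eq_or_ne i l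
    · simpa using hr
    · simpa [hil] using hab i
  exact himage ▸ isLeftClosedInterval_Icc (hab l)

theorem IsAxisParallelKFlat.le_card_commonCoords (hW : IsAxisParallelKFlat k W)
    (hA : (A ∩ W).Nonempty) (hB : (B ∩ W).Nonempty) :
    d - k ≤ #(commonCoords (coordProj A) (coordProj B)) := by
  obtain ⟨J, c, rfl, rfl⟩ := hW
  obtain ⟨x, hxA, hxW⟩ := hA
  obtain ⟨y, hyB, hyW⟩ := hB
  have hJ : Jᶜ ⊆ commonCoords (coordProj A) (coordProj B) := fun l hl =>
    mem_commonCoords.2 ⟨c l, ⟨x, hxA, hxW l (mem_compl.1 hl)⟩, ⟨y, hyB, hyW l (mem_compl.1 hl)⟩⟩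
  simpa [card_compl] using card_le_card hJ

theorem IsBox.exists_mem_forall_eq (hB : IsBox B) {K : Finset (Fin d)} {c : Fin d → ℝ}
    (hc : ∀ l ∈ K, c l ∈ coordProj B l) : ∃ x ∈ B, ∀ l ∈ K, x l = c l := by
  obtain ⟨b, hb⟩ := hB.nonempty
  refine ⟨WithLp.toLp 2 (K.piecewise c b), hB.mem_of_forall_mem_coordProj fun l => ?_,
    fun l hl => piecewise_eq_of_mem K c b hl⟩
  by_cases hl : l ∈ K
  · simpa [hl] using hc l hl
  · exact ⟨b, hb, (piecewise_eq_of_notMem K c b hl).symm⟩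

theorem IsBox.exists_isAxisParallelKFlat (hA : IsBox A) (hB : IsBox B) (hk : k ≤ d)
    (hcard : d - k ≤ #(commonCoords (coordProj A) (coordProj B))) :
    ∃ W, IsAxisParallelKFlat k W ∧ (A ∩ W).Nonempty ∧ (B ∩ W).Nonempty := by
  obtain ⟨K, hK, hKcard⟩ := exists_subset_card_eq hcard
  choose! c hcA hcB using fun l (hl : l ∈ K) => mem_commonCoords.1 (hK hl)
  obtain ⟨x, hxA, hx⟩ := hA.exists_mem_forall_eq hcA
  obtain ⟨y, hyB, hy⟩ := hB.exists_mem_forall_eq hcB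
  refine ⟨_, ⟨Kᶜ, c, ?_, rfl⟩, ⟨x, hxA, ?_⟩, ⟨y, hyB, ?_⟩⟩
  · rw [card_compl, hKcard, Fintype.card_fin, Nat.sub_sub_self hk]
  · exact fun l hl => hx l (notMem_compl.1 hl)
  · exact fun l hl => hy l (notMem_compl.1 hl)

end Boxes

/-- **colorful Helly-type claim for boxes and axis-parallel `k`-flats.**
For all `d ≥ 1` and `0 ≤ k < d` there are positive integers `s`, `t` such that: given `s`
families, each of `t` axis-parallel boxes in `ℝ^d`, if every two boxes from different
families can be intersected by a single axis-parallel `k`-flat, then some two distinct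
boxes from one family can be intersected by a single axis-parallel `k`-flat. -/
theorem stmt_16 (d k : ℕ) (hd : 1 ≤ d) (hk : k < d) :
    ∃ s t : ℕ, 0 < s ∧ 0 < t ∧
      ∀ F : Fin s → Finset (Set (EuclideanSpace ℝ (Fin d))),
        (∀ i, ∀ B ∈ F i, IsBox B) →
        (∀ i, (F i).card = t) →
        (∀ i j, i ≠ j → ∀ B₁ ∈ F i, ∀ B₂ ∈ F j,
          ∃ W : Set (EuclideanSpace ℝ (Fin d)), IsAxisParallelKFlat k W ∧
            (B₁ ∩ W).Nonempty ∧ (B₂ ∩ W).Nonempty) →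
        ∃ i, ∃ B₁ ∈ F i, ∃ B₂ ∈ F i, B₁ ≠ B₂ ∧
          ∃ W : Set (EuclideanSpace ℝ (Fin d)), IsAxisParallelKFlat k W ∧
            (B₁ ∩ W).Nonempty ∧ (B₂ ∩ W).Nonempty := by
  obtain ⟨s, t, hs, ht, hst⟩ := exists_ne_le_card_commonCoords
    (Set (EuclideanSpace ℝ (Fin d))) (fun _ : Fin d => ℝ) (d - k)
  refine ⟨s, t, hs, ht, fun F hbox hcard hflat => ?_⟩
  obtain ⟨i, A, hA, B, hB, hAB, hcommon⟩ := hst coordProj F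
    (fun i B hB => (hbox i B hB).isLeftClosedInterval_coordProj) (fun i => (hcard i).ge)
    (fun i j hij A hA B hB => by
      obtain ⟨W, hW, hAW, hBW⟩ := hflat i j hij A hA B hB
      exact hW.le_card_commonCoords hAW hBW)
  exact ⟨i, A, hA, B, hB, hAB,
    (hbox i A hA).exists_isAxisParallelKFlat (hbox i B hB) hk.le hcommon⟩
end

section
/- For all integers d ≥ 1, 0 ≤ k < d, and p ≥ 2 there exists a positive integer C with the following property: if F is a family of axis-parallel boxes in ℝ^d such that among every p distinct members of F there are two that can be simultaneously intersected by a single axis-parallel k-flat, then there exist at most C axis-parallel k-flats in ℝ^d such that every box of F intersects at least one of them. -/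
/-!
Let `ρ s` be the number of flats needed to pierce the subfamily `s`; it is monotone and
subadditive. If `ρ` is huge on `s`, while every subfamily whose boxes share a value in some
coordinate has bounded `ρ`, then sweeping along each coordinate in turn produces `p` subfamilies of
`s`, none of them empty, such that boxes from different subfamilies have disjoint projections to
every coordinate. One box from each gives `p` boxes no two of which are hit by a common flat. The
bound for boxes sharing a value in coordinate `t` comes by induction: once `t` is fixed, one fewer
coordinate remains to be fixed. A limit along an ultrafilter passes from finite to arbitrary
families.
-/

open Filter Finset

section Submeasure

variable {ι κ τ : Type*}

/-- A submeasure with values in `ℕ∞`, in the sense of set theory: a monotone, finitely subadditive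
set function vanishing on `∅`. It abstracts the piercing number of the subfamilies of a family. -/
structure IsSubmeasure (ρ : Set ι → ℕ∞) : Prop where
  empty : ρ ∅ = 0
  mono : Monotone ρ
  union_le (u v : Set ι) : ρ (u ∪ v) ≤ ρ u + ρ v

namespace IsSubmeasure

variable {ρ : Set ι → ℕ∞} {s : Set ι}

lemma nonempty_of_lt (hρ : IsSubmeasure ρ) {N : ℕ∞} (hs : N < ρ s) : s.Nonempty := by
  rw [Set.nonempty_iff_ne_empty]
  rintro rfl
  exact not_lt_bot (hρ.empty ▸ hs)

lemma exists_sublevel_threshold {α : Type*} [LinearOrder α] (hρ : IsSubmeasure ρ) (f : ι → α)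
    (hfin : s.Finite) {N : ℕ∞} (hs : N < ρ s) :
    ∃ x, N < ρ {i ∈ s | f i ≤ x} ∧ ρ {i ∈ s | f i < x} ≤ N := by
  have exists_large_sublevel : ∀ u ⊆ s, N < ρ u → ∃ j ∈ u, N < ρ {i ∈ s | f i ≤ f j} := by
    intro u hus hu
    obtain ⟨j, hj, hmax⟩ := Set.exists_max_image u f (hfin.subset hus) (hρ.nonempty_of_lt hu)
    exact ⟨j, hj, hu.trans_le (hρ.mono fun i hi => ⟨hus hi, hmax i hi⟩)⟩
  obtain ⟨j, hj, hmin⟩ := Set.exists_min_image {j ∈ s | N < ρ {i ∈ s | f i ≤ f j}} f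
    (hfin.subset (Set.sep_subset _ _)) (exists_large_sublevel s subset_rfl hs)
  refine ⟨f j, hj.2, not_lt.1 fun hlarge => ?_⟩
  obtain ⟨l, hl, hNl⟩ := exists_large_sublevel _ (Set.sep_subset _ _) hlarge
  exact (hmin l ⟨hl.1, hNl⟩).not_gt hl.2

lemma exists_cut {α : Type*} [LinearOrder α] (hρ : IsSubmeasure ρ) (I : ι → NonemptyInterval α)
    {A : Finset τ} (hA : A.Nonempty) {G : τ → Set ι} (hfin : ∀ a ∈ A, (G a).Finite) {N C M : ℕ∞}
    (hC : ∀ a ∈ A, ∀ u ⊆ G a, ∀ x, (∀ i ∈ u, x ∈ I i) → ρ u ≤ C)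
    (hG : ∀ a ∈ A, N + C + M < ρ (G a)) :
    ∃ a ∈ A, ∃ x, N < ρ {i ∈ G a | (I i).snd ≤ x} ∧ ∀ b ∈ A, M < ρ {i ∈ G b | x < (I i).fst} := by
  choose x hx using fun a : A => hρ.exists_sublevel_threshold (fun i => (I i).snd)
    (hfin a a.2) ((le_self_add.trans le_self_add).trans_lt (hG a a.2))
  obtain ⟨a, -, hmin⟩ := A.attach.exists_min_image x hA.attach
  refine ⟨a, a.2, x a, (hx a).1, fun b hb => lt_of_not_ge fun hright => (hG b hb).not_ge ?_⟩
  have hcover : G b ⊆ {i ∈ G b | (I i).snd < x a} ∪ {i ∈ G b | x a ∈ I i} ∪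
      {i ∈ G b | x a < (I i).fst} := by
    intro i hi
    simp only [Set.mem_union, Set.mem_ofPred_eq, hi, true_and, NonemptyInterval.mem_def]
    grind
  have hthreshold : {i ∈ G b | (I i).snd < x a} ⊆ {i ∈ G b | (I i).snd < x ⟨b, hb⟩} :=
    fun i hi => ⟨hi.1, hi.2.trans_le (hmin ⟨b, hb⟩ (mem_attach _ _))⟩
  have hleft : ρ {i ∈ G b | (I i).snd < x a} ≤ N := (hρ.mono hthreshold).trans (hx ⟨b, hb⟩).2
  have hmid : ρ {i ∈ G b | x a ∈ I i} ≤ C :=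
    hC b hb _ (Set.sep_subset _ _) (x a) fun i hi => hi.2
  calc ρ (G b) ≤ _ := hρ.mono hcover
    _ ≤ _ := hρ.union_le _ _
    _ ≤ N + C + M := add_le_add ((hρ.union_le _ _).trans (add_le_add hleft hmid)) hright

/-- Cut off the subfamily whose threshold is leftmost, and recurse on what lies to the right of
the cut in the other subfamilies. -/
lemma exists_pairwise_disjoint {α : Type*} [LinearOrder α] (hρ : IsSubmeasure ρ)
    (I : ι → NonemptyInterval α) (hfin : s.Finite) {N C : ℕ}
    (hC : ∀ u ⊆ s, ∀ x, (∀ i ∈ u, x ∈ I i) → ρ u ≤ C) (A : Finset τ) (G : τ → Set ι)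
    (hGs : ∀ a ∈ A, G a ⊆ s) (hG : ∀ a ∈ A, (#A * (N + C) : ℕ) < ρ (G a)) :
    ∃ H : τ → Set ι, (∀ a ∈ A, H a ⊆ G a ∧ N < ρ (H a)) ∧
      (A : Set τ).PairwiseDisjoint fun a => ⋃ i ∈ H a, (I i : Set α) := by
  classical
  induction A using Finset.strongInduction generalizing G with | H A ih
  obtain rfl | hA := A.eq_empty_or_nonempty
  · exact ⟨G, by simp, by simp⟩
  obtain ⟨r, hr⟩ := Nat.exists_eq_add_one.2 hA.card_pos
  obtain ⟨a, ha, x, hleft, hright⟩ := hρ.exists_cut I hA (N := N) (C := C)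
    (M := (r * (N + C) : ℕ)) (fun b hb => hfin.subset (hGs b hb))
    (fun b hb u hu => hC u (hu.trans (hGs b hb)))
    (fun b hb => by convert hG b hb using 1; rw [hr]; push_cast; ring)
  have hcard : #(A.erase a) = r := by rw [card_erase_of_mem ha, hr, Nat.add_sub_cancel]
  obtain ⟨H, hH, hdisj⟩ := ih (A.erase a) (erase_ssubset ha) (fun b => {i ∈ G b | x < (I i).fst})
    (fun b hb => (Set.sep_subset _ _).trans (hGs b (mem_of_mem_erase hb)))
    (fun b hb => hcard ▸ hright b (mem_of_mem_erase hb))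
  have hcut : ∀ b ∈ A.erase a,
      Disjoint (⋃ i ∈ {i ∈ G a | (I i).snd ≤ x}, (I i : Set α)) (⋃ i ∈ H b, (I i : Set α)) := by
    intro b hb
    refine (Set.Iic_disjoint_Ioi (le_refl x)).mono ?_ ?_
    · exact Set.iUnion₂_subset fun i hi y hy => hy.2.trans hi.2
    · exact Set.iUnion₂_subset fun i hi y hy => ((hH b hb).1 hi).2.trans_le hy.1
  refine ⟨Function.update H a {i ∈ G a | (I i).snd ≤ x}, fun b hb => ?_, ?_⟩
  · obtain rfl | hba := eq_or_ne b a
    · simpa using hleft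
    · have hHb := hH b (mem_erase.2 ⟨hba, hb⟩)
      rw [Function.update_of_ne hba]
      exact ⟨hHb.1.trans (Set.sep_subset _ _), hHb.2⟩
  · rw [← insert_erase ha, coe_insert, Set.pairwiseDisjoint_insert_of_notMem (notMem_erase a A)]
    refine ⟨fun b hb c hc hbc => ?_, fun b hb => ?_⟩
    · simpa [Function.onFun, Function.update_of_ne (ne_of_mem_erase hb),
        Function.update_of_ne (ne_of_mem_erase hc)] using hdisj hb hc hbc
    · simpa [Function.update_of_ne (ne_of_mem_erase hb)] using hcut b hb

/-- The coordinates of `T` are treated one after another, each costing one iteration. -/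
lemma exists_pairwise_disjoint_coordinates {α : κ → Type*} [∀ t, LinearOrder (α t)]
    (hρ : IsSubmeasure ρ) (B : ι → ∀ t, NonemptyInterval (α t)) (hfin : s.Finite) {p N C : ℕ}
    (T : Finset κ) (hC : ∀ t ∈ T, ∀ u ⊆ s, ∀ x, (∀ i ∈ u, x ∈ B i t) → ρ u ≤ C)
    (hs : ((fun M => p * (M + C))^[#T] N : ℕ) < ρ s) :
    ∃ G : Fin p → Set ι, (∀ a, G a ⊆ s ∧ N < ρ (G a)) ∧
      ∀ t ∈ T, Set.univ.PairwiseDisjoint fun a => ⋃ i ∈ G a, (B i t : Set (α t)) := by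
  induction T using Finset.cons_induction generalizing N with
  | empty => exact ⟨fun _ => s, fun _ => ⟨subset_rfl, hs⟩, by simp⟩
  | cons t T ht ih =>
    rw [card_cons, Function.iterate_succ_apply] at hs
    obtain ⟨G, hG, hdisjT⟩ := ih (fun u hu => hC u (mem_cons_of_mem hu)) hs
    obtain ⟨H, hH, hdisjt⟩ := hρ.exists_pairwise_disjoint (B · t) hfin
      (hC t (mem_cons_self t T)) univ G (fun a _ => (hG a).1) (by simpa using fun a => (hG a).2)
    refine ⟨H, fun a => ⟨(hH a (mem_univ a)).1.trans (hG a).1, (hH a (mem_univ a)).2⟩, ?_⟩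
    refine (forall_mem_cons ht _).2
      ⟨by simpa using hdisjt, fun u hu => (hdisjT u hu).mono fun a => ?_⟩
    exact Set.biUnion_subset_biUnion_left (hH a (mem_univ a)).1

end IsSubmeasure

end Submeasure

section Piercing

variable {ι κ : Type*} {α : κ → Type*}

/-- An axis-parallel flat in `∏ t, α t`: the points that agree with `value` on the coordinates in
`fixed`. The entries of `value` outside `fixed` are irrelevant. -/
structure AxisFlat (α : κ → Type*) where
  fixed : Finset κ
  value : ∀ t, α t

variable [∀ t, PartialOrder (α t)]

/-- The flat `f` meets the box `∏ t, B t`. -/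
def AxisFlat.Hits (f : AxisFlat α) (B : ∀ t, NonemptyInterval (α t)) : Prop :=
  ∀ t ∈ f.fixed, f.value t ∈ B t

/-- `P` is a set of flats, each fixing exactly `m` coordinates, all of them in `T`, that hits every
box of the subfamily `s` of `B`. The set `T` is a parameter for the sake of induction. -/
def IsTransversal (B : ι → ∀ t, NonemptyInterval (α t)) (T : Finset κ) (m : ℕ) (s : Set ι)
    (P : Set (AxisFlat α)) : Prop :=
  (∀ f ∈ P, f.fixed ∈ T.powersetCard m) ∧ ∀ i ∈ s, ∃ f ∈ P, f.Hits (B i)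

/-- The least number of flats, each fixing exactly `m` coordinates in `T`, that hit every box of
the subfamily `s` of `B`; it is `⊤` if no finite number suffices. -/
noncomputable def piercingNumber (B : ι → ∀ t, NonemptyInterval (α t)) (T : Finset κ) (m : ℕ)
    (s : Set ι) : ℕ∞ :=
  ⨅ (P) (_ : IsTransversal B T m s P), P.encard

/-- The `(p, 2)`-property of the subfamily `s` of `B`: among any `p` of its boxes, some two are hit
by a common flat fixing exactly `m` coordinates in `T`. -/
def HasPTwoProperty (B : ι → ∀ t, NonemptyInterval (α t)) (T : Finset κ) (m p : ℕ)
    (s : Set ι) : Prop :=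
  ∀ G : Finset ι, ↑G ⊆ s → #G = p → ∃ i ∈ G, ∃ j ∈ G, i ≠ j ∧
    ∃ f : AxisFlat α, f.fixed ∈ T.powersetCard m ∧ f.Hits (B i) ∧ f.Hits (B j)

variable {B : ι → ∀ t, NonemptyInterval (α t)} {T : Finset κ} {m p : ℕ} {s u : Set ι}

lemma IsTransversal.piercingNumber_le {P : Set (AxisFlat α)} (hP : IsTransversal B T m s P) :
    piercingNumber B T m s ≤ P.encard :=
  iInf₂_le P hP

lemma exists_isTransversal_of_piercingNumber_le {N : ℕ} (h : piercingNumber B T m s ≤ N) :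
    ∃ P, IsTransversal B T m s P ∧ P.encard ≤ N := by
  have hlt : piercingNumber B T m s < N + 1 := h.trans_lt (by exact_mod_cast N.lt_succ_self)
  obtain ⟨P, hP⟩ := iInf_lt_iff.1 hlt
  obtain ⟨hP, hcard⟩ := iInf_lt_iff.1 hP
  exact ⟨P, hP, Order.le_of_lt_add_one hcard⟩

lemma exists_range_eq_of_encard_le {β : Type*} {P : Set β} (hP : P.Nonempty) {N : ℕ}
    (h : P.encard ≤ N) : ∃ f : Fin N → β, Set.range f = P := by
  have : Fintype P := (Set.finite_of_encard_le_coe h).fintype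
  have : Nonempty P := hP.to_subtype
  obtain ⟨e⟩ : Nonempty (P ↪ Fin N) := Function.Embedding.nonempty_of_card_le <| by
    rwa [Set.encard_eq_coe_toFinset_card, Set.toFinset_card, Nat.cast_le,
      ← Fintype.card_fin N] at h
  refine ⟨Subtype.val ∘ Function.invFun e, ?_⟩
  rw [(Function.invFun_surjective e.injective).range_comp, Subtype.range_coe]

lemma exists_fin_transversal (hs : s.Nonempty) {N : ℕ} (h : piercingNumber B T m s ≤ N) :
    ∃ f : Fin N → AxisFlat α, IsTransversal B T m s (Set.range f) := by
  obtain ⟨P, hP, hcard⟩ := exists_isTransversal_of_piercingNumber_le h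
  obtain ⟨i, hi⟩ := hs
  obtain ⟨f₀, hf₀, -⟩ := hP.2 i hi
  obtain ⟨f, rfl⟩ := exists_range_eq_of_encard_le ⟨f₀, hf₀⟩ hcard
  exact ⟨f, hP⟩

lemma isSubmeasure_piercingNumber (B : ι → ∀ t, NonemptyInterval (α t)) (T : Finset κ) (m : ℕ) :
    IsSubmeasure (piercingNumber B T m) where
  empty := by
    have h : IsTransversal B T m ∅ ∅ := by simp [IsTransversal]
    simpa using h.piercingNumber_le
  mono u v huv := le_iInf₂ fun P hP =>
    IsTransversal.piercingNumber_le ⟨hP.1, fun i hi => hP.2 i (huv hi)⟩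
  union_le u v := by
    refine ENat.le_iInf₂_add_iInf₂ fun P hP Q hQ => ?_
    have hPQ : IsTransversal B T m (u ∪ v) (P ∪ Q) :=
      ⟨fun f hf => hf.elim (hP.1 f) (hQ.1 f), fun i hi => hi.elim
        (fun hi => (hP.2 i hi).imp fun _ => And.imp_left Or.inl)
        (fun hi => (hQ.2 i hi).imp fun _ => And.imp_left Or.inr)⟩
    exact hPQ.piercingNumber_le.trans (Set.encard_union_le P Q)

lemma piercingNumber_zero_le (B : ι → ∀ t, NonemptyInterval (α t)) (T : Finset κ) (s : Set ι) :
    piercingNumber B T 0 s ≤ 1 := by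
  obtain rfl | ⟨i, -⟩ := s.eq_empty_or_nonempty
  · simp [(isSubmeasure_piercingNumber B T 0).empty]
  · have h : IsTransversal B T 0 s {⟨∅, fun t => (B i t).fst⟩} := by
      simp [IsTransversal, AxisFlat.Hits]
    simpa using h.piercingNumber_le

lemma piercingNumber_succ_le_erase [DecidableEq κ] {t : κ} (ht : t ∈ T) {x : α t}
    (hx : ∀ i ∈ s, x ∈ B i t) :
    piercingNumber B T (m + 1) s ≤ piercingNumber B (T.erase t) m s := by
  refine le_iInf₂ fun P hP => ?_
  let fix (f : AxisFlat α) : AxisFlat α := ⟨insert t f.fixed, Function.update f.value t x⟩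
  have hfix : IsTransversal B T (m + 1) s (fix '' P) := by
    constructor
    · rintro _ ⟨f, hf, rfl⟩
      obtain ⟨hfT, hcard⟩ := mem_powersetCard.1 (hP.1 f hf)
      have htf : t ∉ f.fixed := fun h => notMem_erase t T (hfT h)
      exact mem_powersetCard.2 ⟨insert_subset ht (hfT.trans (erase_subset t T)),
        by rw [card_insert_of_notMem htf, hcard]⟩
    · intro i hi
      obtain ⟨f, hf, hit⟩ := hP.2 i hi
      refine ⟨fix f, Set.mem_image_of_mem fix hf, fun v hv => ?_⟩
      obtain rfl | hvt := eq_or_ne v t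
      · simpa [fix] using hx i hi
      · simpa [fix, hvt] using hit v ((mem_insert.1 hv).resolve_left hvt)
  exact hfix.piercingNumber_le.trans (Set.encard_image_le fix P)

namespace HasPTwoProperty

lemma mono (h : HasPTwoProperty B T m p s) (hus : u ⊆ s) : HasPTwoProperty B T m p u :=
  fun G hG => h G (hG.trans hus)

lemma erase [DecidableEq κ] (h : HasPTwoProperty B T (m + 1) p s) (t : κ) :
    HasPTwoProperty B (T.erase t) m p s := by
  intro G hGs hG
  obtain ⟨i, hi, j, hj, hij, f, hf, hfi, hfj⟩ := h G hGs hG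
  obtain ⟨hfT, hcard⟩ := mem_powersetCard.1 hf
  obtain ⟨S, hS, hSm⟩ : ∃ S ⊆ f.fixed.erase t, #S = m :=
    exists_subset_card_eq (by have := pred_card_le_card_erase (s := f.fixed) (a := t); omega)
  have hSf : S ⊆ f.fixed := hS.trans (erase_subset t _)
  exact ⟨i, hi, j, hj, hij, ⟨S, f.value⟩,
    mem_powersetCard.2 ⟨hS.trans (erase_subset_erase t hfT), hSm⟩,
    fun v hv => hfi v (hSf hv), fun v hv => hfj v (hSf hv)⟩

lemma exists_ne_not_disjoint (h : HasPTwoProperty B T (m + 1) p s) (hT : T.Nonempty)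
    {g : Fin p → ι} (hg : ∀ a, g a ∈ s) :
    ∃ a b, a ≠ b ∧ ∃ t ∈ T, ¬ Disjoint (B (g a) t : Set (α t)) (B (g b) t) := by
  by_cases hinj : Function.Injective g
  · obtain ⟨_, hi, _, hj, hij, f, hf, hfi, hfj⟩ := h (univ.map ⟨g, hinj⟩)
      (by simpa [Set.range_subset_iff] using hg) (by simp)
    obtain ⟨a, -, rfl⟩ := mem_map.1 hi
    obtain ⟨b, -, rfl⟩ := mem_map.1 hj
    obtain ⟨hfT, hcard⟩ := mem_powersetCard.1 hf
    obtain ⟨t, ht⟩ : f.fixed.Nonempty := card_pos.1 (by omega)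
    exact ⟨a, b, ne_of_apply_ne g hij, t, hfT ht,
      Set.not_disjoint_iff.2 ⟨f.value t, hfi t ht, hfj t ht⟩⟩
  · obtain ⟨a, b, hab, hne⟩ := Function.not_injective_iff.1 hinj
    obtain ⟨t, ht⟩ := hT
    exact ⟨a, b, hne, t, ht, hab ▸ disjoint_self.not.2 (B (g a) t).coe_nonempty.ne_empty⟩

end HasPTwoProperty

/-- A bound for the number of flats, each fixing `m` out of `n` coordinates, needed to pierce a
family of boxes with the `(p, 2)`-property. -/
def piercingBound (p : ℕ) : ℕ → ℕ → ℕ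
  | 0, _ => 1
  | m + 1, n => (fun M => p * (M + piercingBound p m (n - 1)))^[n] 0

end Piercing

section LinearOrder

variable {ι κ : Type*} {α : κ → Type*} {T : Finset κ} {m p : ℕ}

theorem HasPTwoProperty.piercingNumber_le_of_finite [∀ t, LinearOrder (α t)]
    {B : ι → ∀ t, NonemptyInterval (α t)} {s : Set ι} (h : HasPTwoProperty B T m p s)
    (hfin : s.Finite) (hm : m ≤ #T) : piercingNumber B T m s ≤ piercingBound p m #T := by
  classical
  induction m generalizing T s with
  | zero => exact piercingNumber_zero_le B T s
  | succ m ih =>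
    have hslice : ∀ t ∈ T, ∀ u ⊆ s, ∀ x, (∀ i ∈ u, x ∈ B i t) →
        piercingNumber B T (m + 1) u ≤ piercingBound p m (#T - 1) := by
      intro t ht u hu x hx
      rw [← card_erase_of_mem ht]
      exact (piercingNumber_succ_le_erase ht hx).trans
        (ih ((h.mono hu).erase t) (hfin.subset hu) (by rw [card_erase_of_mem ht]; omega))
    by_contra! hlarge
    have hρ := isSubmeasure_piercingNumber B T (m + 1)
    obtain ⟨G, hG, hdisj⟩ := hρ.exists_pairwise_disjoint_coordinates B hfin T hslice hlarge
    choose g hg using fun a => hρ.nonempty_of_lt (hG a).2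
    obtain ⟨a, b, hab, t, ht, hmeet⟩ := h.exists_ne_not_disjoint (card_pos.1 (by omega))
      (fun a => (hG a).1 (hg a))
    exact hmeet ((hdisj t ht (Set.mem_univ a) (Set.mem_univ b) hab).mono
      (Set.subset_biUnion_of_mem (u := fun i => (B i t : Set (α t))) (hg a))
      (Set.subset_biUnion_of_mem (u := fun i => (B i t : Set (α t))) (hg b)))

lemma liminf_mem_Icc_of_eventually {β γ : Type*} [ConditionallyCompleteLattice β] {l : Filter γ}
    [l.NeBot] {f : γ → β} {a b : β} (h : ∀ᶠ u in l, f u ∈ Set.Icc a b) :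
    liminf f l ∈ Set.Icc a b := by
  have ha : ∀ᶠ u in l, a ≤ f u := h.mono fun _ hu => hu.1
  have hb : ∀ᶠ u in l, f u ≤ b := h.mono fun _ hu => hu.2
  have hle : ∀ y, (∀ᶠ u in l, y ≤ f u) → y ≤ b := fun y hy =>
    let ⟨_, hyu, hub⟩ := (hy.and hb).exists
    hyu.trans hub
  exact ⟨le_liminf_of_le ⟨b, hle⟩ ha, liminf_le_of_le ⟨a, ha⟩ hle⟩

theorem piercingNumber_univ_le_of_forall_finset [∀ t, ConditionallyCompleteLattice (α t)]
    {B : ι → ∀ t, NonemptyInterval (α t)} {N : ℕ}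
    (h : ∀ s : Finset ι, piercingNumber B T m s ≤ N) : piercingNumber B T m Set.univ ≤ N := by
  classical
  obtain hι | ⟨⟨i₀⟩⟩ := isEmpty_or_nonempty ι
  · exact (congrArg _ (Set.univ_eq_empty_iff.2 hι)).trans_le (by simpa using h ∅)
  choose f hfT hf using fun s : Finset ι => exists_fin_transversal
    (s := ↑(insert i₀ s)) ⟨i₀, by simp⟩ (h (insert i₀ s))
  let l : Ultrafilter (Finset ι) := Ultrafilter.of atTop
  have hconst (n : Fin N) : ∃ S ∈ T.powersetCard m, ∀ᶠ s in l, (f s n).fixed = S :=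
    (Ultrafilter.eventually_exists_mem_iff (T.powersetCard m).finite_toSet).1
      (Eventually.of_forall fun s => ⟨_, hfT s _ ⟨n, rfl⟩, rfl⟩)
  choose S hST hS using hconst
  let limitFlat (n : Fin N) : AxisFlat α := ⟨S n, fun t => liminf (fun s => (f s n).value t) l⟩
  have hlimit : IsTransversal B T m Set.univ (Set.range limitFlat) := by
    refine ⟨by rintro _ ⟨n, rfl⟩; exact hST n, fun i _ => ?_⟩
    have hhit : ∀ᶠ s in l, ∃ n, (f s n).Hits (B i) :=
      ((eventually_ge_atTop {i}).filter_mono (Ultrafilter.of_le atTop)).mono fun s hs => by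
        simpa using hf s i (by simpa using Or.inr (hs (mem_singleton_self i)))
    obtain ⟨n, hn⟩ := Ultrafilter.eventually_exists_iff.1 hhit
    refine ⟨limitFlat n, ⟨n, rfl⟩, fun t ht => liminf_mem_Icc_of_eventually ?_⟩
    filter_upwards [hn, hS n] with s hhits hfixed
    exact hhits t (hfixed ▸ ht)
  refine hlimit.piercingNumber_le.trans ?_
  rw [← Set.image_univ]
  exact (Set.encard_image_le _ _).trans (by simp)

theorem HasPTwoProperty.piercingNumber_le [∀ t, ConditionallyCompleteLinearOrder (α t)]
    {B : ι → ∀ t, NonemptyInterval (α t)} (h : HasPTwoProperty B T m p Set.univ) (hm : m ≤ #T) :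
    piercingNumber B T m Set.univ ≤ piercingBound p m #T :=
  piercingNumber_univ_le_of_forall_finset fun s =>
    (h.mono (Set.subset_univ _)).piercingNumber_le_of_finite s.finite_toSet hm

end LinearOrder

section Coordinates

variable {E κ : Type*} {α : κ → Type*} {x : E → ∀ t, α t} {k : ℕ}

/-- An axis-parallel `k`-flat of a space `E` with coordinates `x`. For the standard coordinates of
`EuclideanSpace ℝ (Fin d)` this unfolds to `IsAxisParallelKFlat`. -/
def IsCoordinateFlat (x : E → ∀ t, α t) (k : ℕ) (W : Set E) : Prop :=
  ∃ (J : Finset κ) (c : ∀ t, α t), #J = k ∧ W = {v | ∀ j ∉ J, x v j = c j}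

/-- The points of `E` whose coordinates `x` lie on the flat `f`. -/
def AxisFlat.preimage (x : E → ∀ t, α t) (f : AxisFlat α) : Set E :=
  {v | ∀ t ∈ f.fixed, x v t = f.value t}

lemma isCoordinateFlat_iff [Fintype κ] (hk : k ≤ Fintype.card κ) {W : Set E} :
    IsCoordinateFlat x k W ↔ ∃ f : AxisFlat α,
      f.fixed ∈ univ.powersetCard (Fintype.card κ - k) ∧ W = f.preimage x := by
  classical
  simp only [mem_powersetCard_univ]
  constructor
  · rintro ⟨J, c, hJ, rfl⟩
    exact ⟨⟨Jᶜ, c⟩, by rw [card_compl, hJ], by simp [AxisFlat.preimage]⟩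
  · rintro ⟨f, hf, rfl⟩
    exact ⟨f.fixedᶜ, f.value, by rw [card_compl, hf]; omega, by simp [AxisFlat.preimage]⟩

variable [∀ t, PartialOrder (α t)]

/-- An axis-parallel box of a space `E` with coordinates `x`. For the standard coordinates of
`EuclideanSpace ℝ (Fin d)` this unfolds to `IsBox`. -/
def IsCoordinateBox (x : E → ∀ t, α t) (B : Set E) : Prop :=
  ∃ a b : ∀ t, α t, (∀ t, a t ≤ b t) ∧ B = {v | ∀ t, x v t ∈ Set.Icc (a t) (b t)}

lemma isCoordinateBox_iff {B : Set E} :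
    IsCoordinateBox x B ↔ ∃ b : ∀ t, NonemptyInterval (α t), B = {v | ∀ t, x v t ∈ b t} :=
  ⟨fun ⟨a, b, hab, hB⟩ => ⟨fun t => ⟨(a t, b t), hab t⟩, hB⟩,
    fun ⟨b, hB⟩ => ⟨fun t => (b t).fst, fun t => (b t).snd, fun t => (b t).fst_le_snd, hB⟩⟩

lemma AxisFlat.hits_iff_inter_preimage_nonempty (hx : Function.Surjective x) {f : AxisFlat α}
    {b : ∀ t, NonemptyInterval (α t)} :
    f.Hits b ↔ ({v | ∀ t, x v t ∈ b t} ∩ f.preimage x).Nonempty := by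
  classical
  constructor
  · intro h
    obtain ⟨v, hv⟩ := hx fun t => if t ∈ f.fixed then f.value t else (b t).fst
    refine ⟨v, fun t => ?_, fun t ht => by simp [hv, ht]⟩
    by_cases ht : t ∈ f.fixed
    · simpa [hv, ht] using h t ht
    · simp [hv, ht, NonemptyInterval.mem_def, (b t).fst_le_snd]
  · rintro ⟨v, hvb, hvf⟩ t ht
    exact hvf t ht ▸ hvb t

theorem stmt_17_general {E κ : Type*} [Fintype κ] {α : κ → Type*}
    [∀ t, ConditionallyCompleteLinearOrder (α t)] {x : E → ∀ t, α t} (hx : Function.Surjective x)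
    {k : ℕ} (hk : k ≤ Fintype.card κ) (p : ℕ) :
    ∃ C : ℕ, 0 < C ∧
      ∀ F : Set (Set E),
        (∀ B ∈ F, IsCoordinateBox x B) →
        (∀ G : Finset (Set E), ↑G ⊆ F → G.card = p →
          ∃ B₁ ∈ G, ∃ B₂ ∈ G, B₁ ≠ B₂ ∧
            ∃ W : Set E, IsCoordinateFlat x k W ∧ (B₁ ∩ W).Nonempty ∧ (B₂ ∩ W).Nonempty) →
        ∃ n : ℕ, n ≤ C ∧
          ∃ W : Fin n → Set E,
            (∀ m, IsCoordinateFlat x k (W m)) ∧ ∀ B ∈ F, ∃ m, (B ∩ W m).Nonempty := by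
  refine ⟨piercingBound p (Fintype.card κ - k) (Fintype.card κ) + 1, Nat.succ_pos _,
    fun F hF hpairs => ?_⟩
  obtain rfl | hne := F.eq_empty_or_nonempty
  · exact ⟨0, Nat.zero_le _, Fin.elim0, fun m => m.elim0, by simp⟩
  choose b hb using fun B : F => isCoordinateBox_iff.1 (hF B B.2)
  have hprop : HasPTwoProperty b univ (Fintype.card κ - k) p Set.univ := by
    intro G _ hG
    obtain ⟨_, hmem₁, _, hmem₂, hB, W, hW, hW₁, hW₂⟩ :=
      hpairs (G.map (.subtype _)) (by simp) (by simpa using hG)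
    obtain ⟨B₁, hB₁, rfl⟩ := mem_map.1 hmem₁
    obtain ⟨B₂, hB₂, rfl⟩ := mem_map.1 hmem₂
    obtain ⟨f, hf, rfl⟩ := (isCoordinateFlat_iff hk).1 hW
    exact ⟨B₁, hB₁, B₂, hB₂, ne_of_apply_ne _ hB, f, hf,
      (f.hits_iff_inter_preimage_nonempty hx).2 (hb B₁ ▸ hW₁),
      (f.hits_iff_inter_preimage_nonempty hx).2 (hb B₂ ▸ hW₂)⟩
  have := hne.to_subtype
  obtain ⟨f, hf, hhit⟩ := exists_fin_transversal Set.univ_nonempty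
    (hprop.piercingNumber_le (by simp))
  refine ⟨_, Nat.le_succ _, fun m => (f m).preimage x,
    fun m => (isCoordinateFlat_iff hk).2 ⟨f m, hf _ ⟨m, rfl⟩, rfl⟩, fun B hB => ?_⟩
  obtain ⟨_, ⟨m, rfl⟩, hm⟩ := hhit ⟨B, hB⟩ (Set.mem_univ _)
  refine ⟨m, ?_⟩
  rw [show B = _ from hb ⟨B, hB⟩]
  exact (AxisFlat.hits_iff_inter_preimage_nonempty hx).1 hm

end Coordinates

/-- **`(p,2)`-theorem for axis-parallel boxes and axis-parallel
`k`-flats.** For all `d ≥ 1`, `0 ≤ k < d` and `p ≥ 2` there is a positive integer `C`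
such that: if `F` is a family of axis-parallel boxes in `ℝ^d` in which among every `p`
distinct members some two can be intersected by a single axis-parallel `k`-flat, then all
boxes of `F` can be hit by at most `C` axis-parallel `k`-flats. -/
theorem stmt_17 (d k p : ℕ) (hd : 1 ≤ d) (hk : k < d) (hp : 2 ≤ p) :
    ∃ C : ℕ, 0 < C ∧
      ∀ F : Set (Set (EuclideanSpace ℝ (Fin d))),
        (∀ B ∈ F, IsBox B) →
        (∀ G : Finset (Set (EuclideanSpace ℝ (Fin d))), ↑G ⊆ F → G.card = p →
          ∃ B₁ ∈ G, ∃ B₂ ∈ G, B₁ ≠ B₂ ∧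
            ∃ W : Set (EuclideanSpace ℝ (Fin d)), IsAxisParallelKFlat k W ∧
              (B₁ ∩ W).Nonempty ∧ (B₂ ∩ W).Nonempty) →
        ∃ n : ℕ, n ≤ C ∧
          ∃ W : Fin n → Set (EuclideanSpace ℝ (Fin d)),
            (∀ m, IsAxisParallelKFlat k (W m)) ∧
            ∀ B ∈ F, ∃ m, (B ∩ W m).Nonempty :=
  stmt_17_general (WithLp.ofLp_surjective 2) (by simpa using hk.le) p
end

section
/- For every integer d ≥ 1 there exists a positive integer N such that every family of N pairwise distinct axis-parallel boxes in ℝ^d contains three pairwise distinct boxes B_1, B_2, B_3 with B_1 ∩ B_3 ⊆ B_2. -/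
/-!
A box is an intersection of one half-space from each of `2d` families, each of them totally ordered
by inclusion. Color an ordered pair of boxes `(B, B')` by the set of families in which the
half-space of `B` is contained in that of `B'`. If `(B₁, B₂)` and `(B₂, B₃)` have the same color,
then in each family the half-space of `B₂` contains that of `B₁` or that of `B₃`, and therefore
`B₁ ∩ B₃ ⊆ B₂`.
-/

/-- If no such triple exists, the map sending `x` to the set of colors of the pairs `(x, y)` with
`x < y` is injective, since the color of `(x, y)` lies in the set of `x` but not in that of `y`. -/
theorem exists_lt_lt_color_eq {κ C : Type*} [LinearOrder κ] [Fintype C] (color : κ → κ → C)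
    {S : Finset κ} (hS : 2 ^ Fintype.card C < S.card) :
    ∃ x ∈ S, ∃ y ∈ S, ∃ z ∈ S, x < y ∧ y < z ∧ color x y = color y z := by
  let colorsAbove (x : κ) : Set C := {c | ∃ y ∈ S, x < y ∧ color x y = c}
  have hcard : (Finset.univ : Finset (Set C)).card < S.card := by
    rwa [Finset.card_univ, Fintype.card_set]
  obtain ⟨x, hx, y, hy, hne, heq⟩ := Finset.exists_ne_map_eq_of_card_lt_of_maps_to hcard
    (f := colorsAbove) fun _ _ ↦ Finset.mem_univ _
  wlog hxy : x < y generalizing x y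
  · exact this y hy x hx hne.symm heq.symm (hne.symm.lt_of_le (not_lt.1 hxy))
  have hmem : color x y ∈ colorsAbove y := heq ▸ ⟨y, hy, hxy, rfl⟩
  obtain ⟨z, hz, hyz, hcolor⟩ := hmem
  exact ⟨x, hx, y, hy, z, hz, hxy, hyz, hcolor.symm⟩

theorem exists_forall_rel_or_rel_of_total {κ J : Type*} [Fintype J] (r : J → κ → κ → Prop)
    (hr : ∀ j x y, r j x y ∨ r j y x) {S : Finset κ} (hS : 2 ^ 2 ^ Fintype.card J < S.card) :
    ∃ x ∈ S, ∃ y ∈ S, ∃ z ∈ S, x ≠ y ∧ x ≠ z ∧ y ≠ z ∧ ∀ j, r j x y ∨ r j z y := by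
  classical
  let _ : LinearOrder κ := linearOrderOfSTO WellOrderingRel
  obtain ⟨x, hx, y, hy, z, hz, hxy, hyz, hcolor⟩ :=
    exists_lt_lt_color_eq (fun x y ↦ {j | r j x y}) (S := S) (by rwa [Fintype.card_set])
  refine ⟨x, hx, y, hy, z, hz, hxy.ne, (hxy.trans hyz).ne, hyz.ne, fun j ↦ ?_⟩
  have hiff : r j x y ↔ r j y z := Set.ext_iff.1 hcolor j
  exact (hr j y z).imp_left hiff.2

theorem exists_forall_inter_subset_of_ordConnected {κ ι : Type*} [Fintype ι] {α : ι → Type*}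
    [∀ i, LinearOrder (α i)] (I : κ → ∀ i, Set (α i)) {S : Finset κ}
    (hI : ∀ k ∈ S, ∀ i, (I k i).OrdConnected) (hS : 2 ^ 2 ^ (2 * Fintype.card ι) < S.card) :
    ∃ x ∈ S, ∃ y ∈ S, ∃ z ∈ S, x ≠ y ∧ x ≠ z ∧ y ≠ z ∧ ∀ i, I x i ∩ I z i ⊆ I y i := by
  let r : ι ⊕ ι → κ → κ → Prop := Sum.elim
    (fun i k l ↦ (upperClosure (I k i) : Set (α i)) ⊆ upperClosure (I l i))
    (fun i k l ↦ (lowerClosure (I k i) : Set (α i)) ⊆ lowerClosure (I l i))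
  have hr : ∀ j k l, r j k l ∨ r j l k := by
    rintro (i | i) k l
    · exact (upperClosure (I k i)).upper.total (upperClosure (I l i)).upper
    · exact (lowerClosure (I k i)).lower.total (lowerClosure (I l i)).lower
  obtain ⟨x, hx, y, hy, z, hz, hxy, hxz, hyz, hrel⟩ :=
    exists_forall_rel_or_rel_of_total r hr (S := S) (by rwa [Fintype.card_sum, ← two_mul])
  refine ⟨x, hx, y, hy, z, hz, hxy, hxz, hyz, fun i t ⟨htx, htz⟩ ↦ ?_⟩
  have hupper : t ∈ upperClosure (I y i) :=
    (hrel (.inl i)).elim (· (subset_upperClosure htx)) (· (subset_upperClosure htz))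
  have hlower : t ∈ lowerClosure (I y i) :=
    (hrel (.inr i)).elim (· (subset_lowerClosure htx)) (· (subset_lowerClosure htz))
  rw [← (hI y hy i).upperClosure_inter_lowerClosure]
  exact ⟨hupper, hlower⟩

/-- The maps `p i` are the coordinates, so that `X` may be a product or a copy of one such as
`EuclideanSpace`. -/
theorem stmt_18_general {X ι : Type*} [Fintype ι] {α : ι → Type*} [∀ i, LinearOrder (α i)]
    (p : ∀ i, X → α i) {S : Finset (Set X)}
    (hS : ∀ B ∈ S, ∃ I : ∀ i, Set (α i),
      (∀ i, (I i).OrdConnected) ∧ B = {x | ∀ i, p i x ∈ I i})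
    (hcard : 2 ^ 2 ^ (2 * Fintype.card ι) < S.card) :
    ∃ B₁ ∈ S, ∃ B₂ ∈ S, ∃ B₃ ∈ S, B₁ ≠ B₂ ∧ B₁ ≠ B₃ ∧ B₂ ≠ B₃ ∧ B₁ ∩ B₃ ⊆ B₂ := by
  choose! I hI hB using hS
  obtain ⟨B₁, h₁, B₂, h₂, B₃, h₃, h₁₂, h₁₃, h₂₃, hsub⟩ :=
    exists_forall_inter_subset_of_ordConnected I hI hcard
  refine ⟨B₁, h₁, B₂, h₂, B₃, h₃, h₁₂, h₁₃, h₂₃, ?_⟩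
  rw [hB B₁ h₁, hB B₂ h₂, hB B₃ h₃]
  exact fun x ⟨hx₁, hx₃⟩ i ↦ hsub i ⟨hx₁ i, hx₃ i⟩

/-- **Erdős–Szekeres-type claim for boxes.** For every `d ≥ 1` there is a
positive integer `N` such that every family of `N` pairwise distinct axis-parallel boxes
in `ℝ^d` contains three pairwise distinct boxes `B₁, B₂, B₃` with `B₁ ∩ B₃ ⊆ B₂`. -/
theorem stmt_18 (d : ℕ) (hd : 1 ≤ d) :
    ∃ N : ℕ, 0 < N ∧
      ∀ S : Finset (Set (EuclideanSpace ℝ (Fin d))),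
        (∀ B ∈ S, IsBox B) → S.card = N →
        ∃ B₁ ∈ S, ∃ B₂ ∈ S, ∃ B₃ ∈ S,
          B₁ ≠ B₂ ∧ B₁ ≠ B₃ ∧ B₂ ≠ B₃ ∧ B₁ ∩ B₃ ⊆ B₂ := by
  refine ⟨2 ^ 2 ^ (2 * d) + 1, Nat.succ_pos _, fun S hS hcard ↦
    stmt_18_general (fun i x ↦ x i) (fun B hB ↦ ?_) (by rw [Fintype.card_fin]; omega)⟩
  obtain ⟨a, b, -, rfl⟩ := hS B hB
  exact ⟨fun i ↦ Set.Icc (a i) (b i), fun _ ↦ Set.ordConnected_Icc, rfl⟩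
end

section
/- Let d ≥ 1, let S be a finite family of n pairwise distinct axis-parallel boxes in ℝ^d, and let α be a real number with 1 - 1/d² < α ≤ 1. If the number of unordered pairs of distinct boxes of S that intersect is at least α·(n choose 2), then there exists a subfamily of S of size at least (1 - d·√(1-α))·n all of whose members have a common point. -/
/-!
For intervals on a line, delete the interval `I` whose right end `b` is smallest: the intervals
missed by `b` are exactly those disjoint from `I`. If `b` misses no more intervals than a best point
for the remaining family, use `b`; otherwise `I` is disjoint from many intervals. By induction some
point misses only `k` intervals, where `1 + 2 + ⋯ + k` is at most the number of disjoint pairs.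

Two boxes whose projections to some axis are disjoint are themselves disjoint, so the best points
of the `d` axes each miss at most `√(2N)` projections, where `N` is the number of disjoint pairs of
boxes. Together they are the coordinates of a point missing at most `d√(2N)` boxes, and
`2N ≤ (1 - α)n²`.
-/

section FractionalHelly

open Finset

open scoped Classical in
/-- The two-element subfamilies of `(F k)_{k ∈ S}` without a common point, as sets of indices, so
that distinct indices may carry equal sets. -/
noncomputable def disjointPairs {κ E : Type*} (F : κ → Set E) (S : Finset κ) :
    Finset (Finset κ) :=
  {e ∈ S.powersetCard 2 | ¬∃ x, ∀ k ∈ e, x ∈ F k}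

open scoped Classical in
/-- The members of the family `(F k)_{k ∈ S}` not containing the point `x`, as a set of indices. -/
noncomputable def missed {κ E : Type*} (F : κ → Set E) (S : Finset κ) (x : E) : Finset κ :=
  {k ∈ S | x ∉ F k}

variable {κ E : Type*}

theorem mem_disjointPairs {F : κ → Set E} {S e : Finset κ} :
    e ∈ disjointPairs F S ↔ e ⊆ S ∧ #e = 2 ∧ ¬∃ x, ∀ k ∈ e, x ∈ F k := by
  simp only [disjointPairs, mem_filter, mem_powersetCard, and_assoc]

theorem mem_missed {F : κ → Set E} {S : Finset κ} {x : E} {k : κ} :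
    k ∈ missed F S x ↔ k ∈ S ∧ x ∉ F k := by
  simp only [missed, mem_filter]

open scoped Classical in
theorem card_missed_insert_le (F : κ → Set E) (i : κ) (S : Finset κ) (x : E) :
    #(missed F (insert i S) x) ≤ #(missed F S x) + 1 := by
  refine (card_le_card fun k hk => ?_).trans (card_insert_le i (missed F S x))
  simp only [mem_insert, mem_missed] at hk ⊢
  tauto

open scoped Classical in
theorem pair_mem_disjointPairs {F : κ → Set E} {S : Finset κ} {i j : κ} (hi : i ∈ S)
    (hj : j ∈ S) (hij : i ≠ j) (hF : Disjoint (F i) (F j)) : {i, j} ∈ disjointPairs F S := by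
  refine mem_disjointPairs.2
    ⟨insert_subset hi (singleton_subset_iff.2 hj), card_pair hij, ?_⟩
  rintro ⟨x, hx⟩
  exact Set.disjoint_left.1 hF (hx i (by simp)) (hx j (by simp))

theorem disjointPairs_mono_right (F : κ → Set E) {s t : Finset κ} (hst : s ⊆ t) :
    disjointPairs F s ⊆ disjointPairs F t :=
  fun _ he => mem_disjointPairs.2 ((mem_disjointPairs.1 he).imp_left (·.trans hst))

theorem disjointPairs_subset_of_mapsTo {E' : Type*} {F : κ → Set E} {G : κ → Set E'}
    {S : Finset κ} (f : E → E') (hf : ∀ k ∈ S, Set.MapsTo f (F k) (G k)) :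
    disjointPairs G S ⊆ disjointPairs F S := by
  intro e he
  obtain ⟨heS, hcard, hG⟩ := mem_disjointPairs.1 he
  exact mem_disjointPairs.2 ⟨heS, hcard, fun ⟨x, hx⟩ =>
    hG ⟨f x, fun k hk => hf k (heS hk) (hx k hk)⟩⟩

open scoped Classical in
theorem card_disjointPairs_add_card_filter_disjoint_le (F : κ → Set E) {s : Finset κ} {i : κ}
    (hi : i ∉ s) :
    #(disjointPairs F s) + #{j ∈ s | Disjoint (F i) (F j)} ≤
      #(disjointPairs F (insert i s)) := by
  have ne_of_mem {j : κ} (hj : j ∈ s) : i ≠ j := fun h => hi (h ▸ hj)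
  have pair_injOn : Set.InjOn (fun j => ({i, j} : Finset κ))
      ({j ∈ s | Disjoint (F i) (F j)} : Finset κ) := by
    intro j hj k _ hjk
    have hj_mem : j ∈ ({i, k} : Finset κ) := (show {i, j} = {i, k} from hjk) ▸ by simp
    simpa [(ne_of_mem (mem_filter.1 hj).1).symm] using hj_mem
  rw [← card_image_of_injOn pair_injOn, ← card_union_of_disjoint]
  · refine card_le_card (union_subset (disjointPairs_mono_right F (subset_insert i s)) ?_)
    refine image_subset_iff.2 fun j hj => ?_
    obtain ⟨hjs, hdisj⟩ := mem_filter.1 hj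
    exact pair_mem_disjointPairs (mem_insert_self i s) (mem_insert_of_mem hjs) (ne_of_mem hjs) hdisj
  · refine disjoint_left.2 fun e he he' => ?_
    obtain ⟨j, -, rfl⟩ := mem_image.1 he'
    exact hi ((mem_disjointPairs.1 he).1 (mem_insert_self i {j}))

theorem ncard_intersecting_pairs_add_card_disjointPairs (F : κ → Set E) (S : Finset κ) :
    {e : Finset κ | e ⊆ S ∧ #e = 2 ∧ ∃ x, ∀ k ∈ e, x ∈ F k}.ncard + #(disjointPairs F S) =
      (#S).choose 2 := by
  classical
  have coe_filter_eq : {e : Finset κ | e ⊆ S ∧ #e = 2 ∧ ∃ x, ∀ k ∈ e, x ∈ F k} =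
      ({e ∈ S.powersetCard 2 | ∃ x, ∀ k ∈ e, x ∈ F k} : Finset (Finset κ)) := by
    ext e
    simp [mem_powersetCard, and_assoc]
  rw [coe_filter_eq, Set.ncard_coe_finset, disjointPairs, card_filter_add_card_filter_not,
    card_powersetCard]

open scoped Classical in
theorem card_missed_right_end_le {X : Type*} [LinearOrder X] (a b : κ → X) {s : Finset κ} {i : κ}
    (hi : a i ≤ b i) (hmin : ∀ k ∈ s, b i ≤ b k) :
    #(missed (fun k => Set.Icc (a k) (b k)) (insert i s) (b i)) ≤
      #{k ∈ s | Disjoint (Set.Icc (a i) (b i)) (Set.Icc (a k) (b k))} := by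
  refine card_le_card fun k hk => ?_
  obtain ⟨hk, hbk⟩ := mem_missed.1 hk
  obtain rfl | hks := mem_insert.1 hk
  · exact absurd (Set.right_mem_Icc.2 hi) hbk
  · have hlt : b i < a k := not_le.1 fun h => hbk ⟨h, hmin k hks⟩
    exact mem_filter.2 ⟨hks, Set.disjoint_left.2 fun y hy hy' => (hy.2.trans_lt hlt).not_ge hy'.1⟩

theorem exists_choose_two_card_missed_Icc_le {X : Type*} [LinearOrder X] [Nonempty X]
    (a b : κ → X) (S : Finset κ) (hab : ∀ k ∈ S, a k ≤ b k) :
    ∃ x, (#(missed (fun k => Set.Icc (a k) (b k)) S x) + 1).choose 2 ≤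
      #(disjointPairs (fun k => Set.Icc (a k) (b k)) S) := by
  classical
  induction S using Finset.induction_on_min_value b with
  | empty => simp [missed]
  | insert i s hi hmin ih =>
    obtain ⟨x, hx⟩ := ih fun k hk => hab k (mem_insert_of_mem hk)
    have hi_le : a i ≤ b i := hab i (mem_insert_self i s)
    set F : κ → Set X := fun k => Set.Icc (a k) (b k)
    obtain hle | hlt :=
      le_or_gt #{k ∈ s | Disjoint (F i) (F k)} #(missed F s x)
    · refine ⟨b i, ?_⟩
      calc (#(missed F (insert i s) (b i)) + 1).choose 2
          ≤ (#(missed F s x) + 1).choose 2 :=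
            Nat.choose_le_choose 2 <| Nat.succ_le_succ <|
              (card_missed_right_end_le a b hi_le hmin).trans hle
        _ ≤ #(disjointPairs F s) := hx
        _ ≤ #(disjointPairs F (insert i s)) :=
            card_le_card (disjointPairs_mono_right F (subset_insert i s))
    · refine ⟨x, ?_⟩
      calc (#(missed F (insert i s) x) + 1).choose 2
          ≤ (#(missed F s x) + 1 + 1).choose 2 :=
            Nat.choose_le_choose 2 (Nat.succ_le_succ (card_missed_insert_le F i s x))
        _ = (#(missed F s x) + 1) + (#(missed F s x) + 1).choose 2 := by
            rw [Nat.choose_succ_succ' _ 1, Nat.choose_one_right]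
        _ ≤ #{k ∈ s | Disjoint (F i) (F k)} + #(disjointPairs F s) :=
            Nat.add_le_add hlt hx
        _ ≤ #(disjointPairs F (insert i s)) := by
            rw [add_comm]
            exact card_disjointPairs_add_card_filter_disjoint_le F hi

theorem exists_card_missed_Icc_le_sqrt {X : Type*} [LinearOrder X] [Nonempty X]
    (a b : κ → X) (S : Finset κ) (hab : ∀ k ∈ S, a k ≤ b k) :
    ∃ x, (#(missed (fun k => Set.Icc (a k) (b k)) S x) : ℝ) ≤
      √(2 * #(disjointPairs (fun k => Set.Icc (a k) (b k)) S)) := by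
  obtain ⟨x, hx⟩ := exists_choose_two_card_missed_Icc_le a b S hab
  refine ⟨x, Real.le_sqrt_of_sq_le ?_⟩
  have hchoose := (Nat.cast_le (α := ℝ)).2 hx
  rw [Nat.cast_choose_two] at hchoose
  push_cast at hchoose
  linarith [(#(missed (fun k => Set.Icc (a k) (b k)) S x)).cast_nonneg (α := ℝ)]

/-- Axis-parallel boxes in a space `E` with coordinates in ordered sets, where `coord x i` is
the `i`-th coordinate of the point `x`: products of nonempty closed intervals. -/
def IsCoordBox {ι : Type*} {X : ι → Type*} [∀ i, Preorder (X i)] (coord : E → ∀ i, X i)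
    (B : Set E) : Prop :=
  ∃ a b : ∀ i, X i, (∀ i, a i ≤ b i) ∧ B = {x | ∀ i, coord x i ∈ Set.Icc (a i) (b i)}

theorem exists_card_missed_le_of_isCoordBox {ι : Type*} [Fintype ι] {X : ι → Type*}
    [∀ i, LinearOrder (X i)] [Nonempty E] {coord : E → ∀ i, X i}
    (hcoord : Function.Surjective coord) (S : Finset κ) {B : κ → Set E}
    (hB : ∀ k ∈ S, IsCoordBox coord (B k)) :
    ∃ x, (#(missed B S x) : ℝ) ≤ Fintype.card ι * √(2 * #(disjointPairs B S)) := by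
  have : ∀ i, Nonempty (X i) := fun i => ‹Nonempty E›.map (coord · i)
  choose! a b hab hB using hB
  choose y hy using fun i => exists_card_missed_Icc_le_sqrt (a · i) (b · i) S (hab · · i)
  obtain ⟨x, rfl⟩ := hcoord y
  classical
  have missed_subset : missed B S x ⊆
      univ.biUnion fun i => missed (fun k => Set.Icc (a k i) (b k i)) S (coord x i) := by
    intro k hk
    obtain ⟨hkS, hxk⟩ := mem_missed.1 hk
    rw [hB k hkS, Set.mem_ofPred_eq, not_forall] at hxk
    obtain ⟨i, hi⟩ := hxk
    exact mem_biUnion.2 ⟨i, mem_univ i, mem_missed.2 ⟨hkS, hi⟩⟩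
  have projection_pairs_subset (i : ι) :
      disjointPairs (fun k => Set.Icc (a k i) (b k i)) S ⊆ disjointPairs B S :=
    disjointPairs_subset_of_mapsTo (coord · i) fun k hk z hz => by
      rw [hB k hk] at hz
      exact hz i
  refine ⟨x, ?_⟩
  calc (#(missed B S x) : ℝ)
      ≤ ∑ i, (#(missed (fun k => Set.Icc (a k i) (b k i)) S (coord x i)) : ℝ) :=
        mod_cast (card_le_card missed_subset).trans card_biUnion_le
    _ ≤ ∑ _i : ι, √(2 * #(disjointPairs B S)) := by
        gcongr with i
        refine (hy i).trans ?_
        gcongr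
        exact projection_pairs_subset i
    _ = Fintype.card ι * √(2 * #(disjointPairs B S)) := by simp

theorem two_mul_card_disjointPairs_le (F : κ → Set E) (S : Finset κ) {α : ℝ} (hα : α ≤ 1)
    (hpairs : α * ((#S).choose 2 : ℝ) ≤
      ({e : Finset κ | e ⊆ S ∧ #e = 2 ∧ ∃ x, ∀ k ∈ e, x ∈ F k}.ncard : ℝ)) :
    2 * (#(disjointPairs F S) : ℝ) ≤ (1 - α) * (#S : ℝ) ^ 2 := by
  have hsum : ({e : Finset κ | e ⊆ S ∧ #e = 2 ∧ ∃ x, ∀ k ∈ e, x ∈ F k}.ncard : ℝ) +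
      #(disjointPairs F S) = (#S).choose 2 :=
    mod_cast ncard_intersecting_pairs_add_card_disjointPairs F S
  have hchoose : 2 * ((#S).choose 2 : ℝ) ≤ (#S : ℝ) ^ 2 := by
    rw [Nat.cast_choose_two]
    nlinarith [(#S).cast_nonneg (α := ℝ)]
  calc 2 * (#(disjointPairs F S) : ℝ)
      ≤ (1 - α) * (2 * ((#S).choose 2 : ℝ)) := by linarith
    _ ≤ (1 - α) * (#S : ℝ) ^ 2 := mul_le_mul_of_nonneg_left hchoose (sub_nonneg.2 hα)

theorem stmt_19_general {ι : Type*} [Fintype ι] {X : ι → Type*} [∀ i, LinearOrder (X i)]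
    [Nonempty E] {coord : E → ∀ i, X i} (hcoord : Function.Surjective coord) (S : Finset κ)
    {B : κ → Set E} (hB : ∀ k ∈ S, IsCoordBox coord (B k)) {α : ℝ} (hα : α ≤ 1)
    (hpairs : α * ((#S).choose 2 : ℝ) ≤
      ({e : Finset κ | e ⊆ S ∧ #e = 2 ∧ ∃ x, ∀ k ∈ e, x ∈ B k}.ncard : ℝ)) :
    ∃ T ⊆ S, (1 - Fintype.card ι * √(1 - α)) * (#S : ℝ) ≤ #T ∧ ∃ x, ∀ k ∈ T, x ∈ B k := by
  classical
  obtain ⟨x, hx⟩ := exists_card_missed_le_of_isCoordBox hcoord S hB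
  refine ⟨{k ∈ S | x ∈ B k}, filter_subset _ _, ?_, x, fun k hk => (mem_filter.1 hk).2⟩
  have hsqrt : √(2 * #(disjointPairs B S)) ≤ √(1 - α) * #S := by
    rw [← Real.sqrt_sq (#S).cast_nonneg, ← Real.sqrt_mul (sub_nonneg.2 hα)]
    exact Real.sqrt_le_sqrt (two_mul_card_disjointPairs_le B S hα hpairs)
  have hmissed : (#(missed B S x) : ℝ) ≤ Fintype.card ι * (√(1 - α) * #S) :=
    hx.trans (mul_le_mul_of_nonneg_left hsqrt (Nat.cast_nonneg _))
  have hsplit : (#{k ∈ S | x ∈ B k} : ℝ) + #(missed B S x) = #S :=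
    mod_cast card_filter_add_card_filter_not _
  linarith

end FractionalHelly

/-- **fractional Helly theorem of Bárány et al. for axis-parallel boxes.**
Let `S` be a finite family of `n` pairwise distinct axis-parallel boxes in `ℝ^d` and
`1 - 1/d² < α ≤ 1`. If at least `α·(n choose 2)` of the unordered pairs of distinct boxes
of `S` intersect, then some subfamily of `S` of size at least `(1 - d·√(1-α))·n` has a
common point. -/
theorem stmt_19 (d : ℕ) (hd : 1 ≤ d)
    (S : Finset (Set (EuclideanSpace ℝ (Fin d))))
    (hbox : ∀ B ∈ S, IsBox B)
    (n : ℕ) (hn : n = S.card)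
    (α : ℝ) (hα₁ : 1 - 1 / (d : ℝ) ^ 2 < α) (hα₂ : α ≤ 1)
    (hpairs : α * (n.choose 2 : ℝ) ≤
      (({e : Finset (Set (EuclideanSpace ℝ (Fin d))) |
          e ⊆ S ∧ e.card = 2 ∧ ∃ x : EuclideanSpace ℝ (Fin d), ∀ B ∈ e, x ∈ B}).ncard : ℝ)) :
    ∃ T : Finset (Set (EuclideanSpace ℝ (Fin d))), T ⊆ S ∧
      (1 - (d : ℝ) * Real.sqrt (1 - α)) * (n : ℝ) ≤ (T.card : ℝ) ∧
      ∃ x : EuclideanSpace ℝ (Fin d), ∀ B ∈ T, x ∈ B := by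
  subst hn
  simpa only [Fintype.card_fin, id] using
    stmt_19_general (B := id) (WithLp.ofLp_surjective 2) S hbox hα₂ hpairs
end
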